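/- arXiv:2110.03077 — 3 statements merged into one kernel-verified Lean document; each statement's English description precedes it below -/
import Mathlib

section
/- For every integer n ≥ 4, the error term ε(W(B_n)) = dim_ℂ R_W − (2n+1)^n of the diagonal coinvariant ring of W(B_n) satisfies 4·ε(W(B_n)) ≥ n(n−6); in particular ε(W(B_n)) grows at least quadratically, at least like n²/4. -/
open MvPolynomial

/-- The action of the signed permutation `(ε, σ) ∈ W(Bₙ)` on the polynomial ring
`ℂ[x₁,…,xₙ,y₁,…,yₙ]`, sending `xᵢ ↦ εᵢ x_{σ(i)}` and `yᵢ ↦ εᵢ y_{σ(i)}`. -/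
noncomputable def bAct (n : ℕ) (ε : Fin n → ℤˣ) (σ : Equiv.Perm (Fin n)) :
    MvPolynomial (Fin n ⊕ Fin n) ℂ →ₐ[ℂ] MvPolynomial (Fin n ⊕ Fin n) ℂ :=
  aeval (Sum.elim
    (fun i => (((ε i : ℤ) : ℂ)) • X (Sum.inl (σ i)))
    (fun i => (((ε i : ℤ) : ℂ)) • X (Sum.inr (σ i))))

/-- The ideal `I_W` generated by the `W(Bₙ)`-invariant polynomials of positive degree
(equivalently, by the invariant polynomials with zero constant term). -/
noncomputable def diagIdeal (n : ℕ) : Ideal (MvPolynomial (Fin n ⊕ Fin n) ℂ) :=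
  Ideal.span {f | (∀ ε σ, bAct n ε σ f = f) ∧ constantCoeff f = 0}

namespace DiagB

set_option linter.unusedSimpArgs false
set_option linter.flexible false

/-- The polynomial ring in two sets of `n` variables. -/
abbrev Rn (n : ℕ) := MvPolynomial (Fin n ⊕ Fin n) ℂ

/-- Exponents: one pair of exponents for each site. -/
abbrev Ex (n : ℕ) := Fin n → ℕ × ℕ

/-- Total degree at a site. -/
abbrev sd (m : ℕ × ℕ) : ℕ := m.1 + m.2

/-- Exponents as finitely supported functions. -/
noncomputable def toF (n : ℕ) : Ex n ≃ ((Fin n ⊕ Fin n) →₀ ℕ) where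
  toFun e := Finsupp.equivFunOnFinite.symm (Sum.elim (fun i => (e i).1) (fun i => (e i).2))
  invFun d := fun i => (d (Sum.inl i), d (Sum.inr i))
  left_inv e := by ext i <;> simp
  right_inv d := by ext i; rcases i with i | i <;> simp

lemma toF_add {n : ℕ} (e e' : Ex n) : toF n (e + e') = toF n e + toF n e' := by
  ext i; rcases i with i | i <;> simp [toF]

lemma toF_zero {n : ℕ} : toF n (0 : Ex n) = 0 := by
  ext i; rcases i with i | i <;> simp [toF]

/-- The monomial with given exponents. -/
noncomputable def mon {n : ℕ} (e : Ex n) : Rn n := monomial (toF n e) 1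

/-- The monomial basis. -/
noncomputable def bas (n : ℕ) : Module.Basis (Ex n) ℂ (Rn n) :=
  (basisMonomials (Fin n ⊕ Fin n) ℂ).reindex (toF n).symm

lemma bas_apply {n : ℕ} (e : Ex n) : bas n e = mon e := by
  simp [bas, mon]

lemma mon_add {n : ℕ} (e e' : Ex n) : mon (e + e') = mon e * mon e' := by
  simp [mon, toF_add, monomial_mul]

lemma mon_zero {n : ℕ} : mon (0 : Ex n) = 1 := by
  simp [mon, toF_zero]

/-- Linear maps agreeing on monomials agree. -/
lemma ext_mon {n : ℕ} {V : Type*} [AddCommMonoid V] [Module ℂ V] {f g : Rn n →ₗ[ℂ] V}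
    (h : ∀ e, f (mon e) = g (mon e)) : f = g :=
  (bas n).ext (fun e => by rw [bas_apply]; exact h e)

lemma span_mon {n : ℕ} : Submodule.span ℂ (Set.range (mon : Ex n → Rn n)) = ⊤ := by
  rw [← (bas n).span_eq]
  congr 1
  ext; simp [bas_apply]

lemma X_inl {n : ℕ} (i : Fin n) : (X (Sum.inl i) : Rn n) = mon (Pi.single i (1, 0)) := by
  refine congrArg (fun d => monomial d (1 : ℂ)) ?_
  ext j
  rcases j with j | j
  · by_cases h : j = i
    · subst h; simp [toF]
    · have : i ≠ j := fun h' => h h'.symm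
      simp [toF, Finsupp.single_apply, Pi.single_apply, h, this]
  · by_cases h : j = i
    · subst h; simp [toF]
    · simp [toF, Finsupp.single_apply, Pi.single_apply, h]

lemma X_inr {n : ℕ} (i : Fin n) : (X (Sum.inr i) : Rn n) = mon (Pi.single i (0, 1)) := by
  refine congrArg (fun d => monomial d (1 : ℂ)) ?_
  ext j
  rcases j with j | j
  · by_cases h : j = i
    · subst h; simp [toF]
    · simp [toF, Finsupp.single_apply, Pi.single_apply, h]
  · by_cases h : j = i
    · subst h; simp [toF]
    · have : i ≠ j := fun h' => h h'.symm
      simp [toF, Finsupp.single_apply, Pi.single_apply, h, this]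

lemma mon_eq_prod {n : ℕ} (e : Ex n) :
    mon e = ∏ i, ((X (Sum.inl i) : Rn n) ^ (e i).1 * (X (Sum.inr i) : Rn n) ^ (e i).2) := by
  unfold mon
  rw [monomial_eq]
  rw [Finsupp.prod_fintype _ _ (by simp)]
  simp [toF, Finset.prod_mul_distrib]

lemma bAct_mon {n : ℕ} (ε : Fin n → ℤˣ) (σ : Equiv.Perm (Fin n)) (e : Ex n) :
    bAct n ε σ (mon e) = (∏ i, (((ε i : ℤ) : ℂ)) ^ sd (e i)) • mon (fun i => e (σ.symm i)) := by
  rw [mon_eq_prod, mon_eq_prod, map_prod]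
  rw [← Equiv.prod_comp σ (fun i => (X (Sum.inl i) : Rn n) ^ (e (σ.symm i)).1 *
    (X (Sum.inr i) : Rn n) ^ (e (σ.symm i)).2)]
  rw [← Finset.prod_smul]
  refine Finset.prod_congr rfl fun i _ => ?_
  simp only [bAct, map_mul, map_pow, aeval_X, Sum.elim_inl, Sum.elim_inr, Equiv.symm_apply_apply,
    smul_pow, sd, pow_add]
  rw [smul_mul_smul_comm]

/-- Polarized power sums. -/
noncomputable def psm (n : ℕ) (m : ℕ × ℕ) : Rn n := ∑ k, mon (Pi.single k m)

/-- Ideal generated by even polarized power sums. -/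
noncomputable def Ipow (n : ℕ) : Ideal (Rn n) :=
  Ideal.span {f | ∃ m : ℕ × ℕ, m ≠ 0 ∧ Even (sd m) ∧ f = psm n m}

/-- Sum over all permutations of a monomial. -/
noncomputable def Sy {n : ℕ} (e : Ex n) : Rn n := ∑ σ : Equiv.Perm (Fin n), mon (fun i => e (σ.symm i))

lemma Sy_perm {n : ℕ} (e : Ex n) (τ : Equiv.Perm (Fin n)) : Sy (fun i => e (τ i)) = Sy e := by
  unfold Sy
  refine Fintype.sum_equiv (Equiv.mulRight τ⁻¹) _ _ fun σ => ?_
  congr 1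

lemma psm_mul_mon {n : ℕ} (m : ℕ × ℕ) (e : Ex n) :
    psm n m * mon e = ∑ k, mon (e + Pi.single k m) := by
  unfold psm
  rw [Finset.sum_mul]
  refine Finset.sum_congr rfl fun k _ => ?_
  rw [mon_add, mul_comm]

lemma psm_mul_Sy {n : ℕ} (m : ℕ × ℕ) (e : Ex n) :
    psm n m * Sy e = ∑ j, Sy (e + Pi.single j m) := by
  unfold Sy
  rw [Finset.mul_sum, Finset.sum_comm]
  refine Finset.sum_congr rfl fun σ _ => ?_
  rw [psm_mul_mon]
  refine Fintype.sum_equiv σ.symm _ _ fun k => ?_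
  congr 1
  ext i : 1
  simp [Pi.single_apply]

lemma Sy_mem {n : ℕ} (N : ℕ) : ∀ e : Ex n, (∀ i, Even (sd (e i))) → e ≠ 0 →
    (Finset.univ.filter (fun i => e i ≠ 0)).card = N → Sy e ∈ Ipow n := by
  induction N using Nat.strong_induction_on with
  | _ N ih =>
  intro e hev hne hN
  obtain ⟨i1, hi1⟩ : ∃ i, e i ≠ 0 := by
    by_contra h; push Not at h; exact hne (funext h)
  set m := e i1 with hm
  set e' := Function.update e i1 0 with he'
  have hee : ∀ i, i ≠ i1 → e' i = e i := fun i hi => by simp [he', hi]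
  have he1 : e' i1 = 0 := by simp [he']
  have hmem : psm n m * Sy e' ∈ Ipow n :=
    Ideal.mul_mem_right _ _ (Ideal.subset_span ⟨m, hi1, hev i1, rfl⟩)
  rw [psm_mul_Sy] at hmem
  have hz : ∀ j, e' j = 0 → Sy (e' + Pi.single j m) = Sy e := by
    intro j hj
    rw [← Sy_perm e (Equiv.swap i1 j)]
    congr 1
    ext i : 1
    by_cases h1 : i = i1
    · subst h1
      by_cases h2 : j = i
      · subst h2; simp [he1, hm]
      · have : e j = 0 := by rw [← hee j h2, hj]
        have h3 : i ≠ j := fun h => h2 h.symm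
        simp [he1, this, Pi.single_apply, h3]
    · by_cases h2 : i = j
      · subst h2; simp [hj, hm]
      · simp [Equiv.swap_apply_of_ne_of_ne h1 h2, hee i h1, Pi.single_apply, h2]
  have hnz : ∀ j, e' j ≠ 0 → Sy (e' + Pi.single j m) ∈ Ipow n := by
    intro j hj
    have hji : j ≠ i1 := fun h => hj (h ▸ he1)
    have hlt : (Finset.univ.filter (fun i => (e' + Pi.single j m : Ex n) i ≠ 0)).card < N := by
      rw [← hN]
      apply Finset.card_lt_card
      rw [Finset.ssubset_iff_of_subset]
      · refine ⟨i1, by simp [hi1, ← hm], ?_⟩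
        simp [he1, Pi.single_apply, hji.symm]
      · intro i hi
        simp only [Finset.mem_filter, Finset.mem_univ, true_and] at hi ⊢
        by_cases h1 : i = i1
        · subst h1; exact hi1
        · by_cases h2 : i = j
          · subst h2; rw [← hee i h1]; exact hj
          · simpa [Pi.single_apply, h2, hee i h1] using hi
    have hE : ∀ i, Even (sd ((e' + Pi.single j m : Ex n) i)) := by
      intro i
      by_cases h1 : i = i1
      · subst h1; simp [he1, Pi.single_apply, hji.symm, sd]
      · by_cases h2 : i = j
        · subst h2
          have a := hev i
          have b := hev i1
          simp only [Pi.add_apply, hee i h1, Pi.single_eq_same, sd, Prod.fst_add, Prod.snd_add] at *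
          have : (e i).1 + m.1 + ((e i).2 + m.2) = ((e i).1 + (e i).2) + (m.1 + m.2) := by ring
          rw [this]; exact a.add b
        · simpa [Pi.single_apply, h2, hee i h1] using hev i
    have hO : e' + Pi.single j m ≠ 0 := by
      intro h
      have := congrFun h j
      simp at this
      exact hj this.1
    exact ih _ hlt _ hE hO rfl
  rw [← Finset.sum_filter_add_sum_filter_not _ (fun j => e' j = 0)] at hmem
  have h2 : ∑ j ∈ Finset.univ.filter (fun j => ¬ e' j = 0), Sy (e' + Pi.single j m) ∈ Ipow n :=
    Ideal.sum_mem _ fun j hj => hnz j (by simpa using hj)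
  have h3 := (Ideal.add_mem_iff_left _ h2).1 hmem
  rw [Finset.sum_congr rfl (fun j hj => hz j (by simpa using hj)), Finset.sum_const] at h3
  set c := (Finset.univ.filter (fun j => e' j = 0)).card with hc
  have hcpos : c ≠ 0 := by
    have : i1 ∈ Finset.univ.filter (fun j => e' j = 0) := by simp [he1]
    exact Finset.card_ne_zero_of_mem this
  have h4 : Sy e = C ((c : ℂ)⁻¹) * (c • Sy e) := by
    rw [← Nat.cast_smul_eq_nsmul ℂ, smul_eq_C_mul, ← mul_assoc, ← C_mul,
      inv_mul_cancel₀ (by exact_mod_cast hcpos)]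
    simp
  rw [h4]
  exact Ideal.mul_mem_left _ _ h3

lemma repr_mon {n : ℕ} (e : Ex n) : (bas n).repr (mon e) = Finsupp.single e 1 := by
  rw [← bas_apply, Module.Basis.repr_self]

lemma repr_bAct {n : ℕ} (ε : Fin n → ℤˣ) (f : Rn n) (e : Ex n) :
    (bas n).repr (bAct n ε 1 f) e = (∏ i, (((ε i : ℤ) : ℂ)) ^ sd (e i)) * (bas n).repr f e := by
  have : (Finsupp.lapply e ∘ₗ (bas n).repr.toLinearMap ∘ₗ (bAct n ε 1).toLinearMap) =
      (∏ i, (((ε i : ℤ) : ℂ)) ^ sd (e i)) • (Finsupp.lapply e ∘ₗ (bas n).repr.toLinearMap) := by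
    apply ext_mon
    intro e'
    simp only [LinearMap.comp_apply, AlgHom.toLinearMap_apply, bAct_mon, LinearEquiv.coe_coe,
      map_smul, repr_mon, LinearMap.smul_apply, Finsupp.lapply_apply]
    have h1 : (fun i => e' ((1 : Equiv.Perm (Fin n)).symm i)) = e' := rfl
    rw [h1]
    by_cases h : e' = e
    · subst h; simp
    · simp [h]
  exact LinearMap.congr_fun this f

lemma repr_odd {n : ℕ} (f : Rn n) (hf : ∀ ε, bAct n ε 1 f = f) (e : Ex n) (i : Fin n)
    (hi : ¬ Even (sd (e i))) : (bas n).repr f e = 0 := by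
  have h := repr_bAct (Function.update 1 i (-1)) f e
  rw [hf] at h
  rw [Finset.prod_eq_single i] at h
  · rw [Nat.not_even_iff_odd] at hi
    simp only [Function.update_self, Units.val_neg, Units.val_one, Int.cast_neg, Int.cast_one,
      hi.neg_one_pow] at h
    linear_combination h / 2
  · intro j _ hj; simp [hj]
  · simp

lemma repr_zero {n : ℕ} (f : Rn n) : (bas n).repr f 0 = constantCoeff f := by
  have : (Finsupp.lapply 0 ∘ₗ (bas n).repr.toLinearMap) = (lcoeff ℂ (0 : Fin n ⊕ Fin n →₀ ℕ)) := by
    apply ext_mon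
    intro e
    simp only [LinearMap.comp_apply, LinearEquiv.coe_coe, repr_mon, Finsupp.lapply_apply,
      lcoeff_apply]
    rw [mon, coeff_monomial, Finsupp.single_apply, ← toF_zero]
    simp
  exact LinearMap.congr_fun this f

lemma diagIdeal_le {n : ℕ} : diagIdeal n ≤ Ipow n := by
  rw [diagIdeal, Ideal.span_le]
  rintro f ⟨hf, h0⟩
  have key : (Fintype.card (Equiv.Perm (Fin n)) : ℂ) • f =
      ∑ e ∈ ((bas n).repr f).support, (bas n).repr f e • Sy e := by
    have h1 : (Fintype.card (Equiv.Perm (Fin n)) : ℂ) • f =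
        ∑ σ : Equiv.Perm (Fin n), bAct n 1 σ f := by
      simp [hf, Nat.cast_smul_eq_nsmul]
    have h2 : ∀ σ : Equiv.Perm (Fin n), bAct n 1 σ f =
        ∑ e ∈ ((bas n).repr f).support, (bas n).repr f e • mon (fun i => e (σ.symm i)) := by
      intro σ
      conv_lhs => rw [← (bas n).linearCombination_repr f, Finsupp.linearCombination_apply,
        Finsupp.sum, map_sum]
      refine Finset.sum_congr rfl fun e _ => ?_
      rw [map_smul, bas_apply, bAct_mon]
      simp
    rw [h1, Finset.sum_congr rfl (fun σ _ => h2 σ), Finset.sum_comm]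
    simp [Sy, Finset.smul_sum]
  have hmem : (Fintype.card (Equiv.Perm (Fin n)) : ℂ) • f ∈ Ipow n := by
    rw [key]
    refine Ideal.sum_mem _ fun e he => ?_
    rw [smul_eq_C_mul]
    refine Ideal.mul_mem_left _ _ (Sy_mem _ e ?_ ?_ rfl)
    · intro i
      by_contra h
      exact (Finsupp.mem_support_iff.1 he) (repr_odd f (fun ε => hf ε 1) e i h)
    · rintro rfl
      exact (Finsupp.mem_support_iff.1 he) (by rw [repr_zero, h0])
  have hc : (Fintype.card (Equiv.Perm (Fin n)) : ℂ) ≠ 0 := by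
    exact_mod_cast Fintype.card_ne_zero
  have : f = C ((Fintype.card (Equiv.Perm (Fin n)) : ℂ)⁻¹) *
      ((Fintype.card (Equiv.Perm (Fin n)) : ℂ) • f) := by
    rw [← smul_eq_C_mul, smul_smul, inv_mul_cancel₀ hc, one_smul]
  rw [this]
  exact Ideal.mul_mem_left _ _ hmem

end DiagB

namespace DiagB
set_option linter.unusedSimpArgs false
set_option linter.flexible false

/-- Weight of the linear sites. -/
noncomputable def lam {n : ℕ} (B : Finset (Fin n)) (e : Ex n) : ℂ :=
  if ∀ i ∈ B, sd (e i) = 1 then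
    ((B.filter (fun i => e i = (1, 0))).card.factorial : ℂ) *
      ((B.filter (fun i => e i = (0, 1))).card.factorial : ℂ) else 0

/-- Signed weight of a cubic site. -/
noncomputable def mu (m : ℕ × ℕ) : ℂ := if sd m = 3 then (-1) ^ m.2 else 0

/-- The contribution of two cubic sites. -/
noncomputable def tt {n : ℕ} (A : Finset (Fin n)) (e : Ex n) (p q : Fin n) : ℂ :=
  (if e p = (3, 0) then 1 else 0) * mu (e q) * lam ((A.erase p).erase q) e

/-- The functional on monomials in the sites of `A`. -/
noncomputable def phi {n : ℕ} (A : Finset (Fin n)) (w : ℕ) (e : Ex n) : ℂ :=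
  if ∑ i ∈ A, (e i).2 = w then ∑ p ∈ A, ∑ q ∈ A.erase p, tt A e p q else 0

lemma lam_zero {n : ℕ} {B : Finset (Fin n)} {e : Ex n} {i : Fin n} (hi : i ∈ B)
    (h : sd (e i) ≠ 1) : lam B e = 0 := by
  unfold lam
  rw [if_neg]
  intro h'
  exact h (h' i hi)

lemma lam_congr {n : ℕ} {B : Finset (Fin n)} {e e' : Ex n} (h : ∀ i ∈ B, e i = e' i) :
    lam B e = lam B e' := by
  unfold lam
  have h1 : (∀ i ∈ B, sd (e i) = 1) ↔ (∀ i ∈ B, sd (e' i) = 1) := by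
    refine forall₂_congr fun i hi => ?_
    rw [h i hi]
  have h2 : B.filter (fun i => e i = (1, 0)) = B.filter (fun i => e' i = (1, 0)) :=
    Finset.filter_congr fun i hi => by rw [h i hi]
  have h3 : B.filter (fun i => e i = (0, 1)) = B.filter (fun i => e' i = (0, 1)) :=
    Finset.filter_congr fun i hi => by rw [h i hi]
  rw [h2, h3]
  simp only [h1]

lemma phi_congr {n : ℕ} {A : Finset (Fin n)} {w : ℕ} {e e' : Ex n} (h : ∀ i ∈ A, e i = e' i) :
    phi A w e = phi A w e' := by
  unfold phi
  rw [Finset.sum_congr rfl (fun i hi => by rw [h i hi])]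
  congr 1
  refine Finset.sum_congr rfl fun p hp => Finset.sum_congr rfl fun q hq => ?_
  unfold tt
  rw [h p hp, h q (Finset.mem_of_mem_erase hq), lam_congr]
  intro i hi
  exact h i (Finset.mem_of_mem_erase (Finset.mem_of_mem_erase hi))

lemma tt_zero {n : ℕ} {A : Finset (Fin n)} {e : Ex n} {k p q : Fin n} (hk : k ∈ A)
    (h : 2 ≤ sd (e k)) (hp : k ≠ p) (hq : k ≠ q) : tt A e p q = 0 := by
  unfold tt
  rw [lam_zero (i := k)]
  · simp
  · simp [hk, hp, hq]
  · omega

lemma phi_big {n : ℕ} {A : Finset (Fin n)} {w : ℕ} {e : Ex n} {k : Fin n} (hk : k ∈ A)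
    (h : 4 ≤ sd (e k)) : phi A w e = 0 := by
  unfold phi
  split_ifs
  · refine Finset.sum_eq_zero fun p _ => Finset.sum_eq_zero fun q _ => ?_
    by_cases hp : k = p
    · subst hp
      unfold tt
      rw [if_neg]
      · simp
      · intro h'; rw [h'] at h; simp [sd] at h
    · by_cases hq : k = q
      · subst hq
        unfold tt mu
        rw [if_neg (show ¬ sd (e k) = 3 by omega)]
        simp
      · exact tt_zero hk (by omega) hp hq
  · rfl

lemma phi_two {n : ℕ} {A : Finset (Fin n)} {w : ℕ} {e : Ex n} {k l : Fin n} (hk : k ∈ A)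
    (hl : l ∈ A) (hkl : k ≠ l) (h : 2 ≤ sd (e k)) (h' : 2 ≤ sd (e l)) :
    phi A w e = if ∑ i ∈ A, (e i).2 = w then tt A e k l + tt A e l k else 0 := by
  unfold phi
  congr 1
  rw [Finset.sum_eq_add_of_mem k l hk hl hkl]
  · congr 1
    · refine Finset.sum_eq_single_of_mem l (by simp [hl, hkl.symm]) fun q hq hne => ?_
      exact tt_zero hl h' hkl.symm hne.symm
    · refine Finset.sum_eq_single_of_mem k (by simp [hk, hkl]) fun q hq hne => ?_
      exact tt_zero hk h hkl hne.symm
  · rintro p hp ⟨h1, h2⟩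
    refine Finset.sum_eq_zero fun q hq => ?_
    by_cases hq' : k = q
    · subst hq'; exact tt_zero hl h' h2.symm hkl.symm
    · exact tt_zero hk h h1.symm hq'

lemma lin_cases {m : ℕ × ℕ} (h : sd m = 1) : m = (1, 0) ∨ m = (0, 1) := by
  obtain ⟨a, b⟩ := m
  simp [sd] at h
  simp
  omega

/-- Number of `x` sites. -/
def Xc {n : ℕ} (B : Finset (Fin n)) (e : Ex n) : ℕ := (B.filter (fun i => e i = (1, 0))).card

/-- Number of `y` sites. -/
def Yc {n : ℕ} (B : Finset (Fin n)) (e : Ex n) : ℕ := (B.filter (fun i => e i = (0, 1))).card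

lemma lam_lin {n : ℕ} {B : Finset (Fin n)} {e : Ex n} (h : ∀ i ∈ B, sd (e i) = 1) :
    lam B e = ((Xc B e).factorial : ℂ) * ((Yc B e).factorial : ℂ) := by
  unfold lam; rw [if_pos h]; rfl

lemma lam_erase_x {n : ℕ} {B : Finset (Fin n)} {e : Ex n} (h : ∀ i ∈ B, sd (e i) = 1)
    {l : Fin n} (hl : l ∈ B) (hx : e l = (1, 0)) :
    lam (B.erase l) e = ((Xc B e - 1).factorial : ℂ) * ((Yc B e).factorial : ℂ) := by
  rw [lam_lin (fun i hi => h i (Finset.mem_of_mem_erase hi))]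
  have h1 : Xc (B.erase l) e = Xc B e - 1 := by
    unfold Xc
    rw [Finset.filter_erase, Finset.card_erase_of_mem (by simp [hl, hx])]
  have h2 : Yc (B.erase l) e = Yc B e := by
    unfold Yc
    rw [Finset.filter_erase, Finset.erase_eq_of_notMem (by simp [hx])]
  rw [h1, h2]

lemma lam_erase_y {n : ℕ} {B : Finset (Fin n)} {e : Ex n} (h : ∀ i ∈ B, sd (e i) = 1)
    {l : Fin n} (hl : l ∈ B) (hx : e l = (0, 1)) :
    lam (B.erase l) e = ((Xc B e).factorial : ℂ) * ((Yc B e - 1).factorial : ℂ) := by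
  rw [lam_lin (fun i hi => h i (Finset.mem_of_mem_erase hi))]
  have h1 : Yc (B.erase l) e = Yc B e - 1 := by
    unfold Yc
    rw [Finset.filter_erase, Finset.card_erase_of_mem (by simp [hl, hx])]
  have h2 : Xc (B.erase l) e = Xc B e := by
    unfold Xc
    rw [Finset.filter_erase, Finset.erase_eq_of_notMem (by simp [hx])]
  rw [h1, h2]

lemma fact_pred (a : ℕ) (h : 1 ≤ a) : (a : ℂ) * ((a - 1).factorial : ℂ) = (a.factorial : ℂ) := by
  exact_mod_cast Nat.mul_factorial_pred (by omega)

lemma sum_x {n : ℕ} {B : Finset (Fin n)} {e : Ex n} (h : ∀ i ∈ B, sd (e i) = 1)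
    (hX : 1 ≤ Xc B e) :
    ∑ l ∈ B, (if e l = (1, 0) then lam (B.erase l) e else 0) =
      ((Xc B e).factorial : ℂ) * ((Yc B e).factorial : ℂ) := by
  rw [← Finset.sum_filter]
  rw [Finset.sum_congr rfl (fun l hl => lam_erase_x h (Finset.mem_filter.1 hl).1
    (Finset.mem_filter.1 hl).2), Finset.sum_const, ← fact_pred _ hX, nsmul_eq_mul]
  simp only [Xc]; ring

lemma sum_y {n : ℕ} {B : Finset (Fin n)} {e : Ex n} (h : ∀ i ∈ B, sd (e i) = 1)
    (hY : 1 ≤ Yc B e) :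
    ∑ l ∈ B, (if e l = (0, 1) then lam (B.erase l) e else 0) =
      ((Xc B e).factorial : ℂ) * ((Yc B e).factorial : ℂ) := by
  rw [← Finset.sum_filter]
  rw [Finset.sum_congr rfl (fun l hl => lam_erase_y h (Finset.mem_filter.1 hl).1
    (Finset.mem_filter.1 hl).2), Finset.sum_const, ← fact_pred (Yc B e) hY, nsmul_eq_mul]
  simp only [Yc]; ring

lemma key_K {n : ℕ} {B : Finset (Fin n)} {e : Ex n} (h : ∀ i ∈ B, sd (e i) = 1)
    (hX : 1 ≤ Xc B e) (hY : 1 ≤ Yc B e) :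
    ∑ l ∈ B, (-1 : ℂ) ^ (e l).2 * lam (B.erase l) e = 0 := by
  have h1 := sum_x h hX
  have h2 := sum_y h hY
  rw [← sub_eq_zero.2 (h1.trans h2.symm), ← Finset.sum_sub_distrib]
  refine Finset.sum_congr rfl fun l hl => ?_
  rcases lin_cases (h l hl) with h' | h' <;> simp [h']

lemma sd_add (m m' : ℕ × ℕ) : sd (m + m') = sd m + sd m' := by
  simp [sd]; ring

lemma sd_pos {m : ℕ × ℕ} (h : m ≠ 0) (h2 : Even (sd m)) : 2 ≤ sd m := by
  have : sd m ≠ 0 := by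
    intro h'
    apply h
    obtain ⟨a, b⟩ := m
    simp [sd] at h'
    ext <;> simp [h']
  obtain ⟨k, hk⟩ := h2
  omega

lemma mu_sum {n : ℕ} {B : Finset (Fin n)} {e : Ex n} {m : ℕ × ℕ} (hm : m ≠ 0) (hm2 : Even (sd m))
    (h : sd m = 2 → (∀ i ∈ B, sd (e i) = 1) → 1 ≤ Xc B e ∧ 1 ≤ Yc B e) :
    ∑ l ∈ B, mu (e l + m) * lam (B.erase l) e = 0 := by
  have hs := sd_pos hm hm2
  by_cases hlin : ∀ i ∈ B, sd (e i) = 1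
  · by_cases h2 : sd m = 2
    · obtain ⟨hX, hY⟩ := h h2 hlin
      have := key_K hlin hX hY
      rw [← mul_zero ((-1 : ℂ) ^ m.2), ← this, Finset.mul_sum]
      refine Finset.sum_congr rfl fun l hl => ?_
      unfold mu
      rw [if_pos (by rw [sd_add, hlin l hl, h2])]
      simp only [Prod.snd_add, pow_add]
      ring
    · refine Finset.sum_eq_zero fun l hl => ?_
      unfold mu
      rw [if_neg (by rw [sd_add, hlin l hl]; omega)]
      simp
  · push Not at hlin
    obtain ⟨b, hb, hb1⟩ := hlin
    refine Finset.sum_eq_zero fun l hl => ?_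
    by_cases hlb : b = l
    · subst hlb
      unfold mu
      rw [if_neg]
      · simp
      · rw [sd_add]
        obtain ⟨k, hk⟩ := hm2
        omega
    · rw [lam_zero (i := b) (by simp [hb, hlb]) hb1]
      simp

lemma Xc_add_Yc {n : ℕ} {B : Finset (Fin n)} {e : Ex n} (h : ∀ i ∈ B, sd (e i) = 1) :
    Xc B e + Yc B e = B.card := by
  unfold Xc Yc
  rw [← Finset.card_filter_add_card_filter_not (s := B) (fun i => e i = (1, 0))]
  congr 2
  refine Finset.filter_congr fun i hi => ?_
  rcases lin_cases (h i hi) with h' | h' <;> simp [h']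

lemma Yc_eq {n : ℕ} {B : Finset (Fin n)} {e : Ex n} (h : ∀ i ∈ B, sd (e i) = 1) :
    Yc B e = ∑ i ∈ B, (e i).2 := by
  unfold Yc
  rw [Finset.card_filter]
  refine Finset.sum_congr rfl fun i hi => ?_
  rcases lin_cases (h i hi) with h' | h' <;> simp [h']

lemma half_main {n : ℕ} {A : Finset (Fin n)} {w : ℕ} (hw : 3 ≤ w) (hw2 : w + 2 ≤ A.card)
    {e : Ex n} {m m' : ℕ × ℕ} (hm' : m' ≠ 0) (hm2' : Even (sd m'))
    (hD : ∑ i ∈ A, (e i).2 + m.2 + m'.2 = w) :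
    ∑ k ∈ A, ∑ l ∈ A.erase k, (if e k + m = (3, 0) then 1 else 0) * mu (e l + m') *
      lam ((A.erase k).erase l) e = 0 := by
  refine Finset.sum_eq_zero fun k hk => ?_
  split_ifs with h3
  · simp only [one_mul]
    refine mu_sum hm' hm2' fun h2 hlin => ?_
    have h4 := congrArg Prod.snd h3
    simp at h4
    have h5 := Finset.add_sum_erase A (fun i => (e i).2) hk
    have h6 := Yc_eq hlin
    have h7 := Xc_add_Yc hlin
    rw [Finset.card_erase_of_mem hk] at h7
    simp only [sd] at h2
    simp only [h4.1] at h5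
    omega
  · simp

lemma ydeg_single {n : ℕ} {A : Finset (Fin n)} {e : Ex n} {k : Fin n} (hk : k ∈ A) (m : ℕ × ℕ) :
    ∑ i ∈ A, ((e + Pi.single k m : Ex n) i).2 = ∑ i ∈ A, (e i).2 + m.2 := by
  simp only [Pi.add_apply, Prod.snd_add, Finset.sum_add_distrib]
  congr 1
  rw [Finset.sum_eq_single_of_mem k hk]
  · simp
  · intro i _ hi; simp [Pi.single_apply, hi]

lemma main_van {n : ℕ} {A : Finset (Fin n)} {w : ℕ} (hw : 3 ≤ w) (hw2 : w + 2 ≤ A.card)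
    (e : Ex n) {m m' : ℕ × ℕ} (hm : m ≠ 0) (hm2 : Even (sd m)) (hm' : m' ≠ 0)
    (hm2' : Even (sd m')) :
    ∑ k ∈ A, ∑ l ∈ A, phi A w (e + Pi.single k m + Pi.single l m') = 0 := by
  have hs := sd_pos hm hm2
  have hs' := sd_pos hm' hm2'
  have h0 : ∀ k ∈ A, ∑ l ∈ A, phi A w (e + Pi.single k m + Pi.single l m') =
      ∑ l ∈ A.erase k, phi A w (e + Pi.single k m + Pi.single l m') := by
    intro k hk
    rw [← Finset.add_sum_erase A _ hk, phi_big hk, zero_add]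
    simp only [Pi.add_apply, Pi.single_eq_same, sd_add]
    omega
  rw [Finset.sum_congr rfl h0]
  have h1 : ∀ k ∈ A, ∀ l ∈ A.erase k, phi A w (e + Pi.single k m + Pi.single l m') =
      if ∑ i ∈ A, (e i).2 + m.2 + m'.2 = w then
        (if e k + m = (3, 0) then 1 else 0) * mu (e l + m') * lam ((A.erase k).erase l) e +
        (if e l + m' = (3, 0) then 1 else 0) * mu (e k + m) * lam ((A.erase l).erase k) e
      else 0 := by
    intro k hk l hl
    obtain ⟨hlk, hl⟩ := Finset.mem_erase.1 hl
    have ek : (e + Pi.single k m + Pi.single l m' : Ex n) k = e k + m := by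
      simp [Pi.single_apply, hlk.symm]
    have el : (e + Pi.single k m + Pi.single l m' : Ex n) l = e l + m' := by
      simp [Pi.single_apply, hlk]
    rw [phi_two hk hl hlk.symm (by rw [ek, sd_add]; omega) (by rw [el, sd_add]; omega)]
    rw [ydeg_single hl, ydeg_single hk]
    unfold tt
    rw [ek, el]
    have c1 : ∀ i ∈ (A.erase k).erase l, (e + Pi.single k m + Pi.single l m' : Ex n) i = e i := by
      intro i hi
      simp only [Finset.mem_erase] at hi
      simp [Pi.single_apply, hi.1, hi.2.1]
    rw [lam_congr c1, Finset.erase_right_comm (a := l) (b := k), lam_congr c1]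
  rw [Finset.sum_congr rfl fun k hk => Finset.sum_congr rfl (h1 k hk)]
  by_cases hD : ∑ i ∈ A, (e i).2 + m.2 + m'.2 = w
  · simp only [if_pos hD, Finset.sum_add_distrib]
    rw [half_main hw hw2 hm' hm2' hD, zero_add]
    rw [Finset.sum_comm' (t' := A) (s' := fun l => A.erase l)]
    · exact half_main hw hw2 hm hm2 (by omega)
    · intro x y; simp only [Finset.mem_erase]; tauto
  · simp [hD]

/-- The functional on monomials. -/
noncomputable def Phi0 {n : ℕ} (i0 : Fin n) (w : ℕ) (e : Ex n) : ℂ :=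
  if e i0 = 0 then phi (Finset.univ.erase i0) w e
  else if Even (sd (e i0)) then
    - ∑ k ∈ Finset.univ.erase i0, phi (Finset.univ.erase i0) w (e + Pi.single k (e i0))
  else 0

lemma Phi0_van {n : ℕ} (i0 : Fin n) {w : ℕ} (hw : 3 ≤ w) (hw2 : w + 3 ≤ n) (e : Ex n)
    {m : ℕ × ℕ} (hm : m ≠ 0) (hm2 : Even (sd m)) :
    ∑ k, Phi0 i0 w (e + Pi.single k m) = 0 := by
  have hcard : w + 2 ≤ (Finset.univ.erase i0 : Finset (Fin n)).card := by
    rw [Finset.card_erase_of_mem (Finset.mem_univ _)]; simp; omega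
  have hs := sd_pos hm hm2
  set A : Finset (Fin n) := Finset.univ.erase i0 with hA
  rw [← Finset.add_sum_erase Finset.univ _ (Finset.mem_univ i0), ← hA]
  have hAi : ∀ k ∈ A, (e + Pi.single k m : Ex n) i0 = e i0 := by
    intro k hk
    have : i0 ≠ k := by
      rintro rfl; simp [hA] at hk
    simp [Pi.single_apply, this]
  have h0 : (e + Pi.single i0 m : Ex n) i0 = e i0 + m := by simp
  have hdrop : ∀ (k : Fin n) (r : ℕ × ℕ), phi A w (e + Pi.single i0 m + Pi.single k r) =
      phi A w (e + Pi.single k r) := by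
    intro k r
    apply phi_congr
    intro i hi
    have : i ≠ i0 := by
      rintro rfl; simp [hA] at hi
    simp [Pi.single_apply, this]
  by_cases hz : e i0 = 0
  · have h1 : ∀ k ∈ A, Phi0 i0 w (e + Pi.single k m) = phi A w (e + Pi.single k m) := by
      intro k hk
      unfold Phi0
      rw [hAi k hk, if_pos hz]
    rw [Finset.sum_congr rfl h1]
    unfold Phi0
    rw [h0, hz, zero_add, if_neg hm, if_pos hm2, ← hA]
    simp only [hdrop]
    ring
  · by_cases hev : Even (sd (e i0))
    · have h1 : ∀ k ∈ A, Phi0 i0 w (e + Pi.single k m) =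
          - ∑ l ∈ A, phi A w (e + Pi.single k m + Pi.single l (e i0)) := by
        intro k hk
        unfold Phi0
        rw [hAi k hk, if_neg hz, if_pos hev]
      rw [Finset.sum_congr rfl h1, Finset.sum_neg_distrib, main_van hw hcard e hm hm2 hz hev,
        neg_zero, add_zero]
      have hs' := sd_pos hz hev
      unfold Phi0
      have hne : e i0 + m ≠ 0 := by
        intro h
        have := congrArg sd h
        rw [sd_add] at this
        simp [sd] at this hs
        omega
      rw [h0, if_neg hne, if_pos (by rw [sd_add]; exact hev.add hm2), ← hA, neg_eq_zero]
      refine Finset.sum_eq_zero fun k hk => phi_big hk ?_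
      simp only [Pi.add_apply, Pi.single_eq_same, sd_add]
      omega
    · have hne : ∀ r : ℕ × ℕ, ¬ Even (sd r) → r ≠ 0 := by
        rintro r hr rfl; simp [sd] at hr
      have hodd : ¬ Even (sd (e i0 + m)) := by
        rw [sd_add, Nat.even_add]; tauto
      rw [Finset.sum_eq_zero, add_zero]
      · unfold Phi0
        rw [h0, if_neg (hne _ hodd), if_neg hodd]
      · intro k hk
        unfold Phi0
        rw [hAi k hk, if_neg hz, if_neg hev]

/-- The functional on the polynomial ring. -/
noncomputable def Phi {n : ℕ} (i0 : Fin n) (w : ℕ) : Rn n →ₗ[ℂ] ℂ := (bas n).constr ℂ (Phi0 i0 w)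

lemma Phi_mon {n : ℕ} (i0 : Fin n) (w : ℕ) (e : Ex n) : Phi i0 w (mon e) = Phi0 i0 w e := by
  unfold Phi
  rw [← bas_apply, Module.Basis.constr_basis]

lemma Phi_Ipow {n : ℕ} (i0 : Fin n) {w : ℕ} (hw : 3 ≤ w) (hw2 : w + 3 ≤ n) (f : Rn n)
    (hf : f ∈ Ipow n) : Phi i0 w f = 0 := by
  suffices h : ∀ a, Phi i0 w (a * f) = 0 by simpa using h 1
  unfold Ipow at hf
  induction hf using Submodule.span_induction with
  | mem x hx =>
    obtain ⟨m, hm, hm2, rfl⟩ := hx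
    have : Phi i0 w ∘ₗ LinearMap.mulRight ℂ (psm n m) = 0 := by
      apply ext_mon
      intro e
      simp only [LinearMap.comp_apply, LinearMap.mulRight_apply, LinearMap.zero_apply]
      rw [mul_comm, psm_mul_mon, map_sum]
      simp only [Phi_mon]
      exact Phi0_van i0 hw hw2 e hm hm2
    intro a
    exact LinearMap.congr_fun this a
  | zero => simp
  | add x y _ _ hx hy => intro a; rw [mul_add, map_add, hx, hy, add_zero]
  | smul b x _ hx => intro a; rw [smul_eq_mul, ← mul_assoc]; exact hx _

end DiagB

namespace DiagB
set_option linter.unusedSimpArgs false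
set_option linter.flexible false

lemma ydeg_erase {n : ℕ} (i0 : Fin n) (E : Ex n) {k : Fin n} (hk : k ∈ Finset.univ.erase i0) :
    ∑ i ∈ Finset.univ.erase i0, ((E + Pi.single k (E i0 + (1, 0)) : Ex n) i).2 = ∑ i, (E i).2 := by
  rw [ydeg_single hk, ← Finset.add_sum_erase Finset.univ (fun i => (E i).2) (Finset.mem_univ i0)]
  simp
  ring

lemma Phi0_odd {n : ℕ} (i0 : Fin n) (w : ℕ) (E : Ex n) (h : Odd (sd (E i0))) :
    Phi0 i0 w (E + Pi.single i0 (1, 0)) = - ∑ k ∈ Finset.univ.erase i0,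
      phi (Finset.univ.erase i0) w (E + Pi.single k (E i0 + (1, 0))) := by
  unfold Phi0
  have h0 : (E + Pi.single i0 (1, 0) : Ex n) i0 = E i0 + (1, 0) := by simp
  rw [h0, if_neg, if_pos]
  · congr 1
    refine Finset.sum_congr rfl fun k hk => phi_congr fun i hi => ?_
    have : i ≠ i0 := Finset.ne_of_mem_erase hi
    simp [Pi.single_apply, this]
  · rw [sd_add]; exact h.add_odd (by simp [sd])
  · intro h'
    have := congrArg Prod.fst h'
    simp at this

lemma Phi0_ne {n : ℕ} (i0 : Fin n) {w w' : ℕ} (E : Ex n) (h : Odd (sd (E i0)))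
    (hw : ∑ i, (E i).2 = w) (hne : w' ≠ w) :
    Phi0 i0 w' (E + Pi.single i0 (1, 0)) = 0 := by
  rw [Phi0_odd i0 w' E h, neg_eq_zero]
  refine Finset.sum_eq_zero fun k hk => ?_
  unfold phi
  rw [ydeg_erase i0 E hk, if_neg]
  omega

lemma Phi0_cubic {n : ℕ} (i0 : Fin n) (w : ℕ) (E : Ex n) (h : E i0 = (3, 0)) :
    Phi0 i0 w (E + Pi.single i0 (1, 0)) = 0 := by
  rw [Phi0_odd i0 w E (by rw [h]; decide), neg_eq_zero]
  refine Finset.sum_eq_zero fun k hk => phi_big hk ?_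
  simp only [Pi.add_apply, Pi.single_eq_same, sd_add, h]
  simp [sd]

lemma Phi0_term {n : ℕ} (i0 p0 : Fin n) {w : ℕ} (hw : 3 ≤ w) (hw2 : w + 3 ≤ n) (E : Ex n)
    (hp : p0 ≠ i0) (h3 : E p0 = (3, 0)) (hlin : ∀ j, j ≠ p0 → sd (E j) = 1)
    (hE : ∑ i, (E i).2 = w) :
    Phi0 i0 w (E + Pi.single i0 (1, 0)) =
      if E i0 = (1, 0) then -(((n - 2 - w).factorial : ℂ) * (w.factorial : ℂ)) else 0 := by
  have hi1 := hlin i0 hp.symm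
  rw [Phi0_odd i0 w E (by rw [hi1]; decide)]
  set A : Finset (Fin n) := Finset.univ.erase i0 with hA
  have hpA : p0 ∈ A := by simp [hA, hp]
  set r := E i0 + (1, 0) with hr
  have hr2 : sd r = 2 := by rw [hr, sd_add, hi1]; rfl
  have hBlin : ∀ i ∈ A.erase p0, sd (E i) = 1 := fun i hi => hlin i (Finset.ne_of_mem_erase hi)
  have hX := Xc_add_Yc hBlin
  have hY := Yc_eq hBlin
  have hcard : (A.erase p0).card = n - 2 := by
    rw [Finset.card_erase_of_mem hpA, hA, Finset.card_erase_of_mem (Finset.mem_univ _)]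
    simp; omega
  have hsum := Finset.add_sum_erase Finset.univ (fun i => (E i).2) (Finset.mem_univ i0)
  have hsum2 := Finset.add_sum_erase A (fun i => (E i).2) hpA
  simp only [h3] at hsum2
  rw [← hA] at hsum
  have hE2 : (E i0).2 ≤ 1 := by
    have : (E i0).1 + (E i0).2 = 1 := hi1
    omega
  have key : ∀ k ∈ A.erase p0, phi A w (E + Pi.single k r) =
      (if E k + r = (3, 0) then 1 else 0) * lam ((A.erase p0).erase k) E +
      mu (E k + r) * lam ((A.erase p0).erase k) E := by
    intro k hk
    obtain ⟨hkp, hkA⟩ := Finset.mem_erase.1 hk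
    have ek : (E + Pi.single k r : Ex n) k = E k + r := by simp
    have ep : (E + Pi.single k r : Ex n) p0 = (3, 0) := by simp [Pi.single_apply, hkp.symm, h3]
    rw [phi_two hkA hpA hkp (by rw [ek, sd_add]; omega) (by rw [ep]; simp [sd]),
      ydeg_erase i0 E hkA, if_pos hE]
    unfold tt
    rw [ek, ep]
    have c1 : ∀ i ∈ (A.erase p0).erase k, (E + Pi.single k r : Ex n) i = E i := by
      intro i hi
      simp only [Finset.mem_erase] at hi
      simp [Pi.single_apply, hi.1]
    rw [Finset.erase_right_comm (a := k) (b := p0), lam_congr c1]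
    simp [mu]
  rw [← Finset.add_sum_erase A _ hpA, phi_big hpA, zero_add, Finset.sum_congr rfl key,
    Finset.sum_add_distrib, mu_sum (m := r)]
  · rcases lin_cases hi1 with h | h
    · rw [if_pos h, add_zero, neg_inj]
      have hY' : Yc (A.erase p0) E = w := by
        rw [h] at hsum; omega
      have hX' : Xc (A.erase p0) E = n - 2 - w := by omega
      have := sum_x hBlin (by omega)
      rw [hX', hY'] at this
      rw [← this]
      refine Finset.sum_congr rfl fun k hk => ?_
      rw [hr, h]
      rcases lin_cases (hBlin k hk) with h' | h' <;> simp [h']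
    · rw [add_zero, if_neg (by rw [h]; simp), neg_eq_zero]
      refine Finset.sum_eq_zero fun k hk => ?_
      rw [hr, h]
      rcases lin_cases (hBlin k hk) with h' | h' <;> simp [h']
  · intro h'; rw [h'] at hr2; simp [sd] at hr2
  · rw [hr2]; decide
  · intro _ _; omega
  · simp only [Pi.add_apply, Pi.single_eq_same, sd_add, h3, hr2]
    simp [sd]

/-- The exponents of the leading monomial of `gw`. -/
def e0 (n w : ℕ) : Ex n := fun j => if j.val = 0 then (3, 0) else if j.val ≤ w then (0, 1) else (1, 0)

/-- The extra elements. -/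
noncomputable def gw (n w : ℕ) : Rn n := Sy (e0 n w)

lemma e0_odd {n w : ℕ} (j : Fin n) : Odd (sd (e0 n w j)) := by
  unfold e0; split_ifs <;> decide

lemma e0_sum {n w : ℕ} (hw2 : w + 3 ≤ n) : ∑ j, (e0 n w j).2 = w := by
  have : ∀ j : Fin n, (e0 n w j).2 = if (j : ℕ) ∈ Finset.Icc 1 w then 1 else 0 := by
    intro j
    unfold e0
    simp only [Finset.mem_Icc]
    by_cases h : j.val = 0
    · simp [h]
    · by_cases h' : j.val ≤ w
      · simp [h, h', Nat.pos_of_ne_zero h]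
      · simp [h, h']
  rw [Finset.sum_congr rfl fun j _ => this j,
    Fin.sum_univ_eq_sum_range (fun j => if j ∈ Finset.Icc 1 w then 1 else 0) n,
    Finset.sum_ite_mem]
  rw [Finset.inter_eq_right.2]
  · simp
  · intro x; simp; omega

lemma X_gw {n w : ℕ} (i : Fin n) : (X (Sum.inl i) : Rn n) * gw n w =
    ∑ σ : Equiv.Perm (Fin n), mon ((fun j => e0 n w (σ.symm j)) + Pi.single i (1, 0)) := by
  unfold gw Sy
  rw [Finset.mul_sum]
  refine Finset.sum_congr rfl fun σ _ => ?_
  rw [X_inl, mon_add, mul_comm]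

lemma Phi_gw_ne {n w w' : ℕ} (hw2 : w + 3 ≤ n) (i i0 : Fin n)
    (h : i ≠ i0 ∨ w' ≠ w) : Phi i0 w' ((X (Sum.inl i) : Rn n) * gw n w) = 0 := by
  rw [X_gw, map_sum]
  refine Finset.sum_eq_zero fun σ _ => ?_
  rw [Phi_mon]
  by_cases hi : i = i0
  · subst hi
    apply Phi0_ne i (w := w) (fun j => e0 n w (σ.symm j)) (e0_odd _)
    · rw [Equiv.sum_comp σ.symm (fun j => (e0 n w j).2), e0_sum hw2]
    · simpa using h
  · have hc : ((fun j => e0 n w (σ.symm j)) + Pi.single i (1, 0) : Ex n) i0 =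
        e0 n w (σ.symm i0) := by
      have : i0 ≠ i := fun h => hi h.symm
      simp [Pi.single_apply, this]
    have ho := e0_odd (w := w) (σ.symm i0)
    unfold Phi0
    rw [hc, if_neg, if_neg]
    · rwa [Nat.not_even_iff_odd]
    · intro h'; rw [h'] at ho; simp [sd] at ho

lemma Phi_gw_eq {n w : ℕ} (hw : 3 ≤ w) (hw2 : w + 3 ≤ n) (i0 : Fin n) :
    Phi i0 w ((X (Sum.inl i0) : Rn n) * gw n w) ≠ 0 := by
  set c : ℂ := ((n - 2 - w).factorial : ℂ) * (w.factorial : ℂ) with hc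
  have hc0 : c ≠ 0 := mul_ne_zero (by exact_mod_cast Nat.factorial_ne_zero _)
    (by exact_mod_cast Nat.factorial_ne_zero _)
  have hpos : 0 < n := by omega
  have h : ∀ σ : Equiv.Perm (Fin n),
      Phi i0 w (mon ((fun j => e0 n w (σ.symm j)) + Pi.single i0 (1, 0))) =
      if e0 n w (σ.symm i0) = (1, 0) then - c else 0 := by
    intro σ
    rw [Phi_mon]
    by_cases hp : σ ⟨0, hpos⟩ = i0
    · have h3 : e0 n w (σ.symm i0) = (3, 0) := by
        rw [← hp]; simp [e0]
      rw [Phi0_cubic i0 w (fun j => e0 n w (σ.symm j)) h3, h3, if_neg (by simp)]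
    · refine Phi0_term i0 (σ ⟨0, hpos⟩) hw hw2 _ hp (by simp [e0]) ?_ ?_
      · intro j hj
        have : (σ.symm j).val ≠ 0 := by
          intro h
          apply hj
          rw [← Equiv.symm_apply_eq]
          exact Fin.ext h
        unfold e0
        rw [if_neg this]
        split_ifs <;> rfl
      · rw [Equiv.sum_comp σ.symm (fun j => (e0 n w j).2), e0_sum hw2]
  rw [X_gw, map_sum, Finset.sum_congr rfl fun σ _ => h σ, ← Finset.sum_filter, Finset.sum_const,
    nsmul_eq_mul]
  refine mul_ne_zero ?_ (neg_ne_zero.2 hc0)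
  rw [Nat.cast_ne_zero]
  apply Finset.card_ne_zero_of_mem (a := Equiv.swap i0 ⟨n - 1, by omega⟩)
  rw [Finset.mem_filter]
  refine ⟨Finset.mem_univ _, ?_⟩
  rw [Equiv.symm_swap, Equiv.swap_apply_left]
  unfold e0
  rw [if_neg (by simp; omega), if_neg (by simp; omega)]

end DiagB

namespace DiagB
set_option linter.unusedSimpArgs false
set_option linter.flexible false

/-- Eigenvalue-like structure constants. -/
noncomputable def yv (n p : ℕ) : ℂ := if Even p then (p : ℂ) else (p : ℂ) - (2 * n + 1)

/-- Products of structure constants. -/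
noncomputable def yc (n p b : ℕ) : ℂ := ∏ t ∈ Finset.range b, yv n (p - t)

lemma yc_succ (n p b : ℕ) : yc n p (b + 1) = yc n p b * yv n (p - b) := by
  unfold yc; rw [Finset.prod_range_succ]

lemma yc_zero_of_lt (n p b : ℕ) (h : p < b) : yc n p b = 0 := by
  unfold yc
  apply Finset.prod_eq_zero (Finset.mem_range.2 h)
  simp [yv]

/-- Site space tensored with columns. -/
abbrev Vn (n : ℕ) := Fin (2 * n + 1) → Fin n → ℂ

/-- The target space. -/
abbrev Ln (n : ℕ) := (Fin n → Fin (2 * n + 1)) → ℂ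

/-- The site vectors. -/
noncomputable def wv (n a b : ℕ) : Vn n := fun m j =>
  if (m : ℕ) + b = 2 * j + 1 + a then yc n (2 * j + 1) b else 0

/-- Matrices acting on site vectors. -/
noncomputable def Qop {n : ℕ} (Q : Matrix (Fin (2 * n + 1)) (Fin (2 * n + 1)) ℂ) (P : Vn n) : Vn n :=
  fun m => ∑ m', Q m m' • P m'

/-- The raising matrix. -/
noncomputable def Xm (n : ℕ) : Matrix (Fin (2 * n + 1)) (Fin (2 * n + 1)) ℂ :=
  fun m m' => if (m' : ℕ) + 1 = m then 1 else 0

/-- The lowering matrix. -/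
noncomputable def Ym (n : ℕ) : Matrix (Fin (2 * n + 1)) (Fin (2 * n + 1)) ℂ :=
  fun m m' => if (m' : ℕ) = m + 1 then yv n m' else 0

/-- Commutator constants. -/
noncomputable def gam (n a b : ℕ) : ℂ :=
  if Even a then (a : ℂ) else if Even b then (a : ℂ) + (2 * n + 1) else (a : ℂ) - (2 * n + 1)

lemma Xm_wv (n a b : ℕ) : Qop (Xm n) (wv n a b) = wv n (a + 1) b := by
  ext m j
  simp only [Qop, Finset.sum_apply, Pi.smul_apply, smul_eq_mul, Xm, ite_mul, one_mul, zero_mul]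
  rcases Nat.eq_zero_or_pos (m : ℕ) with h | h
  · rw [Finset.sum_eq_zero]
    · simp only [wv, h]
      split_ifs with h'
      · rw [yc_zero_of_lt]; omega
      · rfl
    · intro m' _
      rw [if_neg (by omega)]
  · rw [Finset.sum_eq_single_of_mem ⟨m - 1, by omega⟩ (Finset.mem_univ _)]
    · simp only [wv]
      rw [if_pos (by omega)]
      congr 1
      apply propext
      omega
    · intro m' _ hne
      rw [if_neg]
      intro h'
      apply hne
      ext
      simp; omega

lemma yv_top (n : ℕ) : yv n (2 * n + 1) = 0 := by
  unfold yv
  rw [if_neg (by simp)]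
  push_cast; ring

lemma Ym_wv (n a b : ℕ) :
    Qop (Ym n) (wv n a b) = wv n a (b + 1) + gam n a b • wv n (a - 1) b := by
  ext m j
  simp only [Qop, Finset.sum_apply, Pi.smul_apply, smul_eq_mul, Ym, ite_mul, zero_mul, Pi.add_apply]
  have h1 : ∑ m' : Fin (2 * n + 1), (if (m' : ℕ) = m + 1 then yv n m' * wv n a b m' j else 0) =
      if (m : ℕ) + 1 + b = 2 * j + 1 + a then yv n (m + 1) * yc n (2 * j + 1) b else 0 := by
    by_cases h : (m : ℕ) = 2 * n
    · rw [h, yv_top, Finset.sum_eq_zero]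
      · simp
      · intro m' _
        rw [if_neg (by omega)]
    · rw [Finset.sum_eq_single_of_mem ⟨m + 1, by omega⟩ (Finset.mem_univ _)]
      · simp only [wv, if_true]
        rw [mul_ite, mul_zero]
      · intro m' _ hne
        rw [if_neg]
        intro h'
        apply hne
        ext
        simp; omega
  rw [h1]
  simp only [wv]
  by_cases hC : (m : ℕ) + 1 + b = 2 * j + 1 + a
  · rw [if_pos hC, if_pos (by omega), yc_succ]
    by_cases hb : 2 * (j : ℕ) + 1 < b
    · rw [yc_zero_of_lt _ _ _ hb]; simp
    · obtain ⟨q, hq⟩ := Nat.exists_eq_add_of_le (not_lt.1 hb)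
      have hq' : 2 * (j : ℕ) + 1 - b = q := by omega
      have hm : (m : ℕ) + 1 = q + a := by omega
      have hpar : Even q ↔ ¬ Even b := by
        have : Odd (b + q) := by rw [← hq]; simp
        rw [Nat.odd_add] at this
        rw [← this, Nat.not_even_iff_odd]
      rw [hq', hm]
      by_cases ha0 : a = 0
      · subst ha0
        simp [gam]
        ring
      · rw [if_pos (by omega)]
        have : yv n (q + a) = yv n q + gam n a b := by
          unfold yv gam
          by_cases h1 : Even a <;> by_cases h2 : Even b <;>
            simp [Nat.even_add, hpar, h1, h2] <;> ring
        rw [this]; ring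
  · rw [if_neg hC, if_neg (by omega)]
    by_cases ha0 : a = 0
    · subst ha0; simp [gam]
    · rw [if_neg (by omega)]; simp

/-- The multilinear determinant map. -/
noncomputable def Tm (n : ℕ) : MultilinearMap ℂ (fun _ : Fin n => Vn n) (Ln n) :=
  MultilinearMap.pi (fun κ : Fin n → Fin (2 * n + 1) =>
    (Matrix.detRowAlternating (n := Fin n) (R := ℂ)).toMultilinearMap.compLinearMap
      (fun i => LinearMap.proj (κ i)))

lemma Tm_apply {n : ℕ} (P : Fin n → Vn n) (κ : Fin n → Fin (2 * n + 1)) :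
    Tm n P κ = Matrix.det (Matrix.of fun i j => P i (κ i) j) := rfl

/-- Operators acting at a site. -/
noncomputable def Mop {n : ℕ} (Q : Matrix (Fin (2 * n + 1)) (Fin (2 * n + 1)) ℂ) (i : Fin n) :
    Ln n →ₗ[ℂ] Ln n where
  toFun u := fun κ => ∑ m, Q (κ i) m * u (Function.update κ i m)
  map_add' u v := by
    ext κ; simp [mul_add, Finset.sum_add_distrib]
  map_smul' c u := by
    ext κ; simp [Finset.mul_sum]; refine Finset.sum_congr rfl fun _ _ => by ring

lemma Mop_Tm {n : ℕ} (Q : Matrix (Fin (2 * n + 1)) (Fin (2 * n + 1)) ℂ) (i : Fin n)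
    (P : Fin n → Vn n) : Mop Q i (Tm n P) = Tm n (Function.update P i (Qop Q (P i))) := by
  ext κ
  have h1 : Tm n (Function.update P i (Qop Q (P i))) κ =
      (Matrix.detRowAlternating (n := Fin n) (R := ℂ))
        (Function.update (fun k => P k (κ k)) i (∑ m', Q (κ i) m' • P i m')) := by
    rw [Tm_apply]
    change Matrix.detRowAlternating _ = _
    congr 1
    ext k j
    by_cases h : k = i
    · subst h; simp [Qop]
    · simp [h]
  rw [h1, AlternatingMap.map_update_sum]
  change ∑ m, Q (κ i) m * _ = _
  refine Finset.sum_congr rfl fun m _ => ?_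
  rw [AlternatingMap.map_update_smul, smul_eq_mul]
  congr 1
  rw [Tm_apply]
  change Matrix.detRowAlternating _ = _
  congr 1
  ext k j
  by_cases h : k = i
  · subst h; simp
  · simp [h]

/-- The representation map. -/
noncomputable def rho (n : ℕ) : Rn n →ₗ[ℂ] Ln n :=
  (bas n).constr ℂ (fun e => Tm n (fun i => wv n (e i).1 (e i).2))

lemma rho_mon {n : ℕ} (e : Ex n) : rho n (mon e) = Tm n (fun i => wv n (e i).1 (e i).2) := by
  unfold rho
  rw [← bas_apply, Module.Basis.constr_basis]

lemma rho_x {n : ℕ} (i : Fin n) (f : Rn n) :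
    rho n (X (Sum.inl i) * f) = Mop (Xm n) i (rho n f) := by
  have : rho n ∘ₗ LinearMap.mulLeft ℂ (X (Sum.inl i)) = Mop (Xm n) i ∘ₗ rho n := by
    apply ext_mon
    intro e
    simp only [LinearMap.comp_apply, LinearMap.mulLeft_apply]
    rw [X_inl, ← mon_add, rho_mon, rho_mon, Mop_Tm, Xm_wv]
    congr 1
    ext k : 1
    by_cases h : k = i
    · subst h; simp [add_comm]
    · simp [Pi.single_apply, h]
  exact LinearMap.congr_fun this f

/-- The correction operator. -/
noncomputable def Dop {n : ℕ} (i : Fin n) : Rn n →ₗ[ℂ] Rn n :=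
  (bas n).constr ℂ (fun e => gam n (e i).1 (e i).2 •
    mon (Function.update e i ((e i).1 - 1, (e i).2)))

lemma Dop_mon {n : ℕ} (i : Fin n) (e : Ex n) : Dop i (mon e) = gam n (e i).1 (e i).2 •
    mon (Function.update e i ((e i).1 - 1, (e i).2)) := by
  unfold Dop
  rw [← bas_apply, Module.Basis.constr_basis]

lemma rho_y {n : ℕ} (i : Fin n) (f : Rn n) :
    rho n (X (Sum.inr i) * f) = Mop (Ym n) i (rho n f) - rho n (Dop i f) := by
  have : rho n ∘ₗ LinearMap.mulLeft ℂ (X (Sum.inr i)) = Mop (Ym n) i ∘ₗ rho n - rho n ∘ₗ Dop i := by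
    apply ext_mon
    intro e
    simp only [LinearMap.comp_apply, LinearMap.mulLeft_apply, LinearMap.sub_apply]
    rw [X_inr, ← mon_add, rho_mon, rho_mon, Mop_Tm, Ym_wv, Dop_mon, map_smul, rho_mon,
      MultilinearMap.map_update_add, MultilinearMap.map_update_smul, eq_sub_iff_add_eq]
    congr 2
    · ext k : 1
      by_cases h : k = i
      · subst h; simp [add_comm]
      · simp [Pi.single_apply, h]
    · congr 1
      ext k : 1
      by_cases h : k = i
      · subst h; simp
      · simp [h]
  exact LinearMap.congr_fun this f

/-- Total degree of an exponent. -/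
def deg {n : ℕ} (e : Ex n) : ℕ := ∑ i, sd (e i)

lemma deg_add {n : ℕ} (e e' : Ex n) : deg (e + e') = deg e + deg e' := by
  unfold deg
  simp only [Pi.add_apply, sd_add, Finset.sum_add_distrib]

lemma deg_single {n : ℕ} (i : Fin n) (m : ℕ × ℕ) : deg (Pi.single i m : Ex n) = sd m := by
  unfold deg
  rw [Finset.sum_eq_single_of_mem i (Finset.mem_univ _)]
  · simp
  · intro j _ hj; simp [Pi.single_apply, hj, sd]

/-- Homogeneous components. -/
noncomputable def comp {n : ℕ} (d : ℕ) : Rn n →ₗ[ℂ] Rn n :=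
  (bas n).constr ℂ (fun e => if deg e = d then mon e else 0)

lemma comp_mon {n : ℕ} (d : ℕ) (e : Ex n) : comp d (mon e) = if deg e = d then mon e else 0 := by
  unfold comp
  rw [← bas_apply, Module.Basis.constr_basis, bas_apply]

/-- Polynomials of degree less than `d`. -/
noncomputable def Rlt (n d : ℕ) : Submodule ℂ (Rn n) := Submodule.span ℂ (mon '' {e | deg e < d})

lemma mon_mem_Rlt {n d : ℕ} {e : Ex n} (h : deg e < d) : mon e ∈ Rlt n d :=
  Submodule.subset_span ⟨e, h, rfl⟩

lemma Rlt_map {n d d' : ℕ} (f : Rn n →ₗ[ℂ] Rn n) (h : ∀ e : Ex n, deg e < d → f (mon e) ∈ Rlt n d')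
    {r : Rn n} (hr : r ∈ Rlt n d) : f r ∈ Rlt n d' := by
  have : Rlt n d ≤ (Rlt n d').comap f := by
    unfold Rlt
    rw [Submodule.span_le]
    rintro _ ⟨e, he, rfl⟩
    exact h e he
  exact this hr

lemma Dop_Rlt {n d : ℕ} (i : Fin n) {r : Rn n} (hr : r ∈ Rlt n d) : Dop i r ∈ Rlt n d := by
  refine Rlt_map _ (fun e he => ?_) hr
  rw [Dop_mon]
  refine Submodule.smul_mem _ _ (mon_mem_Rlt (lt_of_le_of_lt ?_ he))
  unfold deg
  refine Finset.sum_le_sum fun k _ => ?_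
  by_cases h : k = i
  · subst h; simp [sd]
  · simp [h]

lemma x_Rlt {n d : ℕ} (i : Fin n) {r : Rn n} (hr : r ∈ Rlt n d) :
    X (Sum.inl i) * r ∈ Rlt n (d + 1) := by
  refine Rlt_map (LinearMap.mulLeft ℂ (X (Sum.inl i))) (fun e he => ?_) hr
  rw [LinearMap.mulLeft_apply, X_inl, ← mon_add]
  apply mon_mem_Rlt
  rw [deg_add, deg_single]
  simp [sd]; omega

lemma y_Rlt {n d : ℕ} (i : Fin n) {r : Rn n} (hr : r ∈ Rlt n d) :
    X (Sum.inr i) * r ∈ Rlt n (d + 1) := by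
  refine Rlt_map (LinearMap.mulLeft ℂ (X (Sum.inr i))) (fun e he => ?_) hr
  rw [LinearMap.mulLeft_apply, X_inr, ← mon_add]
  apply mon_mem_Rlt
  rw [deg_add, deg_single]
  simp [sd]; omega

lemma comp_Rlt {n d : ℕ} (f : Rn n) : comp d f ∈ Rlt n (d + 1) := by
  have : (⊤ : Submodule ℂ (Rn n)) ≤ (Rlt n (d + 1)).comap (comp d) := by
    rw [← span_mon, Submodule.span_le]
    rintro _ ⟨e, rfl⟩
    simp only [Submodule.comap_coe, Set.mem_preimage, SetLike.mem_coe, comp_mon]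
    split_ifs with h
    · exact mon_mem_Rlt (by omega)
    · exact zero_mem _
  exact this Submodule.mem_top

lemma comp_var {n d : ℕ} (v : Fin n ⊕ Fin n) (f : Rn n) :
    comp (d + 1) (X v * f) = X v * comp d f := by
  have hv : ∃ u : Ex n, (X v : Rn n) = mon u ∧ deg u = 1 := by
    rcases v with i | i
    · exact ⟨_, X_inl i, by rw [deg_single]; rfl⟩
    · exact ⟨_, X_inr i, by rw [deg_single]; rfl⟩
  obtain ⟨u, hu, hu1⟩ := hv
  rw [hu]
  have : comp (d + 1) ∘ₗ LinearMap.mulLeft ℂ (mon u) = LinearMap.mulLeft ℂ (mon u) ∘ₗ comp d := by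
    apply ext_mon
    intro e
    simp only [LinearMap.comp_apply, LinearMap.mulLeft_apply]
    rw [← mon_add, comp_mon, comp_mon, deg_add, hu1, mul_ite, mul_zero, ← mon_add]
    congr 1
    apply propext; omega
  exact LinearMap.congr_fun this f

lemma comp_var_zero {n : ℕ} (v : Fin n ⊕ Fin n) (f : Rn n) :
    comp 0 (X v * f) = 0 := by
  have hv : ∃ u : Ex n, (X v : Rn n) = mon u ∧ deg u = 1 := by
    rcases v with i | i
    · exact ⟨_, X_inl i, by rw [deg_single]; rfl⟩
    · exact ⟨_, X_inr i, by rw [deg_single]; rfl⟩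
  obtain ⟨u, hu, hu1⟩ := hv
  rw [hu]
  have : comp 0 ∘ₗ LinearMap.mulLeft ℂ (mon u) = 0 := by
    apply ext_mon
    intro e
    simp only [LinearMap.comp_apply, LinearMap.mulLeft_apply, LinearMap.zero_apply]
    rw [← mon_add, comp_mon, deg_add, hu1, if_neg (by omega)]
  exact LinearMap.congr_fun this f

/-- The membership predicate of `Jn`. -/
def inJ {n : ℕ} (f : Rn n) : Prop := ∀ d, rho n (comp d f) ∈ (Rlt n d).map (rho n)

lemma inJ_var {n : ℕ} (v : Fin n ⊕ Fin n) {f : Rn n} (hf : inJ f) : inJ (X v * f) := by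
  intro d
  rcases d with _ | d
  · rw [comp_var_zero, map_zero]; exact zero_mem _
  · rw [comp_var]
    obtain ⟨r, hr, hrf⟩ := hf d
    rcases v with i | i
    · refine ⟨X (Sum.inl i) * r, x_Rlt i hr, ?_⟩
      rw [rho_x, rho_x, hrf]
    · refine ⟨X (Sum.inr i) * r + Dop i r - Dop i (comp d f), ?_, ?_⟩
      · refine Submodule.sub_mem _ (Submodule.add_mem _ (y_Rlt i hr) ?_) (Dop_Rlt i (comp_Rlt f))
        exact Rlt_map LinearMap.id (fun e he => mon_mem_Rlt (by omega)) (Dop_Rlt i hr)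
      · rw [map_sub, map_add, rho_y, rho_y, hrf]
        abel

/-- The ideal of elements whose homogeneous components have degenerate image. -/
noncomputable def Jn (n : ℕ) : Ideal (Rn n) where
  carrier := {f | inJ f}
  zero_mem' := fun d => by rw [map_zero, map_zero]; exact zero_mem _
  add_mem' := fun {a b} ha hb d => by
    rw [map_add, map_add]; exact add_mem (ha d) (hb d)
  smul_mem' := fun c f hf => by
    rw [smul_eq_mul]
    change inJ (c * f)
    induction c using MvPolynomial.induction_on with
    | C a =>
      intro d
      rw [← smul_eq_C_mul, map_smul, map_smul]
      exact Submodule.smul_mem _ _ (hf d)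
    | add p q hp hq =>
      intro d
      rw [add_mul, map_add, map_add]; exact add_mem (hp d) (hq d)
    | mul_X p v hp =>
      have := inJ_var v hp
      rwa [← mul_assoc, mul_comm (X v)] at this

lemma mem_Jn {n : ℕ} {f : Rn n} : f ∈ Jn n ↔ ∀ d, rho n (comp d f) ∈ (Rlt n d).map (rho n) := Iff.rfl

end DiagB

namespace DiagB
set_option linter.unusedSimpArgs false
set_option linter.flexible false

/-- Alternating vectors. -/
def Alt {n : ℕ} (u : Ln n) : Prop :=
  ∀ (σ : Equiv.Perm (Fin n)) (κ : Fin n → Fin (2 * n + 1)),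
    u κ = ((Equiv.Perm.sign σ : ℤ) : ℂ) * u (fun i => κ (σ i))

lemma Alt.smul {n : ℕ} {u : Ln n} (h : Alt u) (c : ℂ) : Alt (c • u) := by
  intro σ κ
  simp only [Pi.smul_apply, smul_eq_mul]
  rw [h σ κ]; ring

lemma Alt.sum {n : ℕ} {ι : Type*} (s : Finset ι) {u : ι → Ln n} (h : ∀ i ∈ s, Alt (u i)) :
    Alt (∑ i ∈ s, u i) := by
  intro σ κ
  simp only [Finset.sum_apply, Finset.mul_sum]
  exact Finset.sum_congr rfl fun i hi => h i hi σ κ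

lemma Alt.ext {n : ℕ} {u v : Ln n} (hu : Alt u) (hv : Alt v)
    (h : ∀ κ, StrictMono κ → u κ = v κ) : u = v := by
  have hz : ∀ (u : Ln n), Alt u → ∀ κ, ¬ Function.Injective κ → u κ = 0 := by
    intro u hu κ hκ
    unfold Function.Injective at hκ
    push Not at hκ
    obtain ⟨i, j, hij, hne⟩ := hκ
    have h1 := hu (Equiv.swap i j) κ
    have h2 : (fun k => κ (Equiv.swap i j k)) = κ := by
      ext k
      by_cases hk : k = i
      · subst hk; simp [hij]
      · by_cases hk' : k = j
        · subst hk'; simp [hij]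
        · simp [Equiv.swap_apply_of_ne_of_ne hk hk']
    rw [h2, Equiv.Perm.sign_swap hne] at h1
    push_cast at h1
    linear_combination h1 / 2
  ext κ
  by_cases hκ : Function.Injective κ
  · rw [hu (Tuple.sort κ) κ, hv (Tuple.sort κ) κ]
    congr 1
    apply h
    exact (Tuple.monotone_sort κ).strictMono_of_injective (hκ.comp (Tuple.sort κ).injective)
  · rw [hz u hu κ hκ, hz v hv κ hκ]

lemma det_sgn {n : ℕ} (σ : Equiv.Perm (Fin n)) (M : Matrix (Fin n) (Fin n) ℂ) :
    M.det = ((Equiv.Perm.sign σ : ℤ) : ℂ) * (M.submatrix σ id).det := by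
  rw [Matrix.det_permute, ← mul_assoc]
  have : ((Equiv.Perm.sign σ : ℤ) : ℂ) * ((Equiv.Perm.sign σ : ℤ) : ℂ) = 1 := by
    rw [← Int.cast_mul]
    simp
  rw [this, one_mul]

lemma rho_perm {n : ℕ} (σ : Equiv.Perm (Fin n)) (f : Rn n) (κ : Fin n → Fin (2 * n + 1)) :
    rho n (bAct n 1 σ f) κ = ((Equiv.Perm.sign σ : ℤ) : ℂ) * rho n f (fun i => κ (σ i)) := by
  have : LinearMap.proj κ ∘ₗ rho n ∘ₗ (bAct n 1 σ).toLinearMap =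
      ((Equiv.Perm.sign σ : ℤ) : ℂ) • (LinearMap.proj (fun i => κ (σ i)) ∘ₗ rho n) := by
    apply ext_mon
    intro e
    simp only [LinearMap.comp_apply, AlgHom.toLinearMap_apply, bAct_mon, LinearMap.smul_apply,
      LinearMap.proj_apply, Pi.one_apply, Units.val_one, Int.cast_one, one_pow, Finset.prod_const_one,
      one_smul, rho_mon, Tm_apply, smul_eq_mul]
    rw [det_sgn σ]
    congr 2
    ext i j
    simp
  exact LinearMap.congr_fun this f

lemma rho_alt {n : ℕ} {f : Rn n} (hf : ∀ σ, bAct n 1 σ f = f) : Alt (rho n f) := by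
  intro σ κ
  rw [← rho_perm, hf]

lemma bAct_psm {n : ℕ} (m : ℕ × ℕ) (σ : Equiv.Perm (Fin n)) : bAct n 1 σ (psm n m) = psm n m := by
  unfold psm
  rw [map_sum]
  refine Fintype.sum_equiv σ _ _ fun k => ?_
  rw [bAct_mon]
  simp only [Pi.one_apply, Units.val_one, Int.cast_one, one_pow, Finset.prod_const_one, one_smul]
  congr 1
  ext i : 1
  simp [Pi.single_apply, Equiv.symm_apply_eq]

lemma bAct_Sy {n : ℕ} (e : Ex n) (σ : Equiv.Perm (Fin n)) : bAct n 1 σ (Sy e) = Sy e := by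
  unfold Sy
  rw [map_sum]
  refine Fintype.sum_equiv (Equiv.mulLeft σ) _ _ fun τ => ?_
  rw [bAct_mon]
  simp only [Pi.one_apply, Units.val_one, Int.cast_one, one_pow, Finset.prod_const_one, one_smul]
  congr 1

lemma rho_supp {n : ℕ} {e : Ex n} {κ : Fin n → Fin (2 * n + 1)} (i : Fin n)
    (h : ¬ Even (sd (e i) + κ i + 1)) : rho n (mon e) κ = 0 := by
  rw [rho_mon, Tm_apply]
  apply Matrix.det_eq_zero_of_row_eq_zero i
  intro j
  simp only [Matrix.of_apply, wv]
  rw [if_neg]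
  intro h'
  apply h
  rw [Nat.even_iff]
  simp only [sd]
  omega

/-- The odd increasing tuple. -/
def kap0 (n : ℕ) : Fin n → Fin (2 * n + 1) := fun i => ⟨2 * i + 1, by omega⟩

/-- The even increasing tuples. -/
def kapE (n : ℕ) (k : Fin (n + 1)) : Fin n → Fin (2 * n + 1) :=
  fun i => ⟨2 * (k.succAbove i), by omega⟩

lemma eq_kap0 {n : ℕ} {κ : Fin n → Fin (2 * n + 1)} (hκ : StrictMono κ)
    (h : ∀ i, Odd (κ i : ℕ)) : κ = kap0 n := by
  have hlt : ∀ i, (κ i : ℕ) / 2 < n := fun i => by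
    have := h i; rw [Nat.odd_iff] at this; omega
  have hs : StrictMono (fun i => (⟨(κ i : ℕ) / 2, hlt i⟩ : Fin n)) := by
    intro i j hij
    have h1 := hκ hij
    have h2 := h i
    have h3 := h j
    rw [Nat.odd_iff] at h2 h3
    rw [Fin.lt_def] at h1 ⊢
    simp; omega
  have hid : (fun i => (⟨(κ i : ℕ) / 2, hlt i⟩ : Fin n)) = id := by
    apply (StrictMono.range_inj hs strictMono_id).1
    rw [Set.range_id, Set.range_eq_univ]
    exact Finite.surjective_of_injective hs.injective
  ext i
  have h1 := congrArg Fin.val (congrFun hid i)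
  have h2 := h i
  rw [Nat.odd_iff] at h2
  simp at h1
  simp [kap0]
  omega

lemma eq_kapE {n : ℕ} {κ : Fin n → Fin (2 * n + 1)} (hκ : StrictMono κ)
    (h : ∀ i, Even (κ i : ℕ)) : ∃ k, κ = kapE n k := by
  have hlt : ∀ i, (κ i : ℕ) / 2 < n + 1 := fun i => by
    have := h i; rw [Nat.even_iff] at this; omega
  have hs : StrictMono (fun i => (⟨(κ i : ℕ) / 2, hlt i⟩ : Fin (n + 1))) := by
    intro i j hij
    have h1 := hκ hij
    have h2 := h i
    have h3 := h j
    rw [Nat.even_iff] at h2 h3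
    rw [Fin.lt_def] at h1 ⊢
    simp; omega
  set s := (fun i => (⟨(κ i : ℕ) / 2, hlt i⟩ : Fin (n + 1))) with hsd
  have hc : ((Finset.univ.image s)ᶜ).card = 1 := by
    rw [Finset.card_compl, Finset.card_image_of_injective _ hs.injective]
    simp
  obtain ⟨k, hk⟩ := Finset.card_eq_one.1 hc
  have hid : s = k.succAbove := by
    apply (StrictMono.range_inj hs (Fin.strictMono_succAbove k)).1
    rw [Fin.range_succAbove]
    have h1 := congrArg (fun t : Finset (Fin (n + 1)) => ((tᶜ : Finset (Fin (n + 1))) : Set (Fin (n + 1)))) hk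
    simpa using h1
  refine ⟨k, ?_⟩
  ext i
  have h1 := congrArg Fin.val (congrFun hid i)
  have h2 := h i
  rw [Nat.even_iff] at h2
  simp [hsd] at h1
  simp [kapE]
  omega

lemma rho_one_kap0 {n : ℕ} : rho n (mon 0) (kap0 n) = 1 := by
  rw [rho_mon, Tm_apply]
  have : (Matrix.of fun i j => wv n ((0 : Ex n) i).1 ((0 : Ex n) i).2 (kap0 n i) j) = 1 := by
    ext i j
    simp only [Matrix.of_apply, wv, kap0, Pi.zero_apply, Prod.fst_zero, Prod.snd_zero,
      Matrix.one_apply, yc, Finset.range_zero, Finset.prod_empty]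
    congr 1
    apply propext
    rw [Fin.ext_iff]
    omega
  rw [this, Matrix.det_one]

lemma bAct_one {n : ℕ} (σ : Equiv.Perm (Fin n)) : bAct n 1 σ (mon 0) = mon 0 := by
  rw [mon_zero, map_one]

lemma comp_psm {n : ℕ} (m : ℕ × ℕ) (d : ℕ) : comp d (psm n m) = if sd m = d then psm n m else 0 := by
  unfold psm
  rw [map_sum]
  simp only [comp_mon, deg_single]
  split_ifs <;> simp

lemma comp_Sy {n : ℕ} (e : Ex n) (d : ℕ) : comp d (Sy e) = if deg e = d then Sy e else 0 := by
  unfold Sy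
  rw [map_sum]
  have : ∀ σ : Equiv.Perm (Fin n), deg (fun i => e (σ.symm i)) = deg e := fun σ => by
    unfold deg
    exact Equiv.sum_comp σ.symm (fun i => sd (e i))
  simp only [comp_mon, this]
  split_ifs <;> simp

lemma psm_mem_Jn {n : ℕ} {m : ℕ × ℕ} (hm : m ≠ 0) (hm2 : Even (sd m)) : psm n m ∈ Jn n := by
  rw [mem_Jn]
  intro d
  rw [comp_psm]
  split_ifs with h
  · have hs := sd_pos hm hm2
    refine ⟨(rho n (psm n m) (kap0 n)) • mon 0, Submodule.smul_mem _ _ (mon_mem_Rlt ?_), ?_⟩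
    · have : deg (0 : Ex n) = 0 := by simp [deg, sd]
      omega
    · rw [map_smul]
      refine Alt.ext ((rho_alt bAct_one).smul _) (rho_alt (bAct_psm m)) fun κ hκ => ?_
      rw [Pi.smul_apply, smul_eq_mul]
      by_cases ho : ∀ i, Odd (κ i : ℕ)
      · rw [eq_kap0 hκ ho, rho_one_kap0, mul_one]
      · push Not at ho
        obtain ⟨i, hi⟩ := ho
        rw [rho_supp i, mul_zero]
        · unfold psm
          rw [map_sum, Finset.sum_apply, Finset.sum_eq_zero]
          intro k _
          apply rho_supp i
          rw [Nat.not_odd_iff_even] at hi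
          rw [Nat.not_even_iff_odd]
          refine Even.add_one (Even.add ?_ hi)
          by_cases hik : i = k
          · subst hik; simpa using hm2
          · simp [Pi.single_apply, hik, sd]
        · rw [Nat.not_odd_iff_even] at hi
          rw [Nat.not_even_iff_odd]
          refine Even.add_one (Even.add ?_ hi)
          simp [sd]
  · rw [map_zero]; exact zero_mem _

lemma diagIdeal_le_Jn {n : ℕ} : diagIdeal n ≤ Jn n := by
  refine diagIdeal_le.trans ?_
  unfold Ipow
  rw [Ideal.span_le]
  rintro _ ⟨m, hm, hm2, rfl⟩
  exact psm_mem_Jn hm hm2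

lemma det_ord {n : ℕ} (M : Matrix (Fin n) (Fin n) ℂ) (b : Fin n → ℕ) (hb : Function.Injective b)
    (h : ∀ i j, M i j ≠ 0 → b i ≤ b j) : M.det = ∏ i, M i i := by
  rw [Matrix.det_apply, Finset.sum_eq_single_of_mem 1 (Finset.mem_univ _)]
  · simp
  · intro σ _ hσ
    have hgoal : ∏ i, M (σ i) i = 0 → Equiv.Perm.sign σ • ∏ i, M (σ i) i = 0 := by
      intro h; rw [h, smul_zero]
    apply hgoal
    by_contra hne
    rw [← ne_eq, Finset.prod_ne_zero_iff] at hne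
    have h1 : ∀ i ∈ Finset.univ, b (σ i) ≤ b i := fun i hi => h _ _ (hne i hi)
    have h2 := (Finset.sum_eq_sum_iff_of_le h1).1 (Equiv.sum_comp σ b)
    apply hσ
    ext i
    rw [hb (h2 i (Finset.mem_univ _))]
    rfl

/-- The vector `t x + y`. -/
noncomputable def Pt (n : ℕ) (t : ℂ) : Vn n := t • wv n 1 0 + wv n 0 1

lemma Pt_apply {n : ℕ} (t : ℂ) (m : Fin (2 * n + 1)) (j : Fin n) :
    Pt n t m j = (if (m : ℕ) = 2 * j + 2 then t else 0) +
      (if (m : ℕ) = 2 * j then yv n (2 * j + 1) else 0) := by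
  simp [Pt, wv, yc]

lemma Tm_Pt_alt {n : ℕ} (t : ℂ) : Alt (Tm n (fun _ => Pt n t)) := by
  intro σ κ
  rw [Tm_apply, Tm_apply, det_sgn σ]
  rfl

lemma Tm_Pt_supp {n : ℕ} (t : ℂ) {κ : Fin n → Fin (2 * n + 1)} (i : Fin n) (h : ¬ Even (κ i : ℕ)) :
    Tm n (fun _ => Pt n t) κ = 0 := by
  rw [Tm_apply]
  apply Matrix.det_eq_zero_of_row_eq_zero i
  intro j
  rw [Nat.even_iff] at h
  rw [Matrix.of_apply, Pt_apply, if_neg (by omega), if_neg (by omega), add_zero]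

/-- The leading constants. -/
noncomputable def ck (n : ℕ) (k : ℕ) : ℂ := ∏ i : Fin n, if (i : ℕ) < k then yv n (2 * i + 1) else 1

lemma yv_ne {n p : ℕ} (h1 : 1 ≤ p) (h2 : p ≤ 2 * n) : yv n p ≠ 0 := by
  unfold yv
  split_ifs with h
  · exact_mod_cast (by omega : p ≠ 0)
  · rw [sub_ne_zero]
    exact_mod_cast (by omega : p ≠ 2 * n + 1)

lemma ck_ne {n k : ℕ} : ck n k ≠ 0 := by
  unfold ck
  rw [Finset.prod_ne_zero_iff]
  intro i _
  split_ifs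
  · exact yv_ne (by omega) (by omega)
  · simp

lemma Tm_Pt_kapE {n : ℕ} (t : ℂ) (k : Fin (n + 1)) :
    Tm n (fun _ => Pt n t) (kapE n k) = ck n k * t ^ (n - k : ℕ) := by
  have hs : ∀ i : Fin n, ((kapE n k i : Fin (2 * n + 1)) : ℕ) =
      if (i : ℕ) < k then 2 * (i : ℕ) else 2 * i + 2 := by
    intro i
    simp only [kapE, Fin.succAbove, Fin.lt_def, Fin.val_castSucc]
    split_ifs <;> simp
    ring
  rw [Tm_apply, det_ord _ (fun i => if (i : ℕ) < k then (k : ℕ) - i else i + 1)]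
  · have h1 : ∀ i : Fin n, Matrix.of (fun i j => Pt n t (kapE n k i) j) i i =
        (if (i : ℕ) < k then yv n (2 * i + 1) else 1) * (if (i : ℕ) < k then 1 else t) := by
      intro i
      rw [Matrix.of_apply, Pt_apply, hs]
      split_ifs <;> first | omega | simp
    rw [Finset.prod_congr rfl fun i _ => h1 i, Finset.prod_mul_distrib]
    congr 1
    rw [Finset.prod_ite, Finset.prod_const_one, one_mul, Finset.prod_const]
    congr 1
    have h2 : (Finset.univ.filter (fun i : Fin n => (i : ℕ) < k)).card = k := by
      rw [Fin.card_filter_val_lt]; omega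
    have h3 := Finset.card_filter_add_card_filter_not (s := (Finset.univ : Finset (Fin n)))
      (fun i : Fin n => (i : ℕ) < k)
    simp only [Finset.card_univ, Fintype.card_fin] at h3
    omega
  · intro i j hij
    simp only at hij
    ext
    split_ifs at hij <;> omega
  · intro i j hij
    rw [Matrix.of_apply, Pt_apply, hs] at hij
    by_contra hlt
    apply hij
    have : ∀ (p q : Prop) [Decidable p] [Decidable q] (a b : ℂ), ¬ p → ¬ q →
      (if p then a else 0) + (if q then b else 0) = 0 := by
      intro p q _ _ a b hp hq; simp [hp, hq]
    apply this <;> (split_ifs at hlt ⊢ <;> omega)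

lemma Tm_Pt_mem {n d : ℕ} (hd : n < d) (t : ℂ) :
    Tm n (fun _ => Pt n t) ∈ (Rlt n d).map (rho n) := by
  have : (fun _ : Fin n => Pt n t) = (fun _ => t • wv n 1 0) + (fun _ => wv n 0 1) := rfl
  rw [this, MultilinearMap.map_add_univ]
  refine Submodule.sum_mem _ fun s _ => ?_
  have h1 : s.piecewise (fun _ : Fin n => t • wv n 1 0) (fun _ => wv n 0 1) =
      s.piecewise (fun i => (fun _ => t) i • (s.piecewise (fun _ : Fin n => wv n 1 0) (fun _ => wv n 0 1)) i)
        (s.piecewise (fun _ : Fin n => wv n 1 0) (fun _ => wv n 0 1)) := by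
    ext i : 1
    by_cases hi : i ∈ s <;> simp [hi]
  rw [h1, MultilinearMap.map_piecewise_smul]
  refine Submodule.smul_mem _ _ ⟨mon (s.piecewise (fun _ => (1, 0)) (fun _ => (0, 1))), mon_mem_Rlt ?_, ?_⟩
  · refine lt_of_le_of_lt (le_of_eq ?_) hd
    unfold deg
    have : ∀ i, sd (s.piecewise (fun _ => ((1, 0) : ℕ × ℕ)) (fun _ => (0, 1)) i) = 1 := by
      intro i
      by_cases hi : i ∈ s <;> simp [hi, sd]
    simp [this]
  · rw [rho_mon]
    congr 1
    ext i : 1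
    by_cases hi : i ∈ s <;> simp [hi]

lemma even_alt_mem {n d : ℕ} (hd : n < d) {u : Ln n} (hu : Alt u)
    (hs : ∀ κ i, ¬ Even (κ i : ℕ) → u κ = 0) : u ∈ (Rlt n d).map (rho n) := by
  set V : Matrix (Fin (n + 1)) (Fin (n + 1)) ℂ := Matrix.vandermonde (fun t => ((t : ℕ) : ℂ)) with hV
  have hdet : IsUnit V.det := by
    rw [isUnit_iff_ne_zero, hV, Matrix.det_vandermonde_ne_zero_iff]
    intro a b hab
    ext
    simpa using hab
  set a : Fin (n + 1) → ℂ := fun m => u (kapE n m.rev) / ck n m.rev with ha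
  set c := Matrix.vecMul a V⁻¹ with hc
  have hcV : Matrix.vecMul c V = a := by
    rw [hc, Matrix.vecMul_vecMul, Matrix.nonsing_inv_mul _ hdet, Matrix.vecMul_one]
  have : u = ∑ t : Fin (n + 1), c t • Tm n (fun _ => Pt n ((t : ℕ) : ℂ)) := by
    refine Alt.ext hu (Alt.sum _ fun t _ => (Tm_Pt_alt _).smul _) fun κ hκ => ?_
    by_cases ho : ∀ i, Even (κ i : ℕ)
    · obtain ⟨k, rfl⟩ := eq_kapE hκ ho
      have h1 := congrFun hcV k.rev
      simp only [Matrix.vecMul, dotProduct, hV, Matrix.vandermonde_apply, ha, Fin.rev_rev] at h1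
      rw [eq_div_iff ck_ne] at h1
      rw [← h1, Finset.sum_mul, Finset.sum_apply]
      refine Finset.sum_congr rfl fun t _ => ?_
      rw [Pi.smul_apply, smul_eq_mul, Tm_Pt_kapE]
      have : ((k.rev : Fin (n + 1)) : ℕ) = n - k := by rw [Fin.val_rev]; omega
      rw [this]; ring
    · push Not at ho
      obtain ⟨i, hi⟩ := ho
      rw [hs κ i hi, Finset.sum_apply, Finset.sum_eq_zero]
      intro t _
      rw [Pi.smul_apply, Tm_Pt_supp _ i hi, smul_zero]
  rw [this]
  exact Submodule.sum_mem _ fun t _ => Submodule.smul_mem _ _ (Tm_Pt_mem hd _)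

lemma deg_e0 {n w : ℕ} (hn : 0 < n) : deg (e0 n w) = n + 2 := by
  unfold deg
  rw [← Finset.add_sum_erase _ _ (Finset.mem_univ (⟨0, hn⟩ : Fin n))]
  rw [Finset.sum_congr rfl (g := fun _ => 1)]
  · simp [e0, sd]; omega
  · intro i hi
    have : (i : ℕ) ≠ 0 := fun h => Finset.ne_of_mem_erase hi (Fin.ext h)
    unfold e0
    rw [if_neg this]
    split_ifs <;> rfl

lemma gw_mem_Jn {n w : ℕ} (hn : 0 < n) : gw n w ∈ Jn n := by
  rw [mem_Jn]
  intro d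
  unfold gw
  rw [comp_Sy, deg_e0 hn]
  split_ifs with h
  · refine even_alt_mem (by omega) (rho_alt (bAct_Sy _)) fun κ i hi => ?_
    unfold Sy
    rw [map_sum, Finset.sum_apply, Finset.sum_eq_zero]
    intro σ _
    apply rho_supp i
    have := e0_odd (w := w) (σ.symm i)
    rw [Nat.not_even_iff_odd] at hi ⊢
    exact (this.add_odd hi).add_one
  · rw [map_zero]; exact zero_mem _

end DiagB

namespace DiagB
set_option linter.unusedSimpArgs false
set_option linter.flexible false

/-- Elementary vectors. -/
noncomputable def Ev {n : ℕ} (m : Fin (2 * n + 1)) (j : Fin n) : Vn n := Pi.single m (Pi.single j 1)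

lemma Vn_mem {n : ℕ} (S : Submodule ℂ (Vn n)) (f : Vn n) (h : ∀ m j, f m j ≠ 0 → Ev m j ∈ S) :
    f ∈ S := by
  have : f = ∑ m, ∑ j, f m j • Ev m j := by
    ext m j
    simp only [Finset.sum_apply, Pi.smul_apply, Ev]
    rw [Finset.sum_eq_single_of_mem m (Finset.mem_univ _),
      Finset.sum_eq_single_of_mem j (Finset.mem_univ _)]
    · simp
    · intro j' _ hj; simp [Pi.single_apply, hj.symm]
    · intro m' _ hm
      apply Finset.sum_eq_zero
      intro j' _
      simp [Pi.single_apply, hm.symm]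
  rw [this]
  refine Submodule.sum_mem _ fun m _ => Submodule.sum_mem _ fun j _ => ?_
  by_cases h0 : f m j = 0
  · rw [h0, zero_smul]; exact zero_mem _
  · exact Submodule.smul_mem _ _ (h m j h0)

/-- The set of site vectors. -/
def Ws (n : ℕ) : Set (Vn n) := {v | ∃ a b, v = wv n a b}

lemma Ev_mem {n : ℕ} (r : ℕ) : ∀ (j : Fin n), n - 1 - (j : ℕ) = r → ∀ m, Ev m j ∈ Submodule.span ℂ (Ws n) := by
  induction r using Nat.strong_induction_on with
  | _ r ih =>
  intro j hj m
  have hc : yc n (2 * j + 1) (2 * j + 1) ≠ 0 := by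
    unfold yc
    rw [Finset.prod_ne_zero_iff]
    intro t ht
    rw [Finset.mem_range] at ht
    exact yv_ne (by omega) (by omega)
  have h1 : wv n m (2 * j + 1) - yc n (2 * j + 1) (2 * j + 1) • Ev m j ∈ Submodule.span ℂ (Ws n) := by
    apply Vn_mem
    intro m' j' hne
    by_cases hlt : (j : ℕ) < j'
    · exact ih (n - 1 - (j' : ℕ)) (by omega) j' rfl m'
    · exfalso
      apply hne
      simp only [Pi.sub_apply, Pi.smul_apply, smul_eq_mul, wv, Ev]
      by_cases hjj : j' = j
      · subst hjj
        by_cases hm : m' = m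
        · subst hm; rw [if_pos (by omega)]; simp
        · have : (m' : ℕ) ≠ m := fun h => hm (Fin.ext h)
          rw [if_neg (by omega)]
          simp [Pi.single_apply, hm]
      · have : (j' : ℕ) ≠ j := fun h => hjj (Fin.ext h)
        rw [yc_zero_of_lt _ _ _ (by omega)]
        have h2 : (Pi.single m (Pi.single j (1 : ℂ)) : Vn n) m' j' = 0 := by
          by_cases hm : m' = m
          · subst hm; simp [Pi.single_apply, hjj]
          · simp [Pi.single_apply, hm]
        rw [h2]; simp
  have h2 : wv n m (2 * j + 1) ∈ Submodule.span ℂ (Ws n) := Submodule.subset_span ⟨_, _, rfl⟩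
  have h3 := Submodule.smul_mem _ (yc n (2 * j + 1) (2 * j + 1))⁻¹ (Submodule.sub_mem _ h2 h1)
  rwa [sub_sub_cancel, smul_smul, inv_mul_cancel₀ hc, one_smul] at h3

lemma span_Ws {n : ℕ} : Submodule.span ℂ (Ws n) = ⊤ := by
  rw [eq_top_iff]
  intro f _
  exact Vn_mem _ f fun m j _ => Ev_mem _ j rfl m

lemma Tm_mem_range {n : ℕ} (s : Finset (Fin n)) : ∀ P : Fin n → Vn n, (∀ i, i ∉ s → P i ∈ Ws n) →
    Tm n P ∈ LinearMap.range (rho n) := by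
  induction s using Finset.induction_on with
  | empty =>
    intro P hP
    choose a b hab using fun i => hP i (by simp)
    refine ⟨mon (fun i => (a i, b i)), ?_⟩
    rw [rho_mon]
    congr 1
    ext i : 1
    exact (hab i).symm
  | insert i s his ih =>
    intro P hP
    have key : ∀ v ∈ Submodule.span ℂ (Ws n), Tm n (Function.update P i v) ∈ LinearMap.range (rho n) := by
      intro v hv
      induction hv using Submodule.span_induction with
      | mem x hx =>
        apply ih
        intro k hk
        by_cases hki : k = i
        · subst hki; simpa using hx
        · rw [Function.update_of_ne hki]
          exact hP k (by simp [hki, hk])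
      | zero => rw [MultilinearMap.map_update_zero]; exact zero_mem _
      | add x y _ _ hx hy => rw [MultilinearMap.map_update_add]; exact add_mem hx hy
      | smul c x _ hx => rw [MultilinearMap.map_update_smul]; exact Submodule.smul_mem _ _ hx
    have := key (P i) (by rw [span_Ws]; trivial)
    rwa [Function.update_eq_self] at this

lemma Tm_Ev {n : ℕ} (κ : Fin n → Fin (2 * n + 1)) : Tm n (fun i => Ev (κ i) i) = Pi.single κ 1 := by
  ext κ'
  rw [Tm_apply]
  have : (Matrix.of fun i j => (Ev (κ i) i : Vn n) (κ' i) j) =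
      Matrix.diagonal (fun i => if κ' i = κ i then (1 : ℂ) else 0) := by
    ext i j
    simp only [Matrix.of_apply, Ev, Matrix.diagonal_apply]
    by_cases h1 : κ' i = κ i
    · by_cases h2 : i = j
      · subst h2; simp [h1]
      · have : j ≠ i := fun h => h2 h.symm
        simp [h1, h2, Pi.single_apply, this]
    · simp [h1, Pi.single_apply]
  rw [this, Matrix.det_diagonal]
  by_cases h : κ' = κ
  · subst h; simp
  · rw [Pi.single_eq_of_ne h]
    obtain ⟨i, hi⟩ := Function.ne_iff.1 h
    apply Finset.prod_eq_zero (Finset.mem_univ i)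
    simp [hi]

lemma rho_surj {n : ℕ} : LinearMap.range (rho n) = ⊤ := by
  rw [eq_top_iff]
  intro u _
  have : u = ∑ κ, u κ • (Pi.single κ 1 : Ln n) := by
    ext κ
    simp [Finset.sum_apply, Pi.single_apply]
  rw [this]
  refine Submodule.sum_mem _ fun κ _ => Submodule.smul_mem _ _ ?_
  rw [← Tm_Ev]
  exact Tm_mem_range Finset.univ _ (by simp)

lemma finrank_Jn {n : ℕ} [Module.Finite ℂ (Rn n ⧸ Jn n)] :
    (2 * n + 1) ^ n ≤ Module.finrank ℂ (Rn n ⧸ Jn n) := by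
  obtain ⟨κ, a, ha, hspan, hli⟩ := exists_linearIndependent' ℂ
    (fun e : Ex n => (Ideal.Quotient.mkₐ ℂ (Jn n)) (mon e))
  have htop : Submodule.span ℂ (Set.range fun e : Ex n => (Ideal.Quotient.mkₐ ℂ (Jn n)) (mon e)) = ⊤ := by
    rw [eq_top_iff]
    intro q _
    obtain ⟨f, rfl⟩ := Ideal.Quotient.mkₐ_surjective ℂ (Jn n) q
    have hf : f ∈ Submodule.span ℂ (Set.range (mon : Ex n → Rn n)) := by rw [span_mon]; trivial
    have := Submodule.mem_map_of_mem (f := (Ideal.Quotient.mkₐ ℂ (Jn n)).toLinearMap) hf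
    rw [Submodule.map_span, ← Set.range_comp] at this
    exact this
  let b : Module.Basis κ ℂ (Rn n ⧸ Jn n) := Module.Basis.mk hli (by rw [hspan, htop])
  have : Finite κ := Module.Finite.finite_basis b
  have : Fintype κ := Fintype.ofFinite κ
  rw [Module.finrank_eq_card_basis b]
  set Cs : Submodule ℂ (Rn n) := Submodule.span ℂ (Set.range fun k => mon (a k)) with hCs
  have hmono : ∀ k, mon (a k) ∈ Cs := fun k => Submodule.subset_span ⟨k, rfl⟩
  have key : ∀ d, ∀ e : Ex n, deg e = d → rho n (mon e) ∈ Cs.map (rho n) := by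
    intro d
    induction d using Nat.strong_induction_on with
    | _ d ih =>
    intro e he
    have hlt : (Rlt n d).map (rho n) ≤ Cs.map (rho n) := by
      rw [Rlt, Submodule.map_span, Submodule.span_le]
      rintro _ ⟨_, ⟨e', he', rfl⟩, rfl⟩
      exact ih _ he' e' rfl
    set c := b.repr (Ideal.Quotient.mkₐ ℂ (Jn n) (mon e)) with hc
    have hJ : mon e - ∑ k, c k • mon (a k) ∈ Jn n := by
      rw [← Ideal.Quotient.eq_zero_iff_mem, ← Ideal.Quotient.mkₐ_eq_mk ℂ, map_sub, map_sum, sub_eq_zero]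
      conv_lhs => rw [← b.sum_repr (Ideal.Quotient.mkₐ ℂ (Jn n) (mon e))]
      refine Finset.sum_congr rfl fun k _ => ?_
      rw [map_smul, ← hc]
      simp [b]
    have h1 := hlt (mem_Jn.1 hJ d)
    rw [map_sub, comp_mon, if_pos he, map_sub] at h1
    refine (Submodule.sub_mem_iff_left _ ?_).1 h1
    refine Submodule.mem_map_of_mem ?_
    rw [map_sum]
    refine Submodule.sum_mem _ fun k _ => ?_
    rw [map_smul, comp_mon]
    refine Submodule.smul_mem _ _ ?_
    split_ifs
    · exact hmono k
    · exact zero_mem _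
  have hT : Submodule.span ℂ (Set.range fun k => rho n (mon (a k))) = ⊤ := by
    have h1 : Cs.map (rho n) = Submodule.span ℂ (Set.range fun k => rho n (mon (a k))) := by
      rw [hCs, Submodule.map_span, ← Set.range_comp]; rfl
    rw [← h1, eq_top_iff, ← rho_surj, LinearMap.range_eq_map, ← span_mon, Submodule.map_span,
      Submodule.span_le]
    rintro _ ⟨_, ⟨e, rfl⟩, rfl⟩
    exact key _ e rfl
  have h2 := finrank_range_le_card (R := ℂ) (fun k => rho n (mon (a k)))
  rw [Set.finrank, hT, finrank_top] at h2
  simpa using h2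

end DiagB

namespace DiagB
set_option linter.unusedSimpArgs false
set_option linter.flexible false

lemma eps_sq (u : ℤˣ) : (((u : ℤ) : ℂ)) ^ 2 = 1 := by
  rcases Int.units_eq_one_or u with h | h <;> simp [h]

lemma integral_var {n : ℕ} (s : Fin n → Fin n ⊕ Fin n)
    (hs : ∀ ε σ i, bAct n ε σ (X (s i)) = ((ε i : ℤ) : ℂ) • X (s (σ i))) (i : Fin n) :
    IsIntegral ℂ (Ideal.Quotient.mk (diagIdeal n) (X (s i))) := by
  apply IsIntegral.of_pow (n := 2) (by norm_num)
  set P : Polynomial (Rn n) := ∏ j, (Polynomial.X - Polynomial.C (X (s j) ^ 2)) with hP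
  have hmonic : P.Monic := Polynomial.monic_prod_of_monic _ _ fun j _ => Polynomial.monic_X_sub_C _
  have hinv : ∀ ε σ, P.map (bAct n ε σ : Rn n →+* Rn n) = P := by
    intro ε σ
    rw [hP, Polynomial.map_prod]
    refine Fintype.prod_equiv σ _ _ fun j => ?_
    have hj : bAct n ε σ (X (s j) ^ 2) = X (s (σ j)) ^ 2 := by
      rw [map_pow, hs, smul_pow, eps_sq, one_smul]
    rw [Polynomial.map_sub, Polynomial.map_X, Polynomial.map_C, ← hj]
    rfl
  have hco : ∀ k, Ideal.Quotient.mk (diagIdeal n) (P.coeff k) =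
      algebraMap ℂ (Rn n ⧸ diagIdeal n) (constantCoeff (P.coeff k)) := by
    intro k
    have h1 : algebraMap ℂ (Rn n ⧸ diagIdeal n) (constantCoeff (P.coeff k)) =
        Ideal.Quotient.mk (diagIdeal n) (C (constantCoeff (P.coeff k))) := rfl
    rw [h1, Ideal.Quotient.eq]
    apply Ideal.subset_span
    refine ⟨fun ε σ => ?_, by simp⟩
    have h2 : bAct n ε σ (P.coeff k) = P.coeff k := by
      conv_rhs => rw [← hinv ε σ, Polynomial.coeff_map]
      rfl
    rw [map_sub, h2, ← algebraMap_eq, AlgHom.commutes]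
  have hmap : P.map (Ideal.Quotient.mk (diagIdeal n)) =
      (P.map constantCoeff).map (algebraMap ℂ (Rn n ⧸ diagIdeal n)) := by
    ext k
    rw [Polynomial.coeff_map, Polynomial.coeff_map, Polynomial.coeff_map, hco]
  refine ⟨P.map constantCoeff, hmonic.map _, ?_⟩
  rw [← Polynomial.eval_map, ← hmap, ← map_pow, Polynomial.eval_map, Polynomial.eval₂_hom]
  have : P.eval (X (s i) ^ 2) = 0 := by
    rw [hP, Polynomial.eval_prod]
    apply Finset.prod_eq_zero (Finset.mem_univ i)
    simp
  rw [this, map_zero]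

lemma finite_quot {n : ℕ} : Module.Finite ℂ (Rn n ⧸ diagIdeal n) := by
  have hIntegral : Algebra.IsIntegral ℂ (Rn n ⧸ diagIdeal n) := by
    constructor
    intro q
    obtain ⟨f, rfl⟩ := Ideal.Quotient.mk_surjective q
    induction f using MvPolynomial.induction_on with
    | C a => exact isIntegral_algebraMap (R := ℂ) (A := Rn n ⧸ diagIdeal n) (x := a)
    | add p q hp hq => rw [map_add]; exact hp.add hq
    | mul_X p v hp =>
      rw [map_mul]
      refine hp.mul ?_
      rcases v with i | i
      · exact integral_var Sum.inl (fun ε σ i => by simp [bAct]) i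
      · exact integral_var Sum.inr (fun ε σ i => by simp [bAct]) i
  have hft : Algebra.FiniteType ℂ (Rn n ⧸ diagIdeal n) :=
    Algebra.FiniteType.of_surjective (Ideal.Quotient.mkₐ ℂ (diagIdeal n))
      (Ideal.Quotient.mkₐ_surjective ℂ (diagIdeal n))
  exact Algebra.IsIntegral.finite

lemma main_bound (n : ℕ) (hn : 4 ≤ n) :
    (2 * n + 1) ^ n + n * (n - 5) ≤ Module.finrank ℂ (Rn n ⧸ diagIdeal n) := by
  have hfin : Module.Finite ℂ (Rn n ⧸ diagIdeal n) := finite_quot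
  set q : (Rn n ⧸ diagIdeal n) →ₗ[ℂ] (Rn n ⧸ Jn n) :=
    (Ideal.Quotient.factorₐ ℂ (diagIdeal_le_Jn (n := n))).toLinearMap with hq
  have hqs : Function.Surjective q := Ideal.Quotient.factor_surjective diagIdeal_le_Jn
  have hfinJ : Module.Finite ℂ (Rn n ⧸ Jn n) := Module.Finite.of_surjective q hqs
  have hrk := LinearMap.finrank_range_add_finrank_ker q
  rw [LinearMap.range_eq_top.2 hqs, finrank_top] at hrk
  have hJ := finrank_Jn (n := n)
  let z : Fin n × Fin (n - 5) → Rn n := fun p => X (Sum.inl p.1) * gw n (p.2 + 3)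
  have hz : ∀ p, Ideal.Quotient.mk (diagIdeal n) (z p) ∈ LinearMap.ker q := by
    intro p
    rw [LinearMap.mem_ker]
    change Ideal.Quotient.mk (Jn n) (z p) = 0
    rw [Ideal.Quotient.eq_zero_iff_mem]
    exact Ideal.mul_mem_left _ _ (gw_mem_Jn (by omega))
  let zk : Fin n × Fin (n - 5) → LinearMap.ker q := fun p => ⟨_, hz p⟩
  have hli : LinearIndependent ℂ zk := by
    rw [Fintype.linearIndependent_iff]
    intro c hc p
    have h1 : ∑ r, c r • z r ∈ diagIdeal n := by
      rw [← Ideal.Quotient.eq_zero_iff_mem, ← Ideal.Quotient.mkₐ_eq_mk ℂ, map_sum]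
      have h2 := congrArg Subtype.val hc
      rw [Submodule.coe_sum] at h2
      simpa [zk] using h2
    have h3 := Phi_Ipow p.1 (w := p.2 + 3) (by omega) (by omega) _ (diagIdeal_le h1)
    rw [map_sum, Finset.sum_eq_single_of_mem p (Finset.mem_univ _)] at h3
    · rw [map_smul, smul_eq_mul, mul_eq_zero] at h3
      exact h3.resolve_right (Phi_gw_eq (by omega) (by omega) _)
    · intro r _ hr
      rw [map_smul, Phi_gw_ne (by omega), smul_zero]
      by_contra hcon
      push Not at hcon
      apply hr
      ext
      · rw [hcon.1]
      · have := hcon.2; omega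
  have hcard := hli.fintype_card_le_finrank
  rw [Fintype.card_prod, Fintype.card_fin, Fintype.card_fin] at hcard
  omega

end DiagB

/-- For every `n ≥ 4`, the error term `ε(W(Bₙ)) = dim_ℂ R_W − (2n+1)ⁿ` satisfies
`4·ε(W(Bₙ)) ≥ n(n−6)`. -/
theorem four_mul_error_ge (n : ℕ) (hn : 4 ≤ n) :
    (n : ℤ) * ((n : ℤ) - 6) ≤
      4 * ((Module.finrank ℂ (MvPolynomial (Fin n ⊕ Fin n) ℂ ⧸ diagIdeal n) : ℤ)
        - (2 * n + 1 : ℤ) ^ n) := by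
  have h := DiagB.main_bound n hn
  have h' : ((2 * n + 1 : ℤ) ^ n) + n * ((n - 5 : ℕ) : ℤ) ≤
      (Module.finrank ℂ (MvPolynomial (Fin n ⊕ Fin n) ℂ ⧸ diagIdeal n) : ℤ) := by
    exact_mod_cast h
  have h0 : (0 : ℤ) ≤ ((n - 5 : ℕ) : ℤ) := by positivity
  have h5 : (n : ℤ) - 6 ≤ 4 * ((n - 5 : ℕ) : ℤ) := by omega
  have h6 : (n : ℤ) * ((n : ℤ) - 6) ≤ n * (4 * ((n - 5 : ℕ) : ℤ)) :=
    mul_le_mul_of_nonneg_left h5 (by positivity)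
  linarith
end

section
/- Let n be a positive integer divisible by 4. Then the complex dimension of the χ'-isotypic component of the diagonal coinvariant ring R_W of W(B_n) satisfies dim_ℂ (R_W)^{χ'} ≥ (n+1) + n(n-4)/4. -/
open MvPolynomial

/-- The χ′-isotypic component of the diagonal coinvariant ring `R_W = R/I_W`, where
`χ'(ε,σ) = ∏ᵢ εᵢ` (trivial on permutations, `−1` on each sign change): it is the image
in `R/I_W` of those polynomials `g` with `(ε,σ)·g − χ'(ε,σ)·g ∈ I_W` for all
`(ε,σ) ∈ W(Bₙ)`. -/
noncomputable def chiIsotypic (n : ℕ) :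
    Submodule ℂ (MvPolynomial (Fin n ⊕ Fin n) ℂ ⧸ diagIdeal n) :=
  (⨅ (ε : Fin n → ℤˣ) (σ : Equiv.Perm (Fin n)),
    Submodule.comap
      ((bAct n ε σ).toLinearMap - (((∏ i, ε i : ℤˣ) : ℤ) : ℂ) • LinearMap.id)
      (Submodule.restrictScalars ℂ (diagIdeal n))).map
    (Ideal.Quotient.mkₐ ℂ (diagIdeal n)).toLinearMap

namespace ChiB

abbrev V := ℕ × ℕ
abbrev B := MvPolynomial V ℂ

noncomputable def lowD (v : V) : Derivation ℂ B B :=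
  mkDerivation ℂ (fun u : V => if v.1 ≤ u.1 ∧ v.2 ≤ u.2 then X (u.1 - v.1, u.2 - v.2) else 0)

lemma lowD_X (v u : V) : lowD v (X u) =
    if v.1 ≤ u.1 ∧ v.2 ≤ u.2 then (X (u.1 - v.1, u.2 - v.2) : B) else 0 := by
  simp [lowD, mkDerivation_X]

lemma pderiv_lowD (u v : V) (F : B) :
    pderiv u (lowD v F) = lowD v (pderiv u F) + pderiv (u + v) F := by
  have h : ⁅(pderiv u : Derivation ℂ B B), lowD v⁆ = pderiv (u + v) := by
    apply MvPolynomial.derivation_ext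
    intro w
    rw [Derivation.commutator_apply, lowD_X, pderiv_X, pderiv_X]
    obtain ⟨a, b⟩ := u
    obtain ⟨r, s⟩ := v
    obtain ⟨p, q⟩ := w
    have h0 : lowD (r, s) (Pi.single (M := fun _ => B) (a, b) 1 (p, q)) = 0 := by
      by_cases h : (p, q) = (a, b)
      · rw [h]; simp
      · rw [Pi.single_eq_of_ne h]; simp
    rw [h0, sub_zero]
    by_cases h : (p, q) = ((a, b) + (r, s) : V)
    · rw [h, Pi.single_eq_same]
      simp
    · rw [Pi.single_eq_of_ne h]
      split_ifs with h1
      · rw [pderiv_X, Pi.single_eq_of_ne]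
        intro h2
        apply h
        simp only [Prod.mk_add_mk, Prod.mk.injEq] at h2 h1 ⊢
        omega
      · simp
  have := congrArg (fun d : Derivation ℂ B B => d F) h
  simp only [Derivation.commutator_apply] at this
  rw [← this]; ring

lemma constantCoeff_lowD (v : V) (F : B) : constantCoeff (lowD v F) = 0 := by
  induction F using MvPolynomial.induction_on with
  | C a => simp
  | add p q hp hq => simp [hp, hq]
  | mul_X p w hp =>
    rw [Derivation.leibniz, lowD_X]
    simp only [smul_eq_mul, map_add, map_mul, hp]
    split_ifs <;> simp

/-- iterated partial derivative at zero -/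
noncomputable def W : (n : ℕ) → (Fin n → V) → B →ₗ[ℂ] ℂ
  | 0, _ => (Algebra.linearMap ℂ ℂ).comp ((MvPolynomial.aeval (fun _ => (0:ℂ)) : B →ₐ[ℂ] ℂ).toLinearMap)
  | n + 1, d => (W n (Fin.tail d)).comp (pderiv (d 0) : Derivation ℂ B B).toLinearMap

lemma W_zero (d : Fin 0 → V) (F : B) : W 0 d F = constantCoeff F := by
  simp [W, MvPolynomial.aeval_zero']

lemma W_succ (n : ℕ) (d : Fin (n+1) → V) (F : B) :
    W (n+1) d F = W n (Fin.tail d) (pderiv (d 0) F) := rfl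

lemma W_lowD (n : ℕ) (d : Fin n → V) (v : V) (F : B) :
    W n d (lowD v F) = ∑ i, W n (Function.update d i (d i + v)) F := by
  induction n generalizing F with
  | zero => simp [W_zero, constantCoeff_lowD]
  | succ n ih =>
    rw [W_succ, pderiv_lowD, map_add, ih, Fin.sum_univ_succ, add_comm]
    have h1 : W (n+1) (Function.update d 0 (d 0 + v)) F =
        W n (Fin.tail d) (pderiv (d 0 + v) F) := by
      rw [W_succ, Fin.tail_update_zero]; simp
    rw [h1]
    congr 1
    refine Finset.sum_congr rfl fun i _ => ?_
    rw [W_succ, Fin.tail_update_succ]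
    simp [Fin.tail, Function.update, Fin.succ_ne_zero, eq_comm]

lemma W_coeff (n : ℕ) (d : Fin n → V) : ∃ c : ℕ, 0 < c ∧ ∀ F : B,
    W n d F = c * coeff (∑ i, Finsupp.single (d i) 1) F := by
  induction n with
  | zero => exact ⟨1, one_pos, fun F => by simp [W_zero, constantCoeff_eq]⟩
  | succ n ih =>
    obtain ⟨c, hc, h⟩ := ih (Fin.tail d)
    refine ⟨c * ((∑ i, Finsupp.single (Fin.tail d i) 1 : V →₀ ℕ) (d 0) + 1), by positivity, fun F => ?_⟩
    rw [W_succ, h, coeff_pderiv, Fin.sum_univ_succ]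
    simp only [Fin.tail]
    rw [add_comm (Finsupp.single (d 0) 1)]
    push_cast
    ring
end ChiB

namespace ChiB
abbrev R (n : ℕ) := MvPolynomial (Fin n ⊕ Fin n) ℂ

/-- exponent vector of `∏ xᵢ^(dᵢ)₁ yᵢ^(dᵢ)₂` -/
noncomputable def ex {n : ℕ} (d : Fin n → V) : (Fin n ⊕ Fin n) →₀ ℕ :=
  Finsupp.equivFunOnFinite.symm (Sum.elim (fun i => (d i).1) (fun i => (d i).2))

def unex {n : ℕ} (m : (Fin n ⊕ Fin n) →₀ ℕ) : Fin n → V :=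
  fun i => (m (Sum.inl i), m (Sum.inr i))

lemma ex_unex {n : ℕ} (m : (Fin n ⊕ Fin n) →₀ ℕ) : ex (unex m) = m := by
  ext j; cases j <;> simp [ex, unex]
lemma unex_ex {n : ℕ} (d : Fin n → V) : unex (ex d) = d := by
  ext j <;> simp [ex, unex]

noncomputable def zm {n : ℕ} (d : Fin n → V) : R n := monomial (ex d) 1

lemma zm_eq {n : ℕ} (d : Fin n → V) :
    zm d = ∏ i, (X (Sum.inl i) ^ (d i).1 * X (Sum.inr i) ^ (d i).2 : R n) := by
  rw [zm, monomial_eq, Finsupp.prod_fintype _ _ (by simp), Fintype.prod_sum_type,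
    Finset.prod_mul_distrib]
  simp [ex]

lemma zm_mul {n : ℕ} (d e : Fin n → V) : zm d * zm e = zm (d + e) := by
  simp only [zm_eq, ← Finset.prod_mul_distrib]
  refine Finset.prod_congr rfl fun i _ => ?_
  simp only [Pi.add_apply, Prod.fst_add, Prod.snd_add]; ring

lemma zm_zero {n : ℕ} : zm (0 : Fin n → V) = 1 := by simp [zm_eq]

lemma bAct_zm {n : ℕ} (ε : Fin n → ℤˣ) (σ : Equiv.Perm (Fin n)) (d : Fin n → V) :
    bAct n ε σ (zm d) = (∏ i, (((ε i : ℤ) : ℂ)) ^ ((d i).1 + (d i).2)) • zm (d ∘ σ.symm) := by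
  rw [zm_eq, zm_eq, map_prod, ← Equiv.prod_comp σ (fun i => (X (Sum.inl i) ^ ((d ∘ σ.symm) i).1 *
    X (Sum.inr i) ^ ((d ∘ σ.symm) i).2 : R n)), ← Finset.prod_smul]
  refine Finset.prod_congr rfl fun i _ => ?_
  simp only [bAct, map_mul, map_pow, aeval_X, Sum.elim_inl, Sum.elim_inr, Function.comp,
    Equiv.symm_apply_apply, smul_pow, smul_mul_smul_comm, pow_add]

/-- polarized power sum -/
noncomputable def ps (n : ℕ) (v : V) : R n := ∑ i, zm (Pi.single i v)

/-- power sum ideal -/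
noncomputable def J (n : ℕ) : Ideal (R n) :=
  Ideal.span {p | ∃ v : V, v ≠ 0 ∧ Even (v.1 + v.2) ∧ p = ps n v}

noncomputable def sy {n : ℕ} (d : Fin n → V) : R n := ∑ σ : Equiv.Perm (Fin n), zm (d ∘ σ)

lemma sy_comp {n : ℕ} (d : Fin n → V) (τ : Equiv.Perm (Fin n)) : sy (d ∘ τ) = sy d := by
  unfold sy
  rw [← Equiv.sum_comp (Equiv.mulLeft τ) (fun σ => zm (d ∘ σ))]
  rfl

lemma ps_mul_sy {n : ℕ} (v : V) (d : Fin n → V) :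
    ps n v * sy d = ∑ i, sy (d + Pi.single i v) := by
  simp only [ps, sy, Finset.sum_mul_sum]
  rw [Finset.sum_comm]
  conv_rhs => rw [Finset.sum_comm]
  refine Finset.sum_congr rfl fun σ _ => ?_
  rw [← Equiv.sum_comp σ (fun i => zm ((d + (Pi.single i v : Fin n → V)) ∘ σ))]
  refine Finset.sum_congr rfl fun i _ => ?_
  rw [zm_mul]
  congr 1
  funext k
  simp [Pi.single_apply, add_comm]

lemma sy_mem {n : ℕ} (N : ℕ) : ∀ d : Fin n → V, (Finset.univ.filter (fun i => d i ≠ 0)).card = N →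
    d ≠ 0 → (∀ i, Even ((d i).1 + (d i).2)) → sy d ∈ J n := by
  induction N using Nat.strong_induction_on with
  | _ N ih =>
  intro d hN hd he
  obtain ⟨i0, hi0⟩ : ∃ i, d i ≠ 0 := by
    by_contra! h
    exact hd (funext h)
  set d' := Function.update d i0 0 with hd'
  have hmem : ps n (d i0) * sy d' ∈ J n :=
    Ideal.mul_mem_right _ _ (Ideal.subset_span ⟨d i0, hi0, he i0, rfl⟩)
  rw [ps_mul_sy, ← Finset.sum_filter_add_sum_filter_not _ (fun i => d' i = 0)] at hmem
  have h2 : ∑ i ∈ Finset.univ.filter (fun i => ¬ d' i = 0), sy (d' + Pi.single i (d i0)) ∈ J n := by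
    refine Ideal.sum_mem _ fun i hi => ?_
    have hi : d' i ≠ 0 := by simpa using hi
    have hii : i ≠ i0 := by
      rintro rfl; exact hi (by simp [hd'])
    refine ih _ ?_ _ rfl ?_ ?_
    · rw [← hN]
      apply Finset.card_lt_card
      rw [Finset.ssubset_iff_of_subset]
      · refine ⟨i0, by simpa using hi0, ?_⟩
        simp [hd', Pi.single_apply, hii.symm]
      · intro k hk
        simp only [Finset.mem_filter, Finset.mem_univ, true_and] at hk ⊢
        intro hk0
        apply hk
        have : k ≠ i := by
          rintro rfl
          apply hi; simp [hd', hii, hk0]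
        by_cases h : k = i0
        · exact absurd (h ▸ hk0) hi0
        · simp [hd', h, this, hk0]
    · intro h
      have := congrFun h i
      simp only [Pi.add_apply, Pi.single_eq_same, Pi.zero_apply] at this
      apply hi
      have h1 := congrArg Prod.fst this
      have h2 := congrArg Prod.snd this
      simp at h1 h2
      ext
      · simp [h1]
      · simp [h2]
    · intro k
      have e1 : Even ((d' k).1 + (d' k).2) := by
        by_cases h : k = i0
        · simp [hd', h]
        · simpa [hd', h] using he k
      by_cases hk : k = i
      · subst hk
        have := e1.add (he i0)
        simpa [add_add_add_comm] using this
      · simpa [Pi.single_apply, hk] using e1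
  have h1 := (Ideal.add_mem_iff_left _ h2).1 hmem
  have h3 : ∀ i ∈ Finset.univ.filter (fun i => d' i = 0), sy (d' + Pi.single i (d i0)) = sy d := by
    intro i hi
    have hi : d' i = 0 := by simpa using hi
    rw [← sy_comp d (Equiv.swap i i0)]
    congr 1
    funext k
    by_cases hk : k = i
    · subst hk; simp [hi]
    · by_cases hk0 : k = i0
      · subst hk0
        simp only [Function.comp, Equiv.swap_apply_right]
        have : d i = 0 := by rwa [hd', Function.update_of_ne (Ne.symm hk)] at hi
        simp [hd', this, hk]
      · simp [Equiv.swap_apply_of_ne_of_ne hk hk0, hk, hd', hk0]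
  rw [Finset.sum_congr rfl h3, Finset.sum_const, nsmul_eq_mul] at h1
  set c := (Finset.univ.filter (fun i => d' i = 0)).card with hc
  have hc0 : (c : ℂ) ≠ 0 := by
    rw [hc, Nat.cast_ne_zero, ← Nat.pos_iff_ne_zero]
    exact Finset.card_pos.2 ⟨i0, by simp [hd']⟩
  have := (J n).mul_mem_left (C ((c:ℂ)⁻¹)) h1
  rw [← mul_assoc, ← map_natCast (C : ℂ →+* R n), ← map_mul, inv_mul_cancel₀ hc0] at this
  simpa using this

noncomputable def rey (n : ℕ) : R n →ₗ[ℂ] R n :=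
  ∑ ε : Fin n → ℤˣ, ∑ σ : Equiv.Perm (Fin n), (bAct n ε σ).toLinearMap

lemma rey_zm {n : ℕ} (d : Fin n → V) : rey n (zm d) =
    (∏ i, (∑ e : ℤˣ, (((e : ℤ) : ℂ)) ^ ((d i).1 + (d i).2))) • sy d := by
  rw [Finset.prod_univ_sum, Finset.sum_smul]
  simp only [rey, LinearMap.sum_apply, AlgHom.toLinearMap_apply, bAct_zm, Fintype.piFinset_univ]
  refine Finset.sum_congr rfl fun ε _ => ?_
  rw [← Finset.smul_sum]
  congr 1
  unfold sy
  exact Equiv.sum_comp (Equiv.inv (Equiv.Perm (Fin n))) (fun σ => zm (d ∘ σ))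

lemma rey_mem {n : ℕ} (d : Fin n → V) (hd : d ≠ 0) : rey n (zm d) ∈ J n := by
  rw [rey_zm]
  by_cases h : ∀ i, Even ((d i).1 + (d i).2)
  · rw [smul_eq_C_mul]
    exact Ideal.mul_mem_left _ _ (sy_mem _ d rfl hd h)
  · push Not at h
    obtain ⟨i, hi⟩ := h
    rw [Finset.prod_eq_zero (Finset.mem_univ i), zero_smul]
    · exact zero_mem _
    · rw [UnitsInt.univ]
      simp [(Nat.not_even_iff_odd.1 hi).neg_one_pow]

lemma diagIdeal_le (n : ℕ) : diagIdeal n ≤ J n := by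
  rw [diagIdeal, Ideal.span_le]
  rintro f ⟨hf, h0⟩
  have h1 : rey n f = ((Fintype.card (Fin n → ℤˣ) * Fintype.card (Equiv.Perm (Fin n)) : ℕ) : ℂ) • f := by
    simp only [rey, LinearMap.sum_apply, AlgHom.toLinearMap_apply, hf, Finset.sum_const, Finset.card_univ,
      ← mul_smul]
    rw [Nat.cast_smul_eq_nsmul]
  have h2 : rey n f ∈ J n := by
    have : f = ∑ m ∈ f.support, coeff m f • zm (unex m) := by
      conv_lhs => rw [f.as_sum]
      refine Finset.sum_congr rfl fun m _ => ?_
      rw [zm, ex_unex, smul_monomial]; simp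
    rw [this, map_sum]
    refine Ideal.sum_mem _ fun m hm => ?_
    rw [map_smul, smul_eq_C_mul]
    refine Ideal.mul_mem_left _ _ (rey_mem _ ?_)
    intro h
    have : m = 0 := by
      rw [← ex_unex m, h]
      ext j; cases j <;> simp [ex]
    rw [this, mem_support_iff, ← constantCoeff_eq] at hm
    exact hm h0
  rw [h1, smul_eq_C_mul] at h2
  have hc : ((Fintype.card (Fin n → ℤˣ) * Fintype.card (Equiv.Perm (Fin n)) : ℕ) : ℂ) ≠ 0 := by
    rw [Nat.cast_ne_zero]
    exact Nat.mul_ne_zero Fintype.card_ne_zero Fintype.card_ne_zero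
  have := (J n).mul_mem_left (C (((Fintype.card (Fin n → ℤˣ) * Fintype.card (Equiv.Perm (Fin n)) : ℕ) : ℂ)⁻¹)) h2
  rw [← mul_assoc, ← map_mul, inv_mul_cancel₀ hc] at this
  simpa using this

lemma sy_isotypic {n : ℕ} (d : Fin n → V) (hd : ∀ i, Odd ((d i).1 + (d i).2)) :
    Ideal.Quotient.mkₐ ℂ (diagIdeal n) (sy d) ∈ chiIsotypic n := by
  refine Submodule.mem_map.2 ⟨sy d, ?_, rfl⟩
  simp only [Submodule.mem_iInf, Submodule.mem_comap]
  intro ε σ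
  have : ((bAct n ε σ).toLinearMap - (((∏ i, ε i : ℤˣ) : ℤ) : ℂ) • LinearMap.id : R n →ₗ[ℂ] R n) (sy d) = 0 := by
    simp only [LinearMap.sub_apply, LinearMap.smul_apply, LinearMap.id_apply, AlgHom.toLinearMap_apply]
    rw [sub_eq_zero]
    have h1 : ∀ τ : Equiv.Perm (Fin n), bAct n ε σ (zm (d ∘ τ)) =
        (((∏ i, ε i : ℤˣ) : ℤ) : ℂ) • zm (d ∘ (τ * σ⁻¹ : Equiv.Perm (Fin n))) := by
      intro τ
      rw [bAct_zm]
      congr 1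
      push_cast
      refine Finset.prod_congr rfl fun i _ => ?_
      obtain ⟨k, hk⟩ := hd (τ i)
      simp only [Function.comp]
      rw [hk, pow_succ, pow_mul]
      have : (((ε i : ℤ) : ℂ)) ^ 2 = 1 := by
        rcases Int.units_eq_one_or (ε i) with h | h <;> simp [h]
      rw [this]; simp
    simp only [sy, map_sum, h1, ← Finset.smul_sum]
    congr 1
    exact Equiv.sum_comp (Equiv.mulRight σ⁻¹) (fun σ => zm (d ∘ σ))
  rw [this]
  exact zero_mem _

lemma finite_quot (n : ℕ) : Module.Finite ℂ (R n ⧸ diagIdeal n) := by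
  have key : ∀ c : Fin n → R n, (∀ ε σ i, bAct n ε σ (c i) = c (σ i)) → ∀ i,
      IsIntegral ℂ (Ideal.Quotient.mkₐ ℂ (diagIdeal n) (c i)) := by
    intro c hc i
    let g : Polynomial (R n) := ∏ j, (Polynomial.X - Polynomial.C (c j))
    have hg : g.Monic := Polynomial.monic_prod_of_monic _ _ fun j _ => Polynomial.monic_X_sub_C _
    have hinv : ∀ ε σ, g.map (bAct n ε σ : R n →+* R n) = g := by
      intro ε σ
      simp only [g, Polynomial.map_prod, Polynomial.map_sub, Polynomial.map_X, Polynomial.map_C]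
      simp only [RingHom.coe_coe, hc]
      exact Equiv.prod_comp σ (fun j => Polynomial.X - Polynomial.C (c j))
    have hmap : g.map (Ideal.Quotient.mk (diagIdeal n)) =
        (g.map (constantCoeff : R n →+* ℂ)).map (algebraMap ℂ (R n ⧸ diagIdeal n)) := by
      ext k
      simp only [Polynomial.coeff_map]
      have : algebraMap ℂ (R n ⧸ diagIdeal n) (constantCoeff (g.coeff k)) =
        Ideal.Quotient.mk (diagIdeal n) (C (constantCoeff (g.coeff k))) := rfl
      rw [this, Ideal.Quotient.eq]
      refine Ideal.subset_span ⟨fun ε σ => ?_, by simp⟩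
      rw [map_sub]
      congr 1
      · have := congrArg (fun p => Polynomial.coeff p k) (hinv ε σ)
        simpa [Polynomial.coeff_map] using this
      · exact (bAct n ε σ).commutes _
    refine ⟨g.map constantCoeff, hg.map _, ?_⟩
    rw [← Polynomial.eval_map, ← hmap]
    have : g.eval (c i) = 0 := by
      simp only [g, Polynomial.eval_prod]
      exact Finset.prod_eq_zero (Finset.mem_univ i) (by simp)
    have h2 := Polynomial.eval_map_apply (f := Ideal.Quotient.mk (diagIdeal n)) (p := g) (c i)
    rw [this, map_zero] at h2
    exact h2
  have sq : ∀ e : ℤˣ, (((e : ℤ) : ℂ)) ^ 2 = 1 := fun e => by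
    rcases Int.units_eq_one_or e with h | h <;> simp [h]
  have hX : ∀ j, IsIntegral ℂ (Ideal.Quotient.mkₐ ℂ (diagIdeal n) (X j)) := by
    intro j
    apply IsIntegral.of_pow (n := 2) two_pos
    rw [← map_pow]
    cases j with
    | inl i => exact key (fun i => X (Sum.inl i) ^ 2) (fun ε σ i => by simp [bAct, smul_pow, sq]) i
    | inr i => exact key (fun i => X (Sum.inr i) ^ 2) (fun ε σ i => by simp [bAct, smul_pow, sq]) i
  have : Algebra.IsIntegral ℂ (R n ⧸ diagIdeal n) := by
    constructor
    intro q
    obtain ⟨p, rfl⟩ := Ideal.Quotient.mkₐ_surjective ℂ (diagIdeal n) q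
    induction p using MvPolynomial.induction_on with
    | C a => exact isIntegral_algebraMap (x := a)
    | add p q hp hq => rw [map_add]; exact hp.add hq
    | mul_X p w hp => rw [map_mul]; exact hp.mul (hX w)
  have : Algebra.FiniteType ℂ (R n ⧸ diagIdeal n) := inferInstance
  exact Algebra.IsIntegral.finite
end ChiB

namespace ChiB
noncomputable def gA : B := X (1, 0)
noncomputable def gB : B := X (0, 1)
/-- cubic part at `(-β, α)` -/
noncomputable def g3 : B :=
  X (0,3) * gA ^ 3 - X (1,2) * gA ^ 2 * gB + X (2,1) * gA * gB ^ 2 - X (3,0) * gB ^ 3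
noncomputable def g5 : B :=
  X (0,5) * gA ^ 5 - X (1,4) * gA ^ 4 * gB + X (2,3) * gA ^ 3 * gB ^ 2
    - X (3,2) * gA ^ 2 * gB ^ 3 + X (4,1) * gA * gB ^ 4 - X (5,0) * gB ^ 5
noncomputable def gx : B := X (1,2) * gA ^ 2 - 2 * X (2,1) * gA * gB + 3 * X (3,0) * gB ^ 2
noncomputable def gy : B := 3 * X (0,3) * gA ^ 2 - 2 * X (1,2) * gA * gB + X (2,1) * gB ^ 2
noncomputable def h5 : B := gA * g5 - gx * g3
noncomputable def h5' : B := gB * g5 - gy * g3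

lemma even_cases (v : V) (hv : v ≠ 0) (he : Even (v.1 + v.2)) :
    v = (2,0) ∨ v = (1,1) ∨ v = (0,2) ∨ v = (4,0) ∨ v = (3,1) ∨ v = (2,2) ∨ v = (1,3) ∨ v = (0,4)
      ∨ 6 ≤ v.1 + v.2 := by
  obtain ⟨a, b⟩ := v
  obtain ⟨k, hk⟩ := he
  simp only [ne_eq, Prod.mk_eq_zero, Prod.mk.injEq] at *
  omega

lemma lowD_X_big (v u : V) (h : u.1 + u.2 < v.1 + v.2) : lowD v (X u) = 0 := by
  rw [lowD_X, if_neg]; omega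

lemma lowD_gA (v : V) (hv : v ≠ 0) (he : Even (v.1 + v.2)) : lowD v gA = 0 := by
  rcases even_cases v hv he with h | h | h | h | h | h | h | h | h
  all_goals first | (subst h; simp [gA, lowD_X]) | exact lowD_X_big _ _ (by simp; omega)
lemma lowD_gB (v : V) (hv : v ≠ 0) (he : Even (v.1 + v.2)) : lowD v gB = 0 := by
  rcases even_cases v hv he with h | h | h | h | h | h | h | h | h
  all_goals first | (subst h; simp [gB, lowD_X]) | exact lowD_X_big _ _ (by simp; omega)

lemma lowD_g3 (v : V) (hv : v ≠ 0) (he : Even (v.1 + v.2)) : lowD v g3 = 0 := by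
  have hA := lowD_gA v hv he
  have hB := lowD_gB v hv he
  simp only [g3, map_add, map_sub, Derivation.leibniz, Derivation.leibniz_pow, hA, hB, smul_eq_mul]
  rcases even_cases v hv he with h | h | h | h | h | h | h | h | h
  all_goals first
    | (subst h; simp [lowD_X, ← gA.eq_def, ← gB.eq_def]; try ring1)
    | (repeat rw [lowD_X_big _ _ (by simp; omega)]
       simp)

lemma lowD_h5 (v : V) (hv : v ≠ 0) (he : Even (v.1 + v.2)) : lowD v h5 = 0 := by
  have hA := lowD_gA v hv he
  have hB := lowD_gB v hv he
  have h3 := lowD_g3 v hv he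
  have h2 : lowD v (2 : B) = 0 := by simpa using (lowD v).map_natCast 2
  have h3' : lowD v (3 : B) = 0 := by simpa using (lowD v).map_natCast 3
  simp only [h5, g5, gx, map_add, map_sub, Derivation.leibniz, Derivation.leibniz_pow, hA, hB, h3, h2, h3',
    smul_eq_mul]
  rcases even_cases v hv he with h | h | h | h | h | h | h | h | h
  all_goals first
    | (subst h; simp [lowD_X, ← gA.eq_def, ← gB.eq_def]; try first | (simp only [g3]; ring1) | (right; ring1))
    | (repeat rw [lowD_X_big _ _ (by simp; omega)]
       simp)

lemma h5'_rel : gA * h5' = gB * h5 - 3 * g3 ^ 2 := by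
  simp only [h5', h5, g5, gx, gy, g3]; ring

lemma lowD_h5' (v : V) (hv : v ≠ 0) (he : Even (v.1 + v.2)) : lowD v h5' = 0 := by
  have h := congrArg (lowD v) h5'_rel
  have h3' : lowD v (3 : B) = 0 := by simpa using (lowD v).map_natCast 3
  simp only [map_sub, Derivation.leibniz, Derivation.leibniz_pow, lowD_gA v hv he, lowD_gB v hv he,
    lowD_g3 v hv he, lowD_h5 v hv he, h3', smul_zero, smul_eq_mul, mul_zero, sub_zero, add_zero] at h
  exact (mul_eq_zero.mp h).resolve_left (X_ne_zero _)
end ChiB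

namespace ChiB

noncomputable def phi (n : ℕ) (F : B) : R n →ₗ[ℂ] ℂ :=
  (basisMonomials (Fin n ⊕ Fin n) ℂ).constr ℂ (fun m => W n (unex m) F)

lemma phi_zm {n : ℕ} (F : B) (d : Fin n → V) : phi n F (zm d) = W n d F := by
  have := (basisMonomials (Fin n ⊕ Fin n) ℂ).constr_basis ℂ (fun m => W n (unex m) F) (ex d)
  rw [coe_basisMonomials, unex_ex] at this
  exact this

/-- `F` is killed by the lowering derivations. -/
def Killed (F : B) : Prop := ∀ v : V, v ≠ 0 → Even (v.1 + v.2) → lowD v F = 0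

lemma phi_ps_mul {n : ℕ} (F : B) (v : V) (hF : lowD v F = 0) (r : R n) :
    phi n F (ps n v * r) = 0 := by
  have hz : ∀ d : Fin n → V, phi n F (ps n v * zm d) = 0 := by
    intro d
    have := W_lowD n d v F
    rw [hF, map_zero] at this
    rw [this, ps, Finset.sum_mul, map_sum]
    refine Finset.sum_congr rfl fun i _ => ?_
    rw [zm_mul, phi_zm]
    congr 2
    funext k
    by_cases hk : k = i
    · subst hk; simp [add_comm]
    · simp [hk]
  induction r using MvPolynomial.induction_on' with
  | monomial m a =>
    have : (monomial m a : R n) = a • zm (unex m) := by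
      rw [zm, ex_unex, smul_monomial]; simp
    rw [this, mul_smul_comm, map_smul, hz, smul_zero]
  | add p q hp hq => rw [mul_add, map_add, hp, hq, add_zero]

lemma phi_diag {n : ℕ} (F : B) (hF : Killed F) (r : R n) (hr : r ∈ diagIdeal n) :
    phi n F r = 0 := by
  replace hr := diagIdeal_le n hr
  unfold J at hr
  induction hr using Submodule.span_induction with
  | mem x h =>
    obtain ⟨v, h1, h2, rfl⟩ := h
    simpa using phi_ps_mul F v (hF v h1 h2) (1 : R n)
  | zero => simp
  | add x y _ _ hx hy => rw [map_add, hx, hy, add_zero]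
  | smul a x hx _ =>
    rw [smul_eq_mul]
    clear * - hF hx
    revert a
    induction hx using Submodule.span_induction with
    | mem x h =>
      obtain ⟨v, h1, h2, rfl⟩ := h
      intro a
      rw [mul_comm]; exact phi_ps_mul F v (hF v h1 h2) a
    | zero => simp
    | add x y _ _ hx hy => intro a; rw [mul_add, map_add, hx, hy, add_zero]
    | smul b x _ ih => intro a; rw [smul_eq_mul, ← mul_assoc]; exact ih _

noncomputable def psi (n : ℕ) (F : B) (hF : Killed F) : Module.Dual ℂ (chiIsotypic n) :=
  ((((diagIdeal n).restrictScalars ℂ).liftQ (phi n F) (fun r hr => phi_diag F hF r hr)).comp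
    (Submodule.Quotient.restrictScalarsEquiv ℂ (diagIdeal n)).symm.toLinearMap).comp
      (chiIsotypic n).subtype

lemma psi_sy {n : ℕ} (F : B) (hF : Killed F) (d : Fin n → V)
    (hd : ∀ i, Odd ((d i).1 + (d i).2)) :
    psi n F hF ⟨_, sy_isotypic d hd⟩ = ∑ σ : Equiv.Perm (Fin n), W n (d ∘ σ) F := by
  have : psi n F hF ⟨_, sy_isotypic d hd⟩ = phi n F (sy d) := rfl
  rw [this, sy, map_sum]
  simp only [phi_zm]

lemma exists_mon (n : ℕ) (m : V →₀ ℕ) (hm : m.degree = n) :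
    ∃ d : Fin n → V, m = ∑ i, Finsupp.single (d i) 1 := by
  subst hm
  induction m using Finsupp.induction_linear with
  | zero => exact ⟨fun _ => 0, by simp⟩
  | add f g hf hg =>
    obtain ⟨d, hd⟩ := hf
    obtain ⟨e, he⟩ := hg
    refine ⟨fun i => Fin.append d e (Fin.cast (by simp) i), ?_⟩
    rw [← Equiv.sum_comp (finCongr (by simp : f.degree + g.degree = (f + g).degree)), Fin.sum_univ_add]
    simp only [finCongr_apply, Fin.cast_cast, Fin.cast_eq_self, Fin.append_left, Fin.append_right]
    rw [← hd, ← he]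
  | single a b =>
    refine ⟨fun _ => a, ?_⟩
    simp

def oddV : Set V := {v | Odd (v.1 + v.2)}

lemma card_le_finrank {n : ℕ} {ι : Type} [Fintype ι] (F : ι → B) (hLI : LinearIndependent ℂ F)
    (hK : ∀ i, Killed (F i)) (hH : ∀ i, (F i).IsHomogeneous n)
    (hS : ∀ i, F i ∈ supported ℂ oddV) :
    Fintype.card ι ≤ Module.finrank ℂ (chiIsotypic n) := by
  have := finite_quot n
  rw [← Subspace.dual_finrank_eq]
  have hli : LinearIndependent ℂ (fun i => psi n (F i) (hK i)) := by
    rw [Fintype.linearIndependent_iff] at hLI ⊢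
    intro g hg
    apply hLI
    set G := ∑ i, g i • F i with hG
    have hGH : G.IsHomogeneous n := by
      have : G ∈ homogeneousSubmodule V ℂ n :=
        Submodule.sum_mem _ fun i _ => Submodule.smul_mem _ _ (hH i)
      exact this
    have hGS : G ∈ supported ℂ oddV :=
      Subalgebra.sum_mem _ fun i _ => Subalgebra.smul_mem _ (hS i) _
    ext m
    rw [coeff_zero]
    by_contra hne
    have hdeg : m.degree = n := by
      have := hGH hne
      rw [Finsupp.degree_eq_weight_one]; exact this
    obtain ⟨d, hd⟩ := exists_mon n m hdeg
    have hodd : ∀ i, Odd ((d i).1 + (d i).2) := by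
      intro i
      have h1 := mem_supported.1 hGS
      apply h1
      rw [Finset.mem_coe, mem_vars_iff_mem_support]
      refine ⟨m, mem_support_iff.2 hne, ?_⟩
      rw [hd, Finsupp.mem_support_iff, Finsupp.finsetSum_apply, ← Nat.pos_iff_ne_zero]
      exact Finset.sum_pos' (fun _ _ => Nat.zero_le _) ⟨i, Finset.mem_univ _, by simp⟩
    have h1 := congrArg (fun f : Module.Dual ℂ (chiIsotypic n) => f ⟨_, sy_isotypic d hodd⟩) hg
    simp only [LinearMap.sum_apply, LinearMap.smul_apply, LinearMap.zero_apply] at h1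
    rw [Finset.sum_congr rfl fun i _ => by rw [psi_sy (F i) (hK i) d hodd, Finset.smul_sum]] at h1
    rw [Finset.sum_comm] at h1
    have h2 : ∀ σ : Equiv.Perm (Fin n), ∑ i, g i • W n (d ∘ σ) (F i) = W n (d ∘ σ) G := by
      intro σ; simp [hG, map_sum]
    simp only [h2] at h1
    choose c hc0 hc using fun σ : Equiv.Perm (Fin n) => W_coeff n (d ∘ σ)
    have h3 : ∀ σ : Equiv.Perm (Fin n), ∑ i, Finsupp.single ((d ∘ σ) i) 1 = m := by
      intro σ
      rw [hd]
      exact Equiv.sum_comp σ (fun i => (Finsupp.single (d i) 1 : V →₀ ℕ))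
    simp only [hc, h3, ← Finset.sum_mul] at h1
    rcases mul_eq_zero.1 h1 with h4 | h4
    · rw [← Nat.cast_sum, Nat.cast_eq_zero] at h4
      have := Finset.sum_pos (fun σ _ => hc0 σ) (Finset.univ_nonempty (α := Equiv.Perm (Fin n)))
      omega
    · exact hne h4
  exact hli.fintype_card_le_finrank

/-! evaluation -/
noncomputable def ev : B →ₐ[ℂ] MvPolynomial (Fin 4) ℂ :=
  aeval (fun v : V => if v = (1,0) then X 0 else if v = (0,1) then X 1 else if v = (0,3) then X 2
    else if v = (0,5) then X 3 else 0)

noncomputable def m4 (p q a b : ℕ) : MvPolynomial (Fin 4) ℂ := X 0 ^ p * X 1 ^ q * X 2 ^ a * X 3 ^ b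
noncomputable def e4 (p q a b : ℕ) : Fin 4 →₀ ℕ := Finsupp.equivFunOnFinite.symm ![p, q, a, b]

lemma m4_eq (p q a b : ℕ) : m4 p q a b = monomial (e4 p q a b) 1 := by
  rw [monomial_eq, Finsupp.prod_fintype _ _ (by simp), Fin.prod_univ_four]
  simp [e4, m4]

lemma e4_inj {p q a b p' q' a' b' : ℕ} (h : e4 p q a b = e4 p' q' a' b') :
    p = p' ∧ q = q' ∧ a = a' ∧ b = b' := by
  have := Finsupp.equivFunOnFinite.symm.injective h
  simpa using this

lemma ev_gA : ev gA = X 0 := by simp [ev, gA]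
lemma ev_gB : ev gB = X 1 := by simp [ev, gB]
lemma ev_g3 : ev g3 = X 0 ^ 3 * X 2 := by
  simp only [g3, map_sub, map_add, map_mul, map_pow, ev_gA, ev_gB]
  simp [ev]; ring
lemma ev_h5 : ev h5 = X 0 ^ 6 * X 3 := by
  simp only [h5, g5, gx, map_sub, map_add, map_mul, map_pow, ev_gA, ev_gB, ev_g3]
  simp [ev]; ring
lemma ev_h5' : ev h5' = X 1 * X 0 ^ 5 * X 3 - 3 * X 0 ^ 5 * X 2 ^ 2 := by
  have h3 : ev 3 = 3 := map_ofNat ev 3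
  simp only [h5', g5, gy, map_sub, map_add, map_mul, map_pow, ev_gA, ev_gB, ev_g3, h3]
  simp [ev]; ring

lemma hom_gA : gA.IsHomogeneous 1 := isHomogeneous_X _ _
lemma hom_gB : gB.IsHomogeneous 1 := isHomogeneous_X _ _
lemma hom_term (v : V) (p q : ℕ) : (X v * gA ^ p * gB ^ q).IsHomogeneous (1 + p + q) := by
  simpa using ((isHomogeneous_X ℂ v).mul (hom_gA.pow p)).mul (hom_gB.pow q)
lemma hom_cterm (c : ℂ) (v : V) (p q : ℕ) : (C c * (X v * gA ^ p * gB ^ q)).IsHomogeneous (1 + p + q) := by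
  simpa using (isHomogeneous_C V c).mul (hom_term v p q)

lemma hom_g3 : g3.IsHomogeneous 4 := by
  have := (((hom_term (0,3) 3 0).sub (hom_term (1,2) 2 1)).add (hom_term (2,1) 1 2)).sub (hom_term (3,0) 0 3)
  simpa [g3] using this
lemma hom_g5 : g5.IsHomogeneous 6 := by
  have := (((((hom_term (0,5) 5 0).sub (hom_term (1,4) 4 1)).add (hom_term (2,3) 3 2)).sub
    (hom_term (3,2) 2 3)).add (hom_term (4,1) 1 4)).sub (hom_term (5,0) 0 5)
  simpa [g5] using this
lemma hom_gx : gx.IsHomogeneous 3 := by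
  have := ((hom_cterm 1 (1,2) 2 0).sub (hom_cterm 2 (2,1) 1 1)).add (hom_cterm 3 (3,0) 0 2)
  have h : gx = C 1 * (X (1,2) * gA ^ 2 * gB ^ 0) - C 2 * (X (2,1) * gA ^ 1 * gB ^ 1)
    + C 3 * (X (3,0) * gA ^ 0 * gB ^ 2) := by
    simp only [gx, map_one, map_ofNat]; ring
  rw [h]; exact this
lemma hom_gy : gy.IsHomogeneous 3 := by
  have := ((hom_cterm 3 (0,3) 2 0).sub (hom_cterm 2 (1,2) 1 1)).add (hom_cterm 1 (2,1) 0 2)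
  have h : gy = C 3 * (X (0,3) * gA ^ 2 * gB ^ 0) - C 2 * (X (1,2) * gA ^ 1 * gB ^ 1)
    + C 1 * (X (2,1) * gA ^ 0 * gB ^ 2) := by
    simp only [gy, map_one, map_ofNat]; ring
  rw [h]; exact this
lemma hom_h5 : h5.IsHomogeneous 7 := (hom_gA.mul hom_g5).sub (hom_gx.mul hom_g3)
lemma hom_h5' : h5'.IsHomogeneous 7 := (hom_gB.mul hom_g5).sub (hom_gy.mul hom_g3)

lemma sup_X (v : V) (h : v ∈ oddV) : (X v : B) ∈ supported ℂ oddV := by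
  rw [X_mem_supported]; exact h
lemma sup_gA : gA ∈ supported ℂ oddV := sup_X _ (by unfold oddV; simp)
lemma sup_gB : gB ∈ supported ℂ oddV := sup_X _ (by unfold oddV; simp)
lemma sup_g3 : g3 ∈ supported ℂ oddV := by
  have := sup_gA
  have := sup_gB
  unfold g3
  repeat' first
    | with_reducible assumption
    | with_reducible refine sub_mem ?_ ?_
    | with_reducible refine add_mem ?_ ?_
    | with_reducible refine mul_mem ?_ ?_
    | with_reducible refine pow_mem ?_ _
    | with_reducible exact ofNat_mem _ _
  all_goals exact sup_X _ (show Odd _ by decide)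
lemma sup_h5 : h5 ∈ supported ℂ oddV := by
  have := sup_gA
  have := sup_gB
  have := sup_g3
  unfold h5 g5 gx
  repeat' first
    | with_reducible assumption
    | with_reducible refine sub_mem ?_ ?_
    | with_reducible refine add_mem ?_ ?_
    | with_reducible refine mul_mem ?_ ?_
    | with_reducible refine pow_mem ?_ _
    | with_reducible exact ofNat_mem _ _
  all_goals exact sup_X _ (show Odd _ by decide)
lemma sup_h5' : h5' ∈ supported ℂ oddV := by
  have := sup_gA
  have := sup_gB
  have := sup_g3
  unfold h5' g5 gy
  repeat' first
    | with_reducible assumption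
    | with_reducible refine sub_mem ?_ ?_
    | with_reducible refine add_mem ?_ ?_
    | with_reducible refine mul_mem ?_ ?_
    | with_reducible refine pow_mem ?_ _
    | with_reducible exact ofNat_mem _ _
  all_goals exact sup_X _ (show Odd _ by decide)

/-- index set: triples `((b, a), k)` with `4a + 7b + k ≤ 4m`, `b ≤ 2`. -/
def T (m : ℕ) : Finset (Σ _ : ℕ × ℕ, ℕ) :=
  (Finset.range 3 ×ˢ Finset.range (m + 1)).sigma
    (fun p => Finset.range (4 * m + 1 - 4 * p.2 - 7 * p.1))

lemma card_T (m : ℕ) : (T m).card = ∑ a ∈ Finset.range (m + 1), ((4 * a + 1) + (4 * a - 6) + (4 * a - 13)) := by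
  rw [T, Finset.card_sigma, Finset.sum_product_right]
  rw [← Finset.sum_range_reflect]
  refine Finset.sum_congr rfl fun a ha => ?_
  have := Finset.mem_range.1 ha
  simp only [Finset.card_range, Finset.sum_range_succ, Finset.sum_range_zero]
  omega

lemma le_card_T (m : ℕ) (hm : 2 ≤ m) : 4 * m ^ 2 ≤ (T m).card := by
  rw [card_T]
  rcases Nat.lt_or_ge m 3 with h | h
  · obtain rfl : m = 2 := by omega
    decide
  · induction m, h using Nat.le_induction with
    | base => decide
    | succ k hk ih =>
      have := ih (by omega)
      rw [Finset.sum_range_succ]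
      have : 4 * (k + 1) ^ 2 = 4 * k ^ 2 + 8 * k + 4 := by ring
      omega

noncomputable def Fm (m : ℕ) (t : Σ _ : ℕ × ℕ, ℕ) : B :=
  gA ^ (4 * m - 4 * t.1.2 - 7 * t.1.1 - t.2) * gB ^ t.2 * g3 ^ t.1.2 * h5 ^ t.1.1

lemma killed_mul {F G : B} (hF : Killed F) (hG : Killed G) : Killed (F * G) := by
  intro v h1 h2; rw [Derivation.leibniz, hF v h1 h2, hG v h1 h2]; simp
lemma killed_pow {F : B} (hF : Killed F) (k : ℕ) : Killed (F ^ k) := by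
  intro v h1 h2; rw [Derivation.leibniz_pow, hF v h1 h2]; simp

lemma killed_Fm (m : ℕ) (t) : Killed (Fm m t) :=
  killed_mul (killed_mul (killed_mul (killed_pow lowD_gA _) (killed_pow lowD_gB _))
    (killed_pow lowD_g3 _)) (killed_pow lowD_h5 _)

lemma mem_T {m : ℕ} {t : Σ _ : ℕ × ℕ, ℕ} (h : t ∈ T m) : 4 * t.1.2 + 7 * t.1.1 + t.2 ≤ 4 * m := by
  simp only [T, Finset.mem_sigma, Finset.mem_range] at h
  omega

lemma hom_Fm (m : ℕ) (t) (h : t ∈ T m) : (Fm m t).IsHomogeneous (4 * m) := by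
  have := mem_T h
  have h2 := (((hom_gA.pow (4 * m - 4 * t.1.2 - 7 * t.1.1 - t.2)).mul (hom_gB.pow t.2)).mul
    (hom_g3.pow t.1.2)).mul (hom_h5.pow t.1.1)
  have e : 1 * (4 * m - 4 * t.1.2 - 7 * t.1.1 - t.2) + 1 * t.2 + 4 * t.1.2 + 7 * t.1.1 = 4 * m := by omega
  rw [e] at h2
  exact h2

lemma sup_Fm (m : ℕ) (t) : Fm m t ∈ supported ℂ oddV :=
  mul_mem (mul_mem (mul_mem (pow_mem sup_gA _) (pow_mem sup_gB _)) (pow_mem sup_g3 _))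
    (pow_mem sup_h5 _)

lemma ev_Fm (m : ℕ) (t) (h : t ∈ T m) :
    ev (Fm m t) = m4 (4 * m - t.1.2 - t.1.1 - t.2) t.2 t.1.2 t.1.1 := by
  have := mem_T h
  have e : 4 * m - t.1.2 - t.1.1 - t.2 =
    (4 * m - 4 * t.1.2 - 7 * t.1.1 - t.2) + 3 * t.1.2 + 6 * t.1.1 := by omega
  rw [e]
  simp only [Fm, map_mul, map_pow, ev_gA, ev_gB, ev_g3, ev_h5, m4, mul_pow, ← pow_mul, pow_add]
  ring

noncomputable def Fx (m : ℕ) : B := gB ^ (4 * m - 7) * h5'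

lemma ev_Fx (m : ℕ) (hm : 2 ≤ m) :
    ev (Fx m) = m4 5 (4 * m - 6) 0 1 - 3 * m4 5 (4 * m - 7) 2 0 := by
  have e : 4 * m - 6 = (4 * m - 7) + 1 := by omega
  rw [e]
  simp only [Fx, map_mul, map_pow, ev_gB, ev_h5', m4]
  ring

lemma indep_of_coeff {ι : Type} [Fintype ι] (F : ι → B) (e : ι → (Fin 4 →₀ ℕ))
    (h1 : ∀ i, coeff (e i) (ev (F i)) ≠ 0) (h2 : ∀ i j, i ≠ j → coeff (e i) (ev (F j)) = 0) :
    LinearIndependent ℂ F := by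
  rw [Fintype.linearIndependent_iff]
  intro g hg i
  have := congrArg (fun p => coeff (e i) (ev p)) hg
  simp only [map_sum, map_smul, coeff_sum, coeff_smul, map_zero, coeff_zero] at this
  rw [Finset.sum_eq_single i (fun j _ hj => by rw [h2 i j hj.symm, smul_zero]) (by simp)] at this
  exact (mul_eq_zero.1 this).resolve_right (h1 i)

lemma bound_main (m : ℕ) : (T m).card ≤ Module.finrank ℂ (chiIsotypic (4 * m)) := by
  have := card_le_finrank (n := 4 * m) (ι := T m) (fun t => Fm m t.1)
    (indep_of_coeff _ (fun t => e4 (4 * m - t.1.1.2 - t.1.1.1 - t.1.2) t.1.2 t.1.1.2 t.1.1.1)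
      (fun t => by rw [ev_Fm _ _ t.2, m4_eq, coeff_monomial, if_pos rfl]; exact one_ne_zero)
      (fun s t hst => by
        rw [ev_Fm _ _ t.2, m4_eq, coeff_monomial, if_neg]
        intro h
        obtain ⟨-, h1, h2, h3⟩ := e4_inj h
        apply hst
        obtain ⟨⟨⟨b, a⟩, k⟩, hs⟩ := s
        obtain ⟨⟨⟨b', a'⟩, k'⟩, ht⟩ := t
        simp only at h1 h2 h3
        subst h1 h2 h3
        rfl))
    (fun t => killed_Fm _ _) (fun t => hom_Fm _ _ t.2) (fun t => sup_Fm _ _)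
  simpa using this

lemma bound_extra (m : ℕ) (hm : 2 ≤ m) :
    (T m).card + 1 ≤ Module.finrank ℂ (chiIsotypic (4 * m)) := by
  have h3 : (3 : MvPolynomial (Fin 4) ℂ) = C 3 := (map_ofNat C 3).symm
  have := card_le_finrank (n := 4 * m) (ι := Option (T m))
    (fun o => o.elim (Fx m) (fun t => Fm m t.1))
    (indep_of_coeff _ (fun o => o.elim (e4 5 (4 * m - 6) 0 1)
        (fun t => e4 (4 * m - t.1.1.2 - t.1.1.1 - t.1.2) t.1.2 t.1.1.2 t.1.1.1))
      (by
        rintro (_ | t)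
        · simp only [Option.elim_none]
          rw [ev_Fx _ hm, h3, coeff_sub, coeff_C_mul, m4_eq, m4_eq, coeff_monomial, coeff_monomial,
            if_pos rfl, if_neg]
          · simp
          · intro h; have := e4_inj h; omega
        · simp only [Option.elim_some]
          rw [ev_Fm _ _ t.2, m4_eq, coeff_monomial, if_pos rfl]; exact one_ne_zero)
      (by
        rintro (_ | s) (_ | t) hst
        · exact absurd rfl hst
        · simp only [Option.elim_some, Option.elim_none]
          rw [ev_Fm _ _ t.2, m4_eq, coeff_monomial, if_neg]
          intro h
          have := e4_inj h
          have := mem_T t.2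
          omega
        · simp only [Option.elim_some, Option.elim_none]
          rw [ev_Fx _ hm, h3, coeff_sub, coeff_C_mul, m4_eq, m4_eq, coeff_monomial, coeff_monomial,
            if_neg, if_neg]
          · simp
          · intro h
            have := e4_inj h
            have := mem_T s.2
            omega
          · intro h
            have := e4_inj h
            have := mem_T s.2
            omega
        · simp only [Option.elim_some]
          rw [ev_Fm _ _ t.2, m4_eq, coeff_monomial, if_neg]
          intro h
          obtain ⟨-, h1, h2, h3⟩ := e4_inj h
          apply hst
          obtain ⟨⟨⟨b, a⟩, k⟩, hs⟩ := s
          obtain ⟨⟨⟨b', a'⟩, k'⟩, ht⟩ := t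
          simp only at h1 h2 h3
          subst h1 h2 h3
          rfl))
    (by
      rintro (_ | t)
      · exact killed_mul (killed_pow lowD_gB _) lowD_h5'
      · exact killed_Fm _ _)
    (by
      rintro (_ | t)
      · have h := (hom_gB.pow (4 * m - 7)).mul hom_h5'
        have e : 1 * (4 * m - 7) + 7 = 4 * m := by omega
        rw [e] at h
        exact h
      · exact hom_Fm _ _ t.2)
    (by
      rintro (_ | t)
      · exact mul_mem (pow_mem sup_gB _) sup_h5'
      · exact sup_Fm _ _)
  simpa using this

end ChiB

/-- If `n` is a positive integer divisible by 4, then the χ′-isotypic component of the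
diagonal coinvariant ring of `W(Bₙ)` satisfies `dim_ℂ (R_W)^{χ'} ≥ (n+1) + n(n-4)/4`. -/
theorem dim_chi_isotypic_ge_of_four_dvd (n : ℕ) (hn : 0 < n) (h4 : 4 ∣ n) :
    ((n : ℤ) + 1) + (n : ℤ) * ((n : ℤ) - 4) / 4 ≤
      (Module.finrank ℂ (chiIsotypic n) : ℤ) := by
  obtain ⟨m, rfl⟩ := h4
  have hm : 1 ≤ m := by omega
  have e : ((4 * m : ℕ) : ℤ) * (((4 * m : ℕ) : ℤ) - 4) / 4 = 4 * (m : ℤ) ^ 2 - 4 * m := by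
    apply Int.ediv_eq_of_eq_mul_left (by norm_num)
    push_cast; ring
  rw [e]
  rcases Nat.lt_or_ge m 2 with h | h
  · obtain rfl : m = 1 := by omega
    have h1 := ChiB.bound_main 1
    have h2 : (ChiB.T 1).card = 6 := by rw [ChiB.card_T]; decide
    rw [h2] at h1
    have h3 : (6 : ℤ) ≤ (Module.finrank ℂ (chiIsotypic (4 * 1)) : ℤ) := by exact_mod_cast h1
    refine le_trans ?_ h3
    norm_num
  · have h1 := ChiB.bound_extra m h
    have h2 := ChiB.le_card_T m h
    have h3 : 4 * (m : ℤ) ^ 2 + 1 ≤ (Module.finrank ℂ (chiIsotypic (4 * m)) : ℤ) := by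
      exact_mod_cast (by omega : 4 * m ^ 2 + 1 ≤ Module.finrank ℂ (chiIsotypic (4 * m)))
    push_cast
    linarith
end

section
/- Let n be a positive integer congruent to 2 modulo 4. Then the complex dimension of the χ'-isotypic component of the diagonal coinvariant ring R_W of W(B_n) satisfies dim_ℂ (R_W)^{χ'} ≥ (n+1) + n(n-6)/4 (note n(n−6) is divisible by 4 when n ≡ 2 mod 4). -/
open MvPolynomial

/-! ### The coefficient ring and its derivations -/

/-- The ring of polynomial functions of the coefficients `s_{ij}` of a series in `x, y`. -/
abbrev CoefRing := MvPolynomial (ℕ × ℕ) ℂ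

/-- The derivation `s_{m} ↦ s_{m-a}`. -/
noncomputable def shiftDer (a : ℕ × ℕ) : Derivation ℂ CoefRing CoefRing :=
  mkDerivation ℂ (fun m => if a.1 ≤ m.1 ∧ a.2 ≤ m.2 then X (m.1 - a.1, m.2 - a.2) else 0)

theorem shiftDer_X (a m : ℕ × ℕ) : shiftDer a (X m) =
    if a.1 ≤ m.1 ∧ a.2 ≤ m.2 then X (m.1 - a.1, m.2 - a.2) else 0 := by
  simp [shiftDer, mkDerivation_X]

theorem constantCoeff_shiftDer (a : ℕ × ℕ) (G : CoefRing) :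
    constantCoeff (shiftDer a G) = 0 := by
  induction G using MvPolynomial.induction_on with
  | C c => simp
  | add p q hp hq => simp [hp, hq]
  | mul_X p m hp =>
    rw [Derivation.leibniz, shiftDer_X]
    split_ifs <;> simp [hp]

theorem pderiv_shiftDer (a e : ℕ × ℕ) (G : CoefRing) :
    pderiv e (shiftDer a G) = shiftDer a (pderiv e G) + pderiv (e + a) G := by
  have h : ⁅(pderiv e : Derivation ℂ CoefRing CoefRing), shiftDer a⁆ = (pderiv (e + a) : Derivation ℂ CoefRing CoefRing) := by
    apply MvPolynomial.derivation_ext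
    intro m
    rw [Derivation.commutator_apply, shiftDer_X, pderiv_X, pderiv_X]
    obtain ⟨m1, m2⟩ := m
    obtain ⟨a1, a2⟩ := a
    obtain ⟨e1, e2⟩ := e
    have h1 : shiftDer (a1, a2) (Pi.single (M := fun _ => CoefRing) (e1, e2) 1 (m1, m2)) = 0 := by
      by_cases h : (m1, m2) = (e1, e2)
      · rw [h]; simp
      · rw [Pi.single_eq_of_ne h]; simp
    rw [h1, sub_zero]
    split_ifs with h
    · rw [pderiv_X]
      simp only [Pi.single_apply, Prod.mk.injEq, Prod.mk_add_mk] at *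
      congr 1
      simp only [eq_iff_iff]
      omega
    · rw [map_zero, Pi.single_eq_of_ne]
      intro h'
      simp only [Prod.mk.injEq, Prod.mk_add_mk] at *
      omega
  rw [← h, Derivation.commutator_apply]
  ring

/-- Iterated partial derivatives. -/
noncomputable def iterD : (n : ℕ) → (Fin n → ℕ × ℕ) → CoefRing → CoefRing
  | 0, _, G => G
  | n + 1, e, G => pderiv (e 0) (iterD n (Fin.tail e) G)

theorem iterD_zero_right (n : ℕ) (e : Fin n → ℕ × ℕ) : iterD n e 0 = 0 := by
  induction n with
  | zero => rfl
  | succ n ih => simp [iterD, ih]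

theorem iterD_shiftDer (n : ℕ) (e : Fin n → ℕ × ℕ) (a : ℕ × ℕ) (G : CoefRing) :
    iterD n e (shiftDer a G) =
      shiftDer a (iterD n e G) + ∑ i, iterD n (Function.update e i (e i + a)) G := by
  induction n with
  | zero => simp [iterD]
  | succ n ih =>
    rw [Fin.sum_univ_succ]
    simp only [iterD, ih, map_add, pderiv_shiftDer, map_sum, Fin.tail_update_zero,
      Fin.tail_update_succ, Function.update_self]
    rw [add_assoc]
    congr 2

theorem coeff_iterD (n : ℕ) (e : Fin n → ℕ × ℕ) (d : ℕ × ℕ →₀ ℕ) :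
    ∃ c : ℕ, 0 < c ∧ ∀ G : CoefRing, coeff d (iterD n e G) =
      (c : ℂ) * coeff (d + ∑ i, Finsupp.single (e i) 1) G := by
  induction n generalizing d with
  | zero => exact ⟨1, one_pos, fun G => by simp [iterD]⟩
  | succ n ih =>
    obtain ⟨c, hc, h⟩ := ih (Fin.tail e) (d + Finsupp.single (e 0) 1)
    refine ⟨(d (e 0) + 1) * c, by positivity, fun G => ?_⟩
    rw [iterD, coeff_pderiv, h, Fin.sum_univ_succ, ← add_assoc]
    simp only [Fin.tail]
    push_cast
    ring

/-! ### The invariants `α, β, D, E` -/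

/-- The cubic invariant. -/
noncomputable def invD : CoefRing :=
  X (3, 0) * X (0, 1) ^ 3 - X (2, 1) * X (0, 1) ^ 2 * X (1, 0)
    + X (1, 2) * X (0, 1) * X (1, 0) ^ 2 - X (0, 3) * X (1, 0) ^ 3

/-- The quintic invariant. -/
noncomputable def invE : CoefRing :=
  X (0, 1) * (X (5, 0) * X (0, 1) ^ 5 - X (4, 1) * X (0, 1) ^ 4 * X (1, 0)
    + X (3, 2) * X (0, 1) ^ 3 * X (1, 0) ^ 2 - X (2, 3) * X (0, 1) ^ 2 * X (1, 0) ^ 3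
    + X (1, 4) * X (0, 1) * X (1, 0) ^ 4 - X (0, 5) * X (1, 0) ^ 5)
  - invD * (X (2, 1) * X (0, 1) ^ 2 - 2 * X (1, 2) * X (0, 1) * X (1, 0)
    + 3 * X (0, 3) * X (1, 0) ^ 2)

/-- An index `a` that is even and nonzero. -/
def EvenPos (a : ℕ × ℕ) : Prop := Even (a.1 + a.2) ∧ a ≠ 0

theorem shiftDer_X_of_lt (a m : ℕ × ℕ) (h : m.1 + m.2 < a.1 + a.2) : shiftDer a (X m) = 0 := by
  rw [shiftDer_X, if_neg]
  omega

theorem shiftDer_two (a : ℕ × ℕ) : shiftDer a (2 : CoefRing) = 0 := by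
  exact_mod_cast Derivation.map_natCast (shiftDer a) 2

theorem shiftDer_three (a : ℕ × ℕ) : shiftDer a (3 : CoefRing) = 0 := by
  exact_mod_cast Derivation.map_natCast (shiftDer a) 3

theorem EvenPos.cases {a : ℕ × ℕ} (h : EvenPos a) :
    a = (2, 0) ∨ a = (1, 1) ∨ a = (0, 2) ∨ a = (4, 0) ∨ a = (3, 1) ∨ a = (2, 2) ∨ a = (1, 3) ∨
      a = (0, 4) ∨ 6 ≤ a.1 + a.2 := by
  obtain ⟨a1, a2⟩ := a
  obtain ⟨⟨k, hk⟩, h2⟩ := h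
  simp only [ne_eq, Prod.mk_eq_zero, Prod.mk.injEq] at *
  omega

theorem shiftDer_invD (a : ℕ × ℕ) (h : EvenPos a) : shiftDer a invD = 0 := by
  rcases h.cases with rfl | rfl | rfl | rfl | rfl | rfl | rfl | rfl | h <;>
  simp only [invD, map_add, map_sub, Derivation.leibniz, Derivation.leibniz_pow, smul_eq_mul,
    nsmul_eq_mul]
  on_goal 9 =>
    simp (disch := (simp only []; omega)) [shiftDer_X_of_lt]
  all_goals
    simp [shiftDer_X]
  all_goals ring

theorem shiftDer_invE (a : ℕ × ℕ) (h : EvenPos a) : shiftDer a invE = 0 := by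
  have hD := shiftDer_invD a h
  rcases h.cases with rfl | rfl | rfl | rfl | rfl | rfl | rfl | rfl | h <;>
  simp only [invE, map_add, map_sub, Derivation.leibniz, Derivation.leibniz_pow, smul_eq_mul,
    nsmul_eq_mul, shiftDer_two, shiftDer_three, hD]
  on_goal 9 =>
    simp (disch := (simp only []; omega)) [shiftDer_X_of_lt]
  all_goals
    simp [shiftDer_X, invD]
  all_goals ring

/-- The invariant `α^i β^j D^k E^l`. -/
noncomputable def invF (i j k l : ℕ) : CoefRing :=
  X (1, 0) ^ i * X (0, 1) ^ j * invD ^ k * invE ^ l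

theorem shiftDer_invF (a : ℕ × ℕ) (h : EvenPos a) (i j k l : ℕ) :
    shiftDer a (invF i j k l) = 0 := by
  have h2 : 2 ≤ a.1 + a.2 := by
    rcases h.cases with rfl | rfl | rfl | rfl | rfl | rfl | rfl | rfl | h <;> omega
  have h10 : shiftDer a (X (1, 0)) = 0 := shiftDer_X_of_lt _ _ (by simp only []; omega)
  have h01 : shiftDer a (X (0, 1)) = 0 := shiftDer_X_of_lt _ _ (by simp only []; omega)
  simp [invF, Derivation.leibniz, Derivation.leibniz_pow, h10, h01, shiftDer_invD a h,
    shiftDer_invE a h]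

/-- Set all variables other than `s10, s01, s30, s50` to zero. -/
noncomputable def restr : CoefRing →ₐ[ℂ] CoefRing :=
  aeval (fun v => if v ∈ ({(1, 0), (0, 1), (3, 0), (5, 0)} : Finset (ℕ × ℕ)) then X v else 0)

theorem coeff_restr (G : CoefRing) (E : ℕ × ℕ →₀ ℕ)
    (hE : E.support ⊆ ({(1, 0), (0, 1), (3, 0), (5, 0)} : Finset (ℕ × ℕ))) :
    coeff E (restr G) = coeff E G := by
  induction G using MvPolynomial.induction_on generalizing E with
  | C c => simp [restr]
  | add p q hp hq => simp [hp E hE, hq E hE]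
  | mul_X p m hp =>
    rw [map_mul, coeff_mul_X']
    by_cases hm : m ∈ ({(1, 0), (0, 1), (3, 0), (5, 0)} : Finset (ℕ × ℕ))
    · have : restr (X m) = X m := by rw [restr, aeval_X, if_pos hm]
      rw [this, coeff_mul_X', hp]
      exact subset_trans Finsupp.support_tsub hE
    · have : restr (X m) = 0 := by rw [restr, aeval_X, if_neg hm]
      rw [this, mul_zero, coeff_zero, if_neg (fun h => hm (hE h))]

/-- The test exponent. -/
noncomputable def expo (i b k l : ℕ) : ℕ × ℕ →₀ ℕ :=
  Finsupp.single (1, 0) i + Finsupp.single (0, 1) b + Finsupp.single (3, 0) k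
    + Finsupp.single (5, 0) l

theorem restr_invF (i j k l : ℕ) :
    restr (invF i j k l) = monomial (expo i (j + 3 * k + 6 * l) k l) 1 := by
  have hD : restr invD = X (3, 0) * X (0, 1) ^ 3 := by
    simp [restr, invD]
  have hE : restr invE = X (5, 0) * X (0, 1) ^ 6 := by
    simp [restr, invE]
    ring
  have h10 : restr (X (1, 0)) = X (1, 0) := by simp [restr]
  have h01 : restr (X (0, 1)) = X (0, 1) := by simp [restr]
  simp only [invF, map_mul, map_pow, hD, hE, h10, h01]
  have : (monomial (expo i (j + 3 * k + 6 * l) k l) (1 : ℂ) : CoefRing) =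
      X (1, 0) ^ i * X (0, 1) ^ (j + 3 * k + 6 * l) * X (3, 0) ^ k * X (5, 0) ^ l := by
    simp only [X_pow_eq_monomial, monomial_mul, expo, mul_one]
  rw [this]
  ring

theorem expo_support (i b k l : ℕ) :
    (expo i b k l).support ⊆ ({(1, 0), (0, 1), (3, 0), (5, 0)} : Finset (ℕ × ℕ)) := by
  intro v hv
  by_contra h
  simp only [Finset.mem_insert, Finset.mem_singleton, not_or] at h
  obtain ⟨h1, h2, h3, h4⟩ := h
  rw [Finsupp.mem_support_iff] at hv
  apply hv
  simp [expo, Ne.symm h1, Ne.symm h2, Ne.symm h3, Ne.symm h4]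

theorem expo_inj {i b k l i' b' k' l' : ℕ} (h : expo i b k l = expo i' b' k' l') :
    i = i' ∧ b = b' ∧ k = k' ∧ l = l' := by
  have h1 := DFunLike.congr_fun h (1, 0)
  have h2 := DFunLike.congr_fun h (0, 1)
  have h3 := DFunLike.congr_fun h (3, 0)
  have h4 := DFunLike.congr_fun h (5, 0)
  simp [expo] at h1 h2 h3 h4
  exact ⟨h1, h2, h3, h4⟩

theorem coeff_invF (i j k l i' b' k' l' : ℕ) :
    coeff (expo i' b' k' l') (invF i j k l) =
      if expo i (j + 3 * k + 6 * l) k l = expo i' b' k' l' then 1 else 0 := by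
  rw [← coeff_restr _ _ (expo_support _ _ _ _), restr_invF, coeff_monomial]

theorem exists_tuple (n : ℕ) (E : ℕ × ℕ →₀ ℕ) (h : E.degree = n) :
    ∃ e : Fin n → ℕ × ℕ, ∑ i, Finsupp.single (e i) 1 = E := by
  induction n generalizing E with
  | zero =>
    refine ⟨Fin.elim0, ?_⟩
    rw [Finsupp.degree_eq_zero_iff] at h
    simp [h]
  | succ n ih =>
    have hE : E ≠ 0 := by
      rintro rfl
      simp at h
    obtain ⟨v, hv⟩ := Finsupp.ne_iff.1 hE
    have h1 : Finsupp.single v 1 + (E - Finsupp.single v 1) = E := by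
      apply add_tsub_cancel_of_le
      rw [Finsupp.single_le_iff]
      simp at hv
      omega
    have h2 : (E - Finsupp.single v 1).degree = n := by
      have := congrArg Finsupp.degree h1
      rw [map_add, Finsupp.degree_single] at this
      omega
    obtain ⟨e, he⟩ := ih _ h2
    refine ⟨Fin.cons v e, ?_⟩
    rw [Fin.sum_univ_succ]
    simpa [he] using h1

/-! ### Monomials in the polynomial ring -/

/-- The ring `R`. -/
abbrev DRing (n : ℕ) := MvPolynomial (Fin n ⊕ Fin n) ℂ

/-- `x_j^a y_j^b`. -/
noncomputable def zpw {n : ℕ} (j : Fin n) (a : ℕ × ℕ) : DRing n :=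
  X (Sum.inl j) ^ a.1 * X (Sum.inr j) ^ a.2

theorem zpw_add {n : ℕ} (j : Fin n) (a b : ℕ × ℕ) : zpw j (a + b) = zpw j a * zpw j b := by
  simp only [zpw, Prod.fst_add, Prod.snd_add, pow_add]
  ring

/-- The monomial with exponents `e`. -/
noncomputable def mono {n : ℕ} (e : Fin n → ℕ × ℕ) : DRing n := ∏ i, zpw i (e i)

/-- The exponent tuple of an exponent vector. -/
def tup {n : ℕ} (d : Fin n ⊕ Fin n →₀ ℕ) : Fin n → ℕ × ℕ := fun i => (d (Sum.inl i), d (Sum.inr i))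

theorem monomial_eq_mono {n : ℕ} (d : Fin n ⊕ Fin n →₀ ℕ) (c : ℂ) :
    monomial d c = c • mono (tup d) := by
  rw [MvPolynomial.monomial_eq, MvPolynomial.smul_eq_C_mul, Finsupp.prod_fintype _ _ (by simp),
    Fintype.prod_sum_type]
  simp only [mono, tup, zpw, Finset.prod_mul_distrib]

theorem exists_tup {n : ℕ} (e : Fin n → ℕ × ℕ) : ∃ d, tup d = e := by
  refine ⟨Finsupp.equivFunOnFinite.symm (Sum.elim (fun i => (e i).1) (fun i => (e i).2)), ?_⟩
  funext i
  simp [tup]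

theorem zpw_mul_mono {n : ℕ} (j : Fin n) (a : ℕ × ℕ) (e : Fin n → ℕ × ℕ) :
    zpw j a * mono e = mono (Function.update e j (e j + a)) := by
  classical
  simp only [mono]
  rw [← Finset.mul_prod_erase Finset.univ _ (Finset.mem_univ j),
    ← Finset.mul_prod_erase Finset.univ (fun i => zpw i (Function.update e j (e j + a) i))
      (Finset.mem_univ j)]
  rw [Function.update_self, zpw_add, ← mul_assoc, mul_comm (zpw j a)]
  congr 1
  apply Finset.prod_congr rfl
  intro i hi
  rw [Function.update_of_ne (Finset.ne_of_mem_erase hi)]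

theorem bAct_zpw {n : ℕ} (ε : Fin n → ℤˣ) (σ : Equiv.Perm (Fin n)) (j : Fin n) (a : ℕ × ℕ) :
    bAct n ε σ (zpw j a) = (((ε j : ℤ) : ℂ) ^ (a.1 + a.2)) • zpw (σ j) a := by
  simp only [zpw, bAct, map_mul, map_pow, aeval_X, Sum.elim_inl, Sum.elim_inr,
    MvPolynomial.smul_eq_C_mul, mul_pow, pow_add]
  ring

theorem bAct_prod {n : ℕ} (ε : Fin n → ℤˣ) (σ τ : Equiv.Perm (Fin n)) (e : Fin n → ℕ × ℕ) :
    bAct n ε τ (∏ i, zpw (σ i) (e i)) =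
      (∏ i, ((ε (σ i) : ℤ) : ℂ) ^ ((e i).1 + (e i).2)) • ∏ i, zpw ((σ.trans τ) i) (e i) := by
  rw [map_prod]
  simp only [bAct_zpw, Equiv.trans_apply]
  simp only [MvPolynomial.smul_eq_C_mul, map_prod, Finset.prod_mul_distrib]

/-! ### Invariants lie in the ideal of power sums -/

/-- Polarized power sum. -/
noncomputable def psumz (n : ℕ) (a : ℕ × ℕ) : DRing n := ∑ j, zpw j a

/-- Ideal of even polarized power sums. -/
noncomputable def psIdeal (n : ℕ) : Ideal (DRing n) :=
  Ideal.span {f | ∃ a, EvenPos a ∧ f = psumz n a}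

theorem embSum_mem (n k : ℕ) (e : Fin k → ℕ × ℕ) (he : ∀ i, Even ((e i).1 + (e i).2))
    (hne : ∃ i, e i ≠ 0) :
    ∑ f : Fin k ↪ Fin n, ∏ i, zpw (f i) (e i) ∈ psIdeal n := by
  classical
  induction k with
  | zero => obtain ⟨i, _⟩ := hne; exact i.elim0
  | succ k ih =>
    have key : ∑ f : Fin (k + 1) ↪ Fin n, ∏ i, zpw (f i) (e i) =
        psumz n (e 0) * (∑ f : Fin k ↪ Fin n, ∏ i, zpw (f i) (Fin.tail e i))
        - ∑ j, ∑ f : Fin k ↪ Fin n, ∏ i, zpw (f i)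
            (Function.update (Fin.tail e) j (Fin.tail e j + e 0) i) := by
      rw [← (Equiv.embeddingFinSucc k (Fin n)).symm.sum_comp, Fintype.sum_sigma,
        Finset.sum_comm, Finset.mul_sum, ← Finset.sum_sub_distrib]
      apply Finset.sum_congr rfl
      intro f _
      simp only [Equiv.coe_embeddingFinSucc_symm, Fin.prod_univ_succ, Fin.cons_zero, Fin.cons_succ]
      rw [← Finset.sum_mul]
      have h1 : ∑ x : {i // i ∉ Set.range f}, (zpw (x : Fin n) (e 0) : DRing n) =
          psumz n (e 0) - ∑ j, zpw (f j) (e 0) := by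
        rw [eq_sub_iff_add_eq, psumz,
          ← Fintype.sum_subtype_add_sum_subtype (fun i => i ∈ Set.range f)
            (fun i => (zpw i (e 0) : DRing n)), add_comm]
        congr 1
        convert Fintype.sum_equiv (Equiv.ofInjective f f.injective)
          (fun j => (zpw (f j) (e 0) : DRing n)) (fun x => (zpw (x : Fin n) (e 0) : DRing n))
          (fun x => rfl)
      rw [h1, sub_mul]
      congr 1
      rw [Finset.sum_mul]
      apply Finset.sum_congr rfl
      intro j _
      rw [← Finset.mul_prod_erase Finset.univ _ (Finset.mem_univ j),
        ← Finset.mul_prod_erase Finset.univ (fun i => zpw (f i)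
          (Function.update (Fin.tail e) j (Fin.tail e j + e 0) i)) (Finset.mem_univ j)]
      rw [Function.update_self, zpw_add, ← mul_assoc]
      congr 1
      · rw [mul_comm]; rfl
      apply Finset.prod_congr rfl
      intro i hi
      rw [Function.update_of_ne (Finset.ne_of_mem_erase hi)]
      rfl
    rw [key]
    apply Ideal.sub_mem
    · by_cases h0 : e 0 = 0
      · apply Ideal.mul_mem_left
        apply ih
        · intro i; exact he _
        · obtain ⟨i, hi⟩ := hne
          induction i using Fin.cases with
          | zero => exact absurd h0 hi
          | succ i => exact ⟨i, hi⟩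
      · apply Ideal.mul_mem_right
        exact Ideal.subset_span ⟨e 0, ⟨he 0, h0⟩, rfl⟩
    · apply Ideal.sum_mem
      intro j _
      apply ih
      · intro i
        by_cases hij : i = j
        · subst hij
          rw [Function.update_self]
          have := (he i.succ).add (he 0)
          change Even ((e i.succ).1 + (e 0).1 + ((e i.succ).2 + (e 0).2))
          rwa [add_add_add_comm]
        · rw [Function.update_of_ne hij]; exact he _
      · have hadd : ∀ u v : ℕ × ℕ, u + v = 0 → u = 0 ∧ v = 0 := by
          rintro ⟨u1, u2⟩ ⟨v1, v2⟩ h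
          simp only [Prod.mk_add_mk, Prod.mk_eq_zero] at *
          omega
        by_cases h0 : e 0 = 0
        · obtain ⟨i, hi⟩ := hne
          induction i using Fin.cases with
          | zero => exact absurd h0 hi
          | succ i =>
            refine ⟨i, ?_⟩
            by_cases hij : i = j
            · subst hij
              rw [Function.update_self]
              exact fun h => hi (hadd _ _ h).1
            · rw [Function.update_of_ne hij]; exact hi
        · refine ⟨j, ?_⟩
          rw [Function.update_self]
          exact fun h => h0 (hadd _ _ h).2

theorem permSum_mem (n : ℕ) (e : Fin n → ℕ × ℕ) (he : ∀ i, Even ((e i).1 + (e i).2))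
    (hne : ∃ i, e i ≠ 0) :
    ∑ σ : Equiv.Perm (Fin n), ∏ i, zpw (σ i) (e i) ∈ psIdeal n := by
  classical
  have := embSum_mem n n e he hne
  convert this using 1
  refine Fintype.sum_equiv (Equiv.embeddingEquivOfFinite (Fin n)).symm _ _ (fun σ => ?_)
  rfl

theorem signSum_eq_zero {n : ℕ} (e : Fin n → ℕ × ℕ) (i : Fin n) (hi : ¬ Even ((e i).1 + (e i).2)) :
    ∑ ε : Fin n → ℤˣ, ∏ i, ((ε i : ℤ) : ℂ) ^ ((e i).1 + (e i).2) = 0 := by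
  classical
  have := Finset.prod_univ_sum (fun _ : Fin n => (Finset.univ : Finset ℤˣ))
    (fun i u => ((u : ℤ) : ℂ) ^ ((e i).1 + (e i).2))
  rw [Fintype.piFinset_univ] at this
  rw [← this]
  apply Finset.prod_eq_zero (Finset.mem_univ i)
  rw [Nat.not_even_iff_odd] at hi
  have hu : (Finset.univ : Finset ℤˣ) = {1, -1} := rfl
  rw [hu, Finset.sum_pair (by decide)]
  simp [hi.neg_one_pow]

theorem groupSum_mem {n : ℕ} (e : Fin n → ℕ × ℕ) (hne : e ≠ 0) :
    ∑ ε : Fin n → ℤˣ, ∑ σ : Equiv.Perm (Fin n), bAct n ε σ (mono e) ∈ psIdeal n := by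
  have h : ∀ ε σ, bAct n ε σ (mono e) =
      (∏ i, ((ε i : ℤ) : ℂ) ^ ((e i).1 + (e i).2)) • ∏ i, zpw (σ i) (e i) :=
    fun ε σ => bAct_prod ε (Equiv.refl _) σ e
  simp only [h, ← Finset.smul_sum, ← Finset.sum_smul]
  by_cases he : ∀ i, Even ((e i).1 + (e i).2)
  · rw [MvPolynomial.smul_eq_C_mul]
    apply Ideal.mul_mem_left
    exact permSum_mem n e he (Function.ne_iff.1 hne)
  · push Not at he
    obtain ⟨i, hi⟩ := he
    rw [signSum_eq_zero e i (by simpa using hi), zero_smul]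
    exact Ideal.zero_mem _

theorem diagIdeal_le (n : ℕ) : diagIdeal n ≤ psIdeal n := by
  classical
  rw [diagIdeal, Ideal.span_le]
  rintro g ⟨hg, hg0⟩
  have h1 : ∑ ε : Fin n → ℤˣ, ∑ σ : Equiv.Perm (Fin n), bAct n ε σ g ∈ psIdeal n := by
    have : ∑ ε : Fin n → ℤˣ, ∑ σ : Equiv.Perm (Fin n), bAct n ε σ g =
        ∑ d ∈ g.support, coeff d g •
          ∑ ε : Fin n → ℤˣ, ∑ σ : Equiv.Perm (Fin n), bAct n ε σ (mono (tup d)) := by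
      conv_lhs => rw [g.as_sum]
      simp only [map_sum, monomial_eq_mono, map_smul, Finset.smul_sum]
      rw [Finset.sum_comm]
      conv_rhs => rw [Finset.sum_comm]
      rw [Finset.sum_comm]
      apply Finset.sum_congr rfl
      intro ε _
      rw [Finset.sum_comm]
    rw [this]
    apply Ideal.sum_mem
    intro d hd
    rw [MvPolynomial.smul_eq_C_mul]
    apply Ideal.mul_mem_left
    apply groupSum_mem
    intro h0
    have : d = 0 := by
      ext (i | i)
      · exact congrArg Prod.fst (congrFun h0 i)
      · exact congrArg Prod.snd (congrFun h0 i)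
    rw [mem_support_iff, this] at hd
    exact hd hg0
  simp only [hg, Finset.sum_const, nsmul_eq_mul] at h1
  rw [← mul_assoc, ← Nat.cast_mul] at h1
  have h3 : (Finset.univ : Finset (Fin n → ℤˣ)).card *
      (Finset.univ : Finset (Equiv.Perm (Fin n))).card ≠ 0 :=
    Nat.mul_ne_zero (Finset.card_ne_zero.2 Finset.univ_nonempty)
      (Finset.card_ne_zero.2 Finset.univ_nonempty)
  generalize (Finset.univ : Finset (Fin n → ℤˣ)).card *
      (Finset.univ : Finset (Equiv.Perm (Fin n))).card = N at h1 h3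
  have h2 := Ideal.mul_mem_left (psIdeal n) (C ((N : ℂ)⁻¹)) h1
  have h4 : (N : DRing n) = C (N : ℂ) := by simp
  rw [h4, ← mul_assoc, ← C_mul, inv_mul_cancel₀ (Nat.cast_ne_zero.2 h3), C_1, one_mul] at h2
  exact h2

/-! ### The functionals -/

/-- The linear functional on `R` attached to a polynomial function `G` of the coefficients. -/
noncomputable def phi (n : ℕ) (G : CoefRing) : DRing n →ₗ[ℂ] ℂ :=
  (basisMonomials (Fin n ⊕ Fin n) ℂ).constr ℂ
    (fun d => constantCoeff (iterD n (tup d) G))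

theorem phi_mono {n : ℕ} (G : CoefRing) (e : Fin n → ℕ × ℕ) :
    phi n G (mono e) = constantCoeff (iterD n e G) := by
  obtain ⟨d, rfl⟩ := exists_tup e
  have h := monomial_eq_mono d (1 : ℂ)
  rw [one_smul] at h
  rw [← h]
  have := (basisMonomials (Fin n ⊕ Fin n) ℂ).constr_basis ℂ
    (fun d => constantCoeff (iterD n (tup d) G)) d
  rwa [coe_basisMonomials] at this

theorem phi_mul_psumz {n : ℕ} (G : CoefRing) (a : ℕ × ℕ) (hG : shiftDer a G = 0) (r : DRing n) :
    phi n G (r * psumz n a) = 0 := by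
  induction r using MvPolynomial.induction_on' with
  | monomial d c =>
    have := monomial_eq_mono (n := n) d c
    have h0 := iterD_shiftDer n (tup d) a G
    rw [hG, iterD_zero_right] at h0
    have h1 := congrArg constantCoeff h0
    rw [map_add, constantCoeff_shiftDer, map_zero, zero_add, map_sum] at h1
    rw [this, smul_mul_assoc, map_smul, psumz, mul_comm, Finset.sum_mul, map_sum]
    simp only [zpw_mul_mono, phi_mono]
    rw [← h1, smul_zero]
  | add p q hp hq => rw [add_mul, map_add, hp, hq, add_zero]

theorem phi_diagIdeal {n : ℕ} (G : CoefRing) (hG : ∀ a, EvenPos a → shiftDer a G = 0)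
    (f : DRing n) (hf : f ∈ diagIdeal n) : phi n G f = 0 := by
  have := diagIdeal_le n hf
  clear hf
  rw [psIdeal] at this
  suffices h : ∀ r, phi n G (r * f) = 0 by simpa using h 1
  induction this using Submodule.span_induction with
  | mem x h =>
    obtain ⟨a, ha, rfl⟩ := h
    exact fun r => phi_mul_psumz G a (hG a ha) r
  | zero => simp
  | add x y _ _ hx hy => intro r; rw [mul_add, map_add, hx, hy, add_zero]
  | smul t x _ h => intro r; rw [smul_eq_mul, ← mul_assoc]; exact h _

/-! ### Test elements -/

/-- The symmetrized monomial. -/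
noncomputable def symMono {n : ℕ} (e : Fin n → ℕ × ℕ) : DRing n :=
  ∑ σ : Equiv.Perm (Fin n), ∏ i, zpw (σ i) (e i)

theorem prod_zpw_perm {n : ℕ} (σ : Equiv.Perm (Fin n)) (e : Fin n → ℕ × ℕ) :
    ∏ i, zpw (σ i) (e i) = mono (e ∘ σ.symm) := by
  rw [mono, ← Equiv.prod_comp σ (fun i => zpw i ((e ∘ σ.symm) i))]
  simp

theorem phi_symMono {n : ℕ} (e : Fin n → ℕ × ℕ) :
    ∃ c : ℂ, c ≠ 0 ∧ ∀ G, phi n G (symMono e) = c * coeff (∑ i, Finsupp.single (e i) 1) G := by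
  choose c hc h using fun σ : Equiv.Perm (Fin n) => coeff_iterD n (e ∘ σ.symm) 0
  refine ⟨((∑ σ, c σ : ℕ) : ℂ), ?_, fun G => ?_⟩
  · rw [Nat.cast_ne_zero]
    exact (Finset.sum_pos (fun σ _ => hc σ) Finset.univ_nonempty).ne'
  · rw [symMono, map_sum, Nat.cast_sum, Finset.sum_mul]
    apply Finset.sum_congr rfl
    intro σ _
    rw [prod_zpw_perm, phi_mono, constantCoeff_eq, h, zero_add]
    congr 2
    exact σ.symm.sum_comp (fun i => Finsupp.single (e i) 1)

theorem bAct_symMono {n : ℕ} (e : Fin n → ℕ × ℕ) (he : ∀ i, Odd ((e i).1 + (e i).2))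
    (ε : Fin n → ℤˣ) (τ : Equiv.Perm (Fin n)) :
    bAct n ε τ (symMono e) = (((∏ i, ε i : ℤˣ) : ℤ) : ℂ) • symMono e := by
  rw [symMono, map_sum, Finset.smul_sum]
  simp only [bAct_prod]
  refine Fintype.sum_equiv (Equiv.mulLeft τ) _ _ (fun σ => ?_)
  congr 1
  rw [← Equiv.prod_comp σ ε]
  push_cast
  apply Finset.prod_congr rfl
  intro i _
  rcases Int.units_eq_one_or (ε (σ i)) with h | h <;> simp [h, (he i).neg_one_pow]

theorem symMono_mem {n : ℕ} (e : Fin n → ℕ × ℕ) (he : ∀ i, Odd ((e i).1 + (e i).2)) :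
    Ideal.Quotient.mkₐ ℂ (diagIdeal n) (symMono e) ∈ chiIsotypic n := by
  rw [chiIsotypic]
  refine ⟨symMono e, ?_, rfl⟩
  simp only [SetLike.mem_coe, Submodule.mem_iInf]
  intro ε σ
  rw [Submodule.mem_comap, LinearMap.sub_apply, AlgHom.toLinearMap_apply, bAct_symMono e he]
  simp

/-! ### Finiteness -/

theorem pow_X_mem {n : ℕ} (i : Fin n) (t : Fin n → Fin n ⊕ Fin n)
    (ht : t = Sum.inl ∨ t = Sum.inr) : (X (t i) : DRing n) ^ (2 * n) ∈ diagIdeal n := by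
  classical
  let P : Polynomial (DRing n) := ∏ j, (Polynomial.X - Polynomial.C (X (t j) ^ 2))
  have hP : P.Monic := Polynomial.monic_prod_of_monic _ _ fun j _ => Polynomial.monic_X_sub_C _
  have hdeg : P.natDegree = n := by
    rw [Polynomial.natDegree_prod_of_monic _ _ fun j _ => Polynomial.monic_X_sub_C _]
    simp only [Polynomial.natDegree_X_sub_C]
    simp
  have hinv : ∀ ε σ, P.map (bAct n ε σ : DRing n →+* DRing n) = P := by
    intro ε σ
    have h : ∀ j, bAct n ε σ (X (t j) ^ 2) = X (t (σ j)) ^ 2 := by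
      intro j
      have h1 : (((ε j : ℤ) : ℂ)) ^ 2 = 1 := by
        rcases Int.units_eq_one_or (ε j) with h | h <;> simp [h]
      rcases ht with rfl | rfl
      · simp [bAct, smul_pow, h1]
      · simp [bAct, smul_pow, h1]
    simp only [P, Polynomial.map_prod, Polynomial.map_sub, Polynomial.map_X, Polynomial.map_C,
      RingHom.coe_coe, h]
    exact Equiv.prod_comp σ (fun j => Polynomial.X - Polynomial.C (X (t j) ^ 2 : DRing n))
  have hconst : P.map (constantCoeff : DRing n →+* ℂ) = Polynomial.X ^ n := by
    simp [P, Polynomial.map_prod]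
  have hc : ∀ k, k < n → P.coeff k ∈ diagIdeal n := by
    intro k hk
    apply Ideal.subset_span
    refine ⟨fun ε σ => ?_, ?_⟩
    · conv_rhs => rw [← hinv ε σ]
      rw [Polynomial.coeff_map]; rfl
    · rw [← Polynomial.coeff_map, hconst, Polynomial.coeff_X_pow, if_neg hk.ne]
  have hev : P.eval (X (t i) ^ 2) = 0 := by
    rw [Polynomial.eval_prod]
    exact Finset.prod_eq_zero (Finset.mem_univ i) (by simp)
  rw [Polynomial.eval_eq_sum_range, hdeg, Finset.sum_range_succ] at hev
  have h1 : P.coeff n = 1 := by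
    have := hP.coeff_natDegree
    rwa [hdeg] at this
  rw [h1, one_mul, ← pow_mul] at hev
  rw [eq_neg_of_add_eq_zero_right hev]
  apply neg_mem
  apply Ideal.sum_mem
  intro k hk
  exact Ideal.mul_mem_right _ _ (hc k (Finset.mem_range.1 hk))

theorem finite_quot (n : ℕ) : Module.Finite ℂ (DRing n ⧸ diagIdeal n) := by
  have hX : ∀ v, IsIntegral ℂ (Ideal.Quotient.mkₐ ℂ (diagIdeal n) (X v)) := by
    intro v
    have h0 : (Ideal.Quotient.mkₐ ℂ (diagIdeal n) (X v)) ^ (2 * n) = 0 := by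
      rw [← map_pow, Ideal.Quotient.mkₐ_eq_mk, Ideal.Quotient.eq_zero_iff_mem]
      rcases v with i | i
      · exact pow_X_mem i Sum.inl (Or.inl rfl)
      · exact pow_X_mem i Sum.inr (Or.inr rfl)
    exact ⟨Polynomial.X ^ (2 * n), Polynomial.monic_X_pow _, by
      rw [Polynomial.eval₂_X_pow]; exact h0⟩
  have : Algebra.IsIntegral ℂ (DRing n ⧸ diagIdeal n) := by
    refine ⟨fun z => ?_⟩
    obtain ⟨p, rfl⟩ := Ideal.Quotient.mkₐ_surjective ℂ (diagIdeal n) z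
    induction p using MvPolynomial.induction_on with
    | C c =>
      have : Ideal.Quotient.mkₐ ℂ (diagIdeal n) (C c) = algebraMap ℂ _ c := by
        rw [← MvPolynomial.algebraMap_eq]; exact AlgHom.commutes _ _
      rw [this]; exact isIntegral_algebraMap
    | add p q hp hq => rw [map_add]; exact hp.add hq
    | mul_X p v hp => rw [map_mul]; exact hp.mul (hX v)
  have : Algebra.FiniteType ℂ (DRing n ⧸ diagIdeal n) :=
    Algebra.FiniteType.of_surjective (Ideal.Quotient.mkₐ ℂ (diagIdeal n))
      (Ideal.Quotient.mkₐ_surjective ℂ (diagIdeal n))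
  exact Algebra.IsIntegral.finite

/-! ### The lower bound -/

theorem card_le_finrank (n : ℕ) (T : Finset (ℕ × ℕ × ℕ))
    (hT : ∀ s ∈ T, s.1 + 4 * s.2.1 + 7 * s.2.2 ≤ n) :
    T.card ≤ Module.finrank ℂ (chiIsotypic n) := by
  classical
  have := finite_quot n
  have hfin : Module.Finite ℂ (chiIsotypic n) := inferInstance
  let b : T → ℕ := fun s => n - s.1.1 - s.1.2.1 - s.1.2.2
  let E : T → (ℕ × ℕ →₀ ℕ) := fun s => expo s.1.1 (b s) s.1.2.1 s.1.2.2
  have hE : ∀ s, (E s).degree = n := by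
    intro s
    have := hT s.1 s.2
    simp only [E, expo, map_add, Finsupp.degree_single, b]
    omega
  choose e he using fun s => exists_tuple n (E s) (hE s)
  have hodd : ∀ s i, Odd ((e s i).1 + (e s i).2) := by
    intro s i
    have h1 : e s i ∈ (E s).support := by
      rw [← he s, Finsupp.mem_support_iff, Finsupp.finsetSum_apply]
      have := Finset.single_le_sum (f := fun j => (Finsupp.single (e s j) 1 : ℕ × ℕ →₀ ℕ) (e s i))
        (fun _ _ => Nat.zero_le _) (Finset.mem_univ i)
      simp only [Finsupp.single_eq_same] at this
      omega
    have h2 := expo_support _ _ _ _ h1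
    simp only [Finset.mem_insert, Finset.mem_singleton] at h2
    rcases h2 with h | h | h | h <;> rw [h] <;> decide
  let v : T → chiIsotypic n := fun s => ⟨_, symMono_mem (e s) (hodd s)⟩
  let F : T → CoefRing := fun s =>
    invF s.1.1 (n - s.1.1 - 4 * s.1.2.1 - 7 * s.1.2.2) s.1.2.1 s.1.2.2
  choose c hc0 hc using fun s => phi_symMono (e s)
  have hpair : ∀ s s', phi n (F s) (symMono (e s')) = if s = s' then c s' else 0 := by
    intro s s'
    rw [hc, he]
    simp only [F, E, coeff_invF]
    have h1 := hT s.1 s.2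
    have h3 : n - s.1.1 - 4 * s.1.2.1 - 7 * s.1.2.2 + 3 * s.1.2.1 + 6 * s.1.2.2 = b s := by
      simp only [b]; omega
    rw [h3]
    by_cases hss : s = s'
    · subst hss; simp
    · rw [if_neg hss, if_neg, mul_zero]
      intro h
      obtain ⟨h1, h2, h3, h4⟩ := expo_inj h
      exact hss (Subtype.ext (Prod.ext h1 (Prod.ext h3 h4)))
  have hli : LinearIndependent ℂ v := by
    rw [Fintype.linearIndependent_iff]
    intro g hg s
    have h1 : ∑ s', g s' • symMono (e s') ∈ diagIdeal n := by
      rw [← Ideal.Quotient.eq_zero_iff_mem, ← Ideal.Quotient.mkₐ_eq_mk ℂ, map_sum]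
      have := congrArg Subtype.val hg
      simpa [v] using this
    have h2 := phi_diagIdeal (F s) (fun a ha => shiftDer_invF a ha _ _ _ _) _ h1
    simp only [map_sum, map_smul, hpair, smul_eq_mul, mul_ite, mul_zero, Finset.sum_ite_eq,
      Finset.mem_univ, if_true] at h2
    exact (mul_eq_zero.1 h2).resolve_right (hc0 s)
  have := hli.fintype_card_le_finrank
  simpa using this

/-- A block of indices. -/
def blk (l r p : ℕ) : Finset (ℕ × ℕ × ℕ) :=
  (Finset.range p).biUnion fun j =>
    (Finset.range (4 * j + r)).image fun i => (i, p - 1 - j, l)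

theorem blk_card (l r p : ℕ) : (blk l r p).card = ∑ j ∈ Finset.range p, (4 * j + r) := by
  rw [blk, Finset.card_biUnion]
  · apply Finset.sum_congr rfl
    intro j _
    rw [Finset.card_image_of_injective _ (fun a b h => (Prod.mk.inj h).1), Finset.card_range]
  · intro j hj j' hj' hne
    replace hj : j < p := by simpa using hj
    replace hj' : j' < p := by simpa using hj'
    rw [Function.onFun, Finset.disjoint_left]
    intro s hs hs'
    simp only [Finset.mem_image] at hs hs'
    obtain ⟨i, _, rfl⟩ := hs
    obtain ⟨i', _, h⟩ := hs'
    simp only [Prod.mk.injEq] at h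
    omega

theorem sum_blk (r p : ℕ) : (∑ j ∈ Finset.range p, (4 * j + r)) + 2 * p = 2 * p * p + r * p := by
  induction p with
  | zero => simp
  | succ p ih => rw [Finset.sum_range_succ]; nlinarith

theorem card_bound (m : ℕ) :
    4 * m * m + 2 * m + 1 ≤ Module.finrank ℂ (chiIsotypic (4 * m + 2)) := by
  have h := card_le_finrank (4 * m + 2) (blk 0 3 (m + 1) ∪ blk 1 4 (m - 1)) (by
    intro s hs
    simp only [Finset.mem_union, blk, Finset.mem_biUnion, Finset.mem_image, Finset.mem_range] at hs
    rcases hs with ⟨j, hj, i, hi, rfl⟩ | ⟨j, hj, i, hi, rfl⟩ <;> simp only [] <;> omega)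
  rw [Finset.card_union_of_disjoint, blk_card, blk_card] at h
  · have h1 := sum_blk 3 (m + 1)
    have h2 := sum_blk 4 (m - 1)
    rcases m with _ | m
    · simp at *; omega
    · simp only [Nat.add_sub_cancel] at *
      nlinarith
  · rw [Finset.disjoint_left]
    intro s hs hs'
    simp only [blk, Finset.mem_biUnion, Finset.mem_image, Finset.mem_range] at hs hs'
    obtain ⟨j, hj, i, hi, rfl⟩ := hs
    obtain ⟨j', hj', i', hi', h⟩ := hs'
    simp at h

/-- If `n` is a positive integer congruent to 2 mod 4, then the χ′-isotypic component of
the diagonal coinvariant ring of `W(Bₙ)` satisfies `dim_ℂ (R_W)^{χ'} ≥ (n+1) + n(n-6)/4`. -/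
theorem dim_chi_isotypic_ge_of_mod_four_eq_two (n : ℕ) (hn : 0 < n) (h2 : n % 4 = 2) :
    ((n : ℤ) + 1) + (n : ℤ) * ((n : ℤ) - 6) / 4 ≤
      (Module.finrank ℂ (chiIsotypic n) : ℤ) := by
  obtain ⟨m, rfl⟩ : ∃ m, n = 4 * m + 2 := ⟨n / 4, by omega⟩
  have h := card_bound m
  have h' : ((4 * m * m + 2 * m + 1 : ℕ) : ℤ) ≤
      (Module.finrank ℂ (chiIsotypic (4 * m + 2)) : ℤ) := by exact_mod_cast h
  refine le_trans (le_of_eq ?_) h'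
  have h3 : ((4 * m + 2 : ℕ) : ℤ) * (((4 * m + 2 : ℕ) : ℤ) - 6) =
      4 * ((4 * m + 2) * (m - 1)) := by push_cast; ring
  rw [h3, Int.mul_ediv_cancel_left _ (by norm_num)]
  push_cast
  ring
end
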